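/- arXiv:math/0502350 — 3 statements merged into one kernel-verified Lean document; each statement's English description precedes it below -/
import Mathlib

section
/- For every prime number q with q > 3, there are no nonzero integers x, y with x^2 − y^q = 1. -/
/-!
An odd `x` can be replaced by `-x` if necessary, so assume `x ≡ 1 [ZMOD 4]`; even `x` are excluded
because then `x - 1` and `x + 1` would be `q`-th powers differing by `2`. Both of the remaining
steps use that, for coprime `a` and `b`, the factors `a - b` and `(a ^ q - b ^ q) / (a - b)` are
coprime away from `q`; hence if `a ^ q - b ^ q` is a square prime to `q`, then `a - b` is a square.

* Nagell: `q ∣ x`. Otherwise `y ^ q - (-1) ^ q = x ^ 2` forces `y + 1 = c ^ 2`, and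
  `(x, y ^ ((q - 1) / 2))` solves the Pell equation with `d = c ^ 2 - 1`. A solution with even
  second coordinate is an even power of the fundamental solution `(c, 1)`, so `c` divides a power of
  `y = c ^ 2 - 1`, which is absurd.
* Chein: `q ∣ x - 3`. Writing `2 * (x - 1) = (2 * a) ^ q` and `x + 1 = 2 * b ^ q` gives
  `(b ^ 2) ^ q - (2 * a) ^ q = (b ^ q - 2) ^ 2`, where `2 * (b ^ q - 2) = x - 3`. If `q ∤ x - 3`,
  then `b ^ 2 - 2 * a` is a square, which is impossible because `0 < |a| < |b|`.

The two divisibilities give `q ∣ 3`.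
-/

open Finset

theorem isCoprime_sub_geom_sum₂_iff {R : Type*} [CommRing R] {a b : R} (hab : IsCoprime a b)
    (n : ℕ) : IsCoprime (a - b) (∑ i ∈ range n, a ^ i * b ^ (n - 1 - i)) ↔
      IsCoprime (a - b) (n : R) := by
  obtain ⟨k, hk⟩ : a - b ∣ ∑ i ∈ range n, a ^ i * b ^ (n - 1 - i) - n * b ^ (n - 1) := by
    rw [← geom_sum₂_self b n, ← sum_sub_distrib]
    refine dvd_sum fun i _ => ?_
    rw [← sub_mul]
    exact (sub_dvd_pow_sub_pow a b i).mul_right _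
  have hb : IsCoprime (a - b) b := by
    simpa [sub_eq_add_neg] using hab.add_mul_right_left (-1)
  rw [sub_eq_iff_eq_add'.mp hk, IsCoprime.add_mul_left_right_iff, IsCoprime.mul_right_iff,
    and_iff_left hb.pow_right]

theorem isSquare_sub_of_pow_sub_pow_eq_sq {n : ℕ} (hn : Odd n) {a b z : ℤ}
    (hab : IsCoprime a b) (hnz : IsCoprime (n : ℤ) z) (h : a ^ n - b ^ n = z ^ 2) :
    IsSquare (a - b) := by
  have hfac : (a - b) * ∑ i ∈ range n, a ^ i * b ^ (n - 1 - i) = z ^ 2 := by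
    rw [mul_comm, geom_sum₂_mul, h]
  have hcop : IsCoprime (a - b) (∑ i ∈ range n, a ^ i * b ^ (n - 1 - i)) :=
    (isCoprime_sub_geom_sum₂_iff hab n).mpr
      (hnz.pow_right.of_isCoprime_of_dvd_right (Dvd.intro _ hfac)).symm
  have hnonneg : 0 ≤ a - b :=
    sub_nonneg.mpr (hn.strictMono_pow.le_iff_le.mp (sub_nonneg.mp (h ▸ sq_nonneg z)))
  obtain ⟨c, hc | hc⟩ := Int.sq_of_isCoprime hcop hfac
  · exact hc ▸ IsSquare.sq c
  · have hzero : a - b = 0 := le_antisymm (hc ▸ neg_nonpos.mpr (sq_nonneg c)) hnonneg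
    exact hzero ▸ IsSquare.zero

theorem two_mul_dvd_of_even_of_pell {a x y : ℤ} (ha : 1 < |a|)
    (h : x ^ 2 - (a ^ 2 - 1) * y ^ 2 = 1) (hy : Even y) : 2 * a ∣ y := by
  have ha' : 1 < a.natAbs := by rwa [Int.abs_eq_natAbs, Nat.one_lt_cast] at ha
  have hpell : x.natAbs * x.natAbs - (a.natAbs * a.natAbs - 1) * y.natAbs * y.natAbs = 1 := by
    have hone : 1 ≤ a.natAbs * a.natAbs := Nat.mul_pos (by omega) (by omega)
    suffices x.natAbs * x.natAbs = (a.natAbs * a.natAbs - 1) * y.natAbs * y.natAbs + 1 by omega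
    zify [hone]
    simp only [mul_assoc, abs_mul_abs_self]
    linarith
  obtain ⟨n, -, hn⟩ := Pell.eq_pell ha' hpell
  have hn_even : 2 ∣ n := by
    rw [← (Pell.yn_modEq_two ha' n).dvd_iff dvd_rfl, ← hn, ← even_iff_two_dvd]
    exact Int.natAbs_even.mpr hy
  have hyn_two : Pell.yn ha' 2 = 2 * a.natAbs := by
    simpa using Pell.yn_succ_succ ha' 0
  rw [← Int.natAbs_dvd_natAbs, Int.natAbs_mul, hn]
  exact hyn_two ▸ (Pell.y_dvd_iff ha' 2 n).mpr hn_even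

theorem pow_add_two_lt_pow {n : ℕ} (hn : 1 < n) {a b : ℤ} (ha : 0 < a) (hab : a < b) :
    a ^ n + 2 < b ^ n := by
  obtain ⟨m, rfl⟩ : ∃ m, n = m + 1 := ⟨n - 1, by omega⟩
  have hm : m ≠ 0 := by omega
  have hpow : a ^ m + 1 ≤ b ^ m := pow_lt_pow_left₀ hab ha.le hm
  have htwo : 2 ≤ b ^ m := (show 2 ≤ b by omega).trans (le_self_pow₀ (by omega) hm)
  calc a ^ (m + 1) + 2 < a * (a ^ m + 1) + 2 := by rw [pow_succ']; linarith
    _ ≤ a * b ^ m + 1 * b ^ m := by rw [one_mul]; gcongr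
    _ = (a + 1) * b ^ m := by ring
    _ ≤ b * b ^ m := by gcongr; omega
    _ = b ^ (m + 1) := (pow_succ' b m).symm

theorem not_isSquare_sq_add_of_abs_lt {b k : ℤ} (hk : k ≠ 0) (h : |k| < 2 * |b| - 1) :
    ¬ IsSquare (b ^ 2 + k) := by
  rintro ⟨c, hc⟩
  have hsq : |c| ^ 2 = |b| ^ 2 + k := by rw [sq_abs, sq_abs, hc, sq]
  obtain ⟨hlower, hupper⟩ := abs_lt.mp h
  have hgt : |b| - 1 < |c| := lt_of_pow_lt_pow_left₀ 2 (abs_nonneg c) (by linarith)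
  have hlt : |c| < |b| + 1 := lt_of_pow_lt_pow_left₀ 2 (by positivity) (by linarith)
  have heq : |c| = |b| := by omega
  exact hk (by simpa [heq] using hsq)

section

variable {n : ℕ} {x y : ℤ}

theorem odd_of_sq_sub_pow_eq_one (hn : Odd n) (hn1 : 1 < n) (hx : x ≠ 0)
    (h : x ^ 2 - y ^ n = 1) : Odd x := by
  wlog hpos : 0 < x generalizing x
  · simpa using this (x := -x) (neg_ne_zero.mpr hx) (by rwa [neg_sq]) (by omega)
  by_contra hx_odd
  have heven : Even x := Int.not_odd_iff_even.mp hx_odd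
  have hcop : IsCoprime (x - 1) (x + 1) := by
    obtain ⟨k, rfl⟩ := heven
    exact ⟨k, 1 - k, by ring⟩
  obtain ⟨⟨a, ha⟩, b, hb⟩ := Int.eq_pow_of_mul_eq_pow_odd hcop hn
    (show (x - 1) * (x + 1) = y ^ n by linarith)
  have ha_pos : 0 < a := hn.pow_pos_iff.mp (by grind)
  have hab : a < b := hn.strictMono_pow.lt_iff_lt.mp (show a ^ n < b ^ n by linarith)
  linarith [pow_add_two_lt_pow hn1 ha_pos hab]

theorem even_of_sq_sub_pow_eq_one (hx : Odd x) (h : x ^ 2 - y ^ n = 1) : Even y := by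
  have hpow : Even (y ^ n) := by
    rw [show y ^ n = x ^ 2 - 1 by linarith]
    exact hx.pow.sub_odd odd_one
  exact (Int.even_pow.mp hpow).1

theorem pos_of_sq_sub_pow_eq_one (hn : Odd n) (hx : x ≠ 0) (hy : y ≠ 0)
    (h : x ^ 2 - y ^ n = 1) : 0 < y := by
  have hx_sq : 0 < x ^ 2 := by positivity
  exact (hn.pow_nonneg_iff.mp (by omega)).lt_of_ne' hy

theorem not_isSquare_add_one_of_sq_sub_pow_eq_one (hn : Odd n) (hn1 : 1 < n) (hx : Odd x)
    (hy : 0 < y) (h : x ^ 2 - y ^ n = 1) : ¬ IsSquare (y + 1) := by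
  rintro ⟨c, hc⟩
  obtain ⟨m, rfl⟩ := hn
  have hyc : c ^ 2 - 1 = y := by linarith
  have hpell : x ^ 2 - (c ^ 2 - 1) * (y ^ m) ^ 2 = 1 := by
    rw [hyc, ← h]
    ring
  have hc_abs : 1 < |c| := (one_lt_sq_iff_one_lt_abs c).mp (by linarith)
  have heven : Even (y ^ m) := (even_of_sq_sub_pow_eq_one hx h).pow_of_ne_zero (by omega)
  have hdvd : c ∣ y ^ m := (Dvd.intro_left 2 rfl).trans
    (two_mul_dvd_of_even_of_pell hc_abs hpell heven)
  have hcop : IsCoprime c (y ^ m) := IsCoprime.pow_right ⟨c, -1, by linarith⟩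
  have hunit : |c| = 1 := Int.isUnit_iff_abs_eq.mp (hcop.isUnit_of_dvd' dvd_rfl hdvd)
  omega

theorem not_isCoprime_of_sq_sub_pow_eq_one (hn : Odd n) (hn1 : 1 < n) (hx : Odd x) (hy : y ≠ 0)
    (h : x ^ 2 - y ^ n = 1) : ¬ IsCoprime (n : ℤ) x := by
  intro hnx
  have hy_pos : 0 < y := pos_of_sq_sub_pow_eq_one hn (by rintro rfl; simp at hx) hy h
  refine not_isSquare_add_one_of_sq_sub_pow_eq_one hn hn1 hx hy_pos h ?_
  rw [← sub_neg_eq_add]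
  refine isSquare_sub_of_pow_sub_pow_eq_sq hn isCoprime_one_right.neg_right hnx ?_
  rw [hn.neg_one_pow]
  linarith

theorem exists_pow_of_sq_sub_pow_eq_one (hn : Odd n) (hx : x ≡ 1 [ZMOD 4])
    (h : x ^ 2 - y ^ n = 1) :
    ∃ a b : ℤ, Odd b ∧ 2 * (x - 1) = (2 * a) ^ n ∧ x + 1 = 2 * b ^ n := by
  obtain ⟨t, ht⟩ : (4 : ℤ) ∣ x - 1 := hx.symm.dvd
  obtain rfl : x = 4 * t + 1 := by linarith
  obtain ⟨w, rfl⟩ : (2 : ℤ) ∣ y :=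
    (even_of_sq_sub_pow_eq_one ⟨2 * t, by ring⟩ h).two_dvd
  have hprod : 2 ^ 3 * t * (2 * t + 1) = 2 ^ n * w ^ n := by
    rw [← mul_pow]
    linarith
  have hodd : Odd (2 * t + 1) := odd_two_mul_add_one t
  have htwo : IsCoprime 2 (2 * t + 1) := Int.isCoprime_two_left.mpr hodd
  obtain ⟨s, hs⟩ : (2 : ℤ) ^ n ∣ 2 ^ 3 * t := htwo.pow_left.dvd_of_dvd_mul_right ⟨_, hprod⟩
  have hsw : s * (2 * t + 1) = w ^ n := by
    refine mul_left_cancel₀ (pow_ne_zero n two_ne_zero) ?_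
    rw [← hprod, hs, mul_assoc]
  have ht_coprime : IsCoprime t (2 * t + 1) := ⟨-2, 1, by ring⟩
  have hcop : IsCoprime s (2 * t + 1) :=
    (htwo.pow_left.mul_left ht_coprime).of_isCoprime_of_dvd_left (Dvd.intro_left _ hs.symm)
  obtain ⟨⟨a, ha⟩, b, hb⟩ := Int.eq_pow_of_mul_eq_pow_odd hcop hn hsw
  refine ⟨a, b, ?_, ?_, by linarith⟩
  · exact (Int.odd_pow' hn.pos.ne').mp (hb ▸ hodd)
  · rw [mul_pow, ← ha, ← hs]
    ring

end

section

variable {n : ℕ} {a b : ℤ}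

theorem abs_lt_abs_of_two_mul_pow_eq (hn : 3 < n) (ha : a ≠ 0)
    (h : (2 * a) ^ n = 4 * (b ^ n - 1)) : |a| < |b| := by
  have ha_pow : 1 ≤ |a| ^ n := one_le_pow₀ (Int.one_le_abs ha)
  have hbound : 16 * |a| ^ n ≤ 4 * (|b| ^ n + 1) :=
    calc 16 * |a| ^ n = 2 ^ 4 * |a| ^ n := by norm_num
      _ ≤ 2 ^ n * |a| ^ n := by gcongr <;> omega
      _ = |4 * (b ^ n - 1)| := by rw [← h, abs_pow, abs_mul, mul_pow, abs_two]
      _ = 4 * |b ^ n - 1| := by rw [abs_mul, abs_of_pos four_pos]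
      _ ≤ 4 * (|b| ^ n + 1) := by gcongr; simpa [abs_pow] using abs_sub (b ^ n) 1
  exact lt_of_pow_lt_pow_left₀ n (abs_nonneg b) (by linarith)

theorem isSquare_sq_sub_two_mul_of_two_mul_pow_eq (hn : Odd n) (hb : Odd b)
    (hnb : IsCoprime (n : ℤ) (b ^ n - 2)) (h : (2 * a) ^ n = 4 * (b ^ n - 1)) :
    IsSquare (b ^ 2 - 2 * a) := by
  have hcop : IsCoprime (b ^ n) ((2 * a) ^ n) := by
    rw [h, show (4 : ℤ) = 2 ^ 2 by norm_num]
    exact (Int.isCoprime_two_right.mpr hb.pow).pow_right.mul_right ⟨1, -1, by ring⟩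
  refine isSquare_sub_of_pow_sub_pow_eq_sq hn
    ((IsCoprime.pow_iff hn.pos hn.pos).mp hcop).pow_left hnb ?_
  rw [h]
  ring

end

theorem not_isCoprime_sub_three_of_sq_sub_pow_eq_one {n : ℕ} {x y : ℤ} (hn : Odd n) (hn3 : 3 < n)
    (hx : x ≡ 1 [ZMOD 4]) (hx1 : x ≠ 1) (h : x ^ 2 - y ^ n = 1) :
    ¬ IsCoprime (n : ℤ) (x - 3) := by
  intro hnx
  obtain ⟨a, b, hb, hxa, hxb⟩ := exists_pow_of_sq_sub_pow_eq_one hn hx h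
  have hab : (2 * a) ^ n = 4 * (b ^ n - 1) := by linarith
  have ha : a ≠ 0 := by
    rintro rfl
    rw [mul_zero, zero_pow hn.pos.ne'] at hxa
    omega
  have hnb : IsCoprime (n : ℤ) (b ^ n - 2) :=
    hnx.of_isCoprime_of_dvd_right ⟨2, by linarith⟩
  have hsq : IsSquare (b ^ 2 + -(2 * a)) := by
    simpa only [sub_eq_add_neg] using isSquare_sq_sub_two_mul_of_two_mul_pow_eq hn hb hnb hab
  refine not_isSquare_sq_add_of_abs_lt (by simpa using ha) ?_ hsq
  have hlt := abs_lt_abs_of_two_mul_pow_eq hn3 ha hab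
  rw [abs_neg, abs_mul, abs_two]
  omega

/-- Ko-Chao's theorem: for every prime `q > 3`, there are no nonzero integers `x, y` with
`x ^ 2 - y ^ q = 1`. -/
theorem ko_chao (q : ℕ) (hq : q.Prime) (hq3 : 3 < q) :
    ¬ ∃ x y : ℤ, x ≠ 0 ∧ y ≠ 0 ∧ x ^ 2 - y ^ q = 1 := by
  rintro ⟨x, y, hx, hy, h⟩
  have hodd : Odd q := hq.odd_of_ne_two (by omega)
  have hx_odd : Odd x := odd_of_sq_sub_pow_eq_one hodd hq.one_lt hx h
  wlog hx4 : x ≡ 1 [ZMOD 4] generalizing x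
  · refine this (-x) (neg_ne_zero.mpr hx) (by rwa [neg_sq]) hx_odd.neg ?_
    grind [Int.ModEq]
  have hx1 : x ≠ 1 := by
    rintro rfl
    exact hy (eq_zero_of_pow_eq_zero (by linarith))
  have hdvd_of_not_isCoprime {z : ℤ} (hz : ¬ IsCoprime (q : ℤ) z) : (q : ℤ) ∣ z :=
    not_not.mp ((Nat.prime_iff_prime_int.mp hq).coprime_iff_not_dvd.not.mp hz)
  have hqx : (q : ℤ) ∣ x :=
    hdvd_of_not_isCoprime (not_isCoprime_of_sq_sub_pow_eq_one hodd hq.one_lt hx_odd hy h)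
  have hqx3 : (q : ℤ) ∣ x - 3 :=
    hdvd_of_not_isCoprime (not_isCoprime_sub_three_of_sq_sub_pow_eq_one hodd hq3 hx4 hx1 h)
  have hq_dvd : (q : ℤ) ∣ 3 := by simpa using dvd_sub hqx hqx3
  exact absurd (Int.le_of_dvd three_pos hq_dvd) (by omega)
end

section
/- Let p and q be odd primes, let ε = 1 or ε = −1, and let x, y be positive integers with x^p − y^q = ε. Then q divides x and p divides y. -/
/-!
The substitution `(x, y, p, q) ↦ (-y, -x, q, p)` preserves `x ^ p - y ^ q = 1`, so it suffices to
prove `p ∣ y`. Suppose `p ∤ y`. Then `x - 1` and `(x ^ p - 1) / (x - 1)` are coprime, hence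
`x - 1 = a ^ q` and `y ^ q = (a ^ q + 1) ^ p - 1`.

If `p < q`, this lies strictly between the `q`-th powers of `a ^ p` and `a ^ p + 1`.

If `q < p`, put `A = a ^ q`. Up to a negligible error, `y / a ^ p` is `(1 + A⁻¹) ^ (p / q)`.
Truncate the binomial series of the latter after the term of degree `m = ⌊p / q⌋ + 1` and multiply
by `A ^ m` and by the exact denominator `q ^ (m + v_q(m!))` of its last coefficient: the difference
becomes an integer prime to `q`, yet it has absolute value below `1` as soon as
`8 * q ^ (p - 2) ≤ |A|`. That bound holds because the first case, applied to the symmetric equation,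
gives `q ∣ x`, and Cassels' relations then force `|x|` to be at least `q ^ p - q`.
-/

open Finset

section GeomSum

variable {R : Type*} [CommRing R]

theorem sub_one_dvd_geom_sum_sub (x : R) (n : ℕ) : x - 1 ∣ ∑ i ∈ range n, x ^ i - n := by
  have hsum : ∑ i ∈ range n, x ^ i - n = ∑ i ∈ range n, (x ^ i - 1) := by simp
  rw [hsum]
  exact dvd_sum fun i _ ↦ sub_one_dvd_pow_sub_one x i

theorem natCast_mul_sub_one_dvd_geom_sum_sub {n : ℕ} (hn : Odd n) {x : R}
    (hx : (n : R) ∣ x - 1) : (n : R) * (x - 1) ∣ ∑ i ∈ range n, x ^ i - n := by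
  have hsum : ∑ i ∈ range n, x ^ i - n = (∑ i ∈ range n, ∑ j ∈ range i, x ^ j) * (x - 1) := by
    rw [sum_mul]
    simp only [geom_sum_mul, sum_sub_distrib, sum_const, card_range, nsmul_one]
  have hid : (n : R) ∣ ∑ i ∈ range n, (i : R) := by
    obtain ⟨k, hk⟩ := hn
    have hgauss : ∑ i ∈ range n, i = n * k := by
      rw [sum_range_id, hk, Nat.add_sub_cancel, mul_left_comm, Nat.mul_div_cancel_left _ two_pos]
    exact ⟨k, by rw [← Nat.cast_sum, hgauss, Nat.cast_mul]⟩
  rw [hsum]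
  refine mul_dvd_mul_right ?_ _
  rw [← dvd_sub_left hid, ← sum_sub_distrib]
  exact dvd_sum fun i _ ↦ hx.trans (sub_one_dvd_geom_sum_sub x i)

theorem abs_lt_of_geom_sum_eq {n : ℕ} (hn : 1 < n) {x : ℤ} (h : ∑ i ∈ range n, x ^ i = n) :
    |x| < n := by
  obtain ⟨k, rfl⟩ : ∃ k, n = k + 1 := ⟨n - 1, by omega⟩
  rw [geom_sum_succ] at h
  have hdvd : x ∣ k := ⟨_, by push_cast at h; linarith⟩
  have := Int.le_of_dvd (by omega) ((abs_dvd _ _).2 hdvd)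
  omega

end GeomSum

theorem pow_add_one_lt_add_one_pow {R : Type*} [Semiring R] [PartialOrder R]
    [IsStrictOrderedRing R] {b : R} (hb : 0 < b) {n : ℕ} (hn : 1 < n) :
    b ^ n + 1 < (b + 1) ^ n := by
  obtain ⟨k, rfl⟩ : ∃ k, n = k + 1 := ⟨n - 1, by omega⟩
  calc b ^ (k + 1) + 1 < b ^ (k + 1) + 1 + (b ^ k + b) := lt_add_of_pos_right _ (by positivity)
    _ = (b ^ k + 1 ^ k) * (b + 1) := by
      rw [one_pow, add_mul, mul_add, mul_add, pow_succ]; simp only [mul_one, one_mul]; abel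
    _ ≤ (b + 1) ^ k * (b + 1) := by
      gcongr
      exact pow_add_pow_le hb.le zero_le_one (by omega)
    _ = (b + 1) ^ (k + 1) := (pow_succ _ _).symm

theorem pow_add_one_pow_le_pow_add_one_pow {R : Type*} [CommSemiring R] [PartialOrder R]
    [IsOrderedRing R] {a : R} (ha : 1 ≤ a) {p q : ℕ} (hpq : p ≤ q) :
    (a ^ q + 1) ^ p ≤ (a ^ p + 1) ^ q := by
  have ha₀ : 0 ≤ a := zero_le_one.trans ha
  induction q, hpq using Nat.le_induction with
  | base => exact le_rfl
  | succ q _ ih =>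
    calc (a ^ (q + 1) + 1) ^ p ≤ ((a ^ q + 1) * a) ^ p := by
          rw [pow_succ, add_mul, one_mul]
          gcongr
          exact add_nonneg (mul_nonneg (pow_nonneg ha₀ q) ha₀) zero_le_one
      _ = (a ^ q + 1) ^ p * a ^ p := mul_pow _ _ _
      _ ≤ (a ^ p + 1) ^ q * (a ^ p + 1) := by
          gcongr
          · exact pow_nonneg (add_nonneg (pow_nonneg ha₀ p) zero_le_one) q
          · exact le_add_of_nonneg_right zero_le_one
      _ = (a ^ p + 1) ^ (q + 1) := (pow_succ _ _).symm

theorem pow_sub_one_pow_le_pow_sub_one_pow {R : Type*} [CommRing R] [PartialOrder R]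
    [IsOrderedRing R] {a : R} (ha : 1 ≤ a) {p q : ℕ} (hpq : p ≤ q) :
    (a ^ p - 1) ^ q ≤ (a ^ q - 1) ^ p := by
  have ha₀ : 0 ≤ a := zero_le_one.trans ha
  have hpow (n : ℕ) : 0 ≤ a ^ n - 1 := sub_nonneg.2 (one_le_pow₀ ha)
  induction q, hpq using Nat.le_induction with
  | base => exact le_rfl
  | succ q _ ih =>
    calc (a ^ p - 1) ^ (q + 1) = (a ^ p - 1) ^ q * (a ^ p - 1) := pow_succ _ _
      _ ≤ (a ^ q - 1) ^ p * a ^ p :=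
          mul_le_mul ih (sub_le_self _ zero_le_one) (hpow p) (pow_nonneg (hpow q) p)
      _ = ((a ^ q - 1) * a) ^ p := (mul_pow _ _ _).symm
      _ ≤ (a ^ (q + 1) - 1) ^ p := by
          refine pow_le_pow_left₀ (mul_nonneg (hpow q) ha₀) ?_ p
          rw [sub_mul, one_mul, ← pow_succ]
          gcongr

section OddExponents

variable {p q : ℕ}

theorem pow_add_one_lt_add_one_pow_of_odd (hp : Odd p) (hp₁ : 1 < p) {b : ℤ} (hb₀ : b ≠ 0)
    (hb₁ : b ≠ -1) : b ^ p + 1 < (b + 1) ^ p := by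
  rcases lt_or_gt_of_ne hb₀ with hneg | hpos
  · have h := pow_add_one_lt_add_one_pow (b := -b - 1) (by omega) hp₁
    rw [sub_add_cancel, hp.neg_pow, ← neg_add', hp.neg_pow] at h
    linarith
  · exact pow_add_one_lt_add_one_pow hpos hp₁

theorem pow_add_one_pow_le_pow_add_one_pow_of_odd (hp : Odd p) (hq : Odd q) (hpq : p ≤ q) (a : ℤ) :
    (a ^ q + 1) ^ p ≤ (a ^ p + 1) ^ q := by
  rcases lt_trichotomy a 0 with hneg | rfl | hpos
  · have h := pow_sub_one_pow_le_pow_sub_one_pow (show 1 ≤ -a by omega) hpq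
    rw [hp.neg_pow, hq.neg_pow, ← neg_add', ← neg_add', hp.neg_pow, hq.neg_pow] at h
    exact neg_le_neg_iff.1 h
  · simp [hp.pos.ne', hq.pos.ne']
  · exact pow_add_one_pow_le_pow_add_one_pow (show 1 ≤ a by omega) hpq

theorem pow_add_one_pow_sub_pow_ne_one (hp : Odd p) (hp₁ : 1 < p) (hq : Odd q) (hpq : p ≤ q)
    {a : ℤ} (ha₀ : a ≠ 0) (ha₁ : a ≠ -1) (y : ℤ) : (a ^ q + 1) ^ p - y ^ q ≠ 1 := by
  intro h
  have hlower : a ^ p < y := by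
    rw [← hq.pow_lt_pow, pow_right_comm]
    have ha₁' : a ^ q ≠ -1 := by rwa [← hq.neg_one_pow, Ne, hq.pow_inj]
    linarith [pow_add_one_lt_add_one_pow_of_odd hp hp₁ (pow_ne_zero q ha₀) ha₁']
  have hupper : y < a ^ p + 1 := by
    rw [← hq.pow_lt_pow]
    linarith [pow_add_one_pow_le_pow_add_one_pow_of_odd hp hq hpq a]
  omega

end OddExponents

section Factorization

variable {p q : ℕ} {x y : ℤ}

theorem exists_sub_one_eq_pow (hp : p.Prime) (hq : Odd q) (h : x ^ p - y ^ q = 1)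
    (hpy : ¬ (p : ℤ) ∣ y) : ∃ a, x - 1 = a ^ q := by
  have hfac : (x - 1) * ∑ i ∈ range p, x ^ i = y ^ q := by rw [mul_geom_sum]; linarith
  have hpZ : Prime (p : ℤ) := Nat.prime_iff_prime_int.1 hp
  have hpx : ¬ (p : ℤ) ∣ x - 1 := fun hd ↦ hpy (hpZ.dvd_of_dvd_pow (hfac ▸ hd.mul_right _))
  obtain ⟨k, hk⟩ := sub_one_dvd_geom_sum_sub x p
  have hcop : IsCoprime (x - 1) (∑ i ∈ range p, x ^ i) := by
    rw [eq_add_of_sub_eq' hk]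
    exact (hpZ.coprime_iff_not_dvd.2 hpx).symm.add_mul_left_right k
  exact Int.eq_pow_of_mul_eq_pow_odd_left hcop hq hfac

theorem dvd_right_of_pow_sub_pow_eq_one_of_le (hp : p.Prime) (hpodd : Odd p) (hq : Odd q)
    (hpq : p ≤ q) (hx : x ≠ 0) (hy : y ≠ 0) (h : x ^ p - y ^ q = 1) : (p : ℤ) ∣ y := by
  by_contra hpy
  obtain ⟨a, ha⟩ := exists_sub_one_eq_pow hp hq h hpy
  rw [eq_add_of_sub_eq ha] at h hx
  refine pow_add_one_pow_sub_pow_ne_one hpodd hp.one_lt hq hpq ?_ ?_ y h <;> rintro rfl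
  · simp [hq.pos.ne', hy] at h
  · simp [hq.neg_one_pow] at hx

theorem exists_cassels_relations (hp : p.Prime) (hpodd : Odd p) (hq : Odd q) (h : x ^ p - y ^ q = 1)
    (hpy : (p : ℤ) ∣ y) : ∃ b u : ℤ, x - 1 = p ^ (q - 1) * b ^ q ∧
      ∑ i ∈ range p, x ^ i = p * u ^ q ∧ y = p * b * u := by
  have hp₀ : (p : ℤ) ≠ 0 := by exact_mod_cast hp.ne_zero
  have hpx : (p : ℤ) ∣ x - 1 := by
    have hxp : x ^ p ≡ x [ZMOD p] := Int.ModEq.pow_prime_eq_self hp x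
    have hsub : x - 1 = x - x ^ p + y ^ q := by linarith
    exact hsub ▸ dvd_add hxp.dvd (dvd_pow hpy hq.pos.ne')
  obtain ⟨k, hk⟩ := natCast_mul_sub_one_dvd_geom_sum_sub hpodd hpx
  obtain ⟨y', rfl⟩ := hpy
  set T := 1 + (x - 1) * k
  have hsum : ∑ i ∈ range p, x ^ i = p * T := by rw [eq_add_of_sub_eq' hk]; ring
  have hcop : IsCoprime (x - 1) T := ⟨-k, 1, by ring⟩
  have hfac : (x - 1) * T = p ^ (q - 1) * y' ^ q :=
    mul_left_cancel₀ hp₀ <| calc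
      p * ((x - 1) * T) = (x - 1) * ∑ i ∈ range p, x ^ i := by rw [hsum]; ring
      _ = (p * y') ^ q := by rw [mul_geom_sum]; linarith
      _ = p * (p ^ (q - 1) * y' ^ q) := by rw [mul_pow, ← mul_assoc, mul_pow_sub_one hq.pos.ne']
  obtain ⟨c, hc⟩ : (p : ℤ) ^ (q - 1) ∣ x - 1 :=
    (hcop.of_isCoprime_of_dvd_left hpx).pow_left.dvd_of_dvd_mul_right ⟨_, hfac⟩
  have hcT : c * T = y' ^ q := by
    rw [hc, mul_assoc] at hfac
    exact mul_left_cancel₀ (pow_ne_zero _ hp₀) hfac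
  obtain ⟨⟨b, rfl⟩, ⟨u, hu⟩⟩ :=
    Int.eq_pow_of_mul_eq_pow_odd (hcop.of_isCoprime_of_dvd_left ⟨_, by rw [hc, mul_comm]⟩) hq hcT
  refine ⟨b, u, hc, hu ▸ hsum, ?_⟩
  rw [hu, ← mul_pow, hq.pow_inj] at hcT
  rw [← hcT, mul_assoc]

end Factorization

theorem dvd_sub_one_of_dvd_pow_sub_one {N n : ℕ} (hn : n ≠ 0) (hNn : n.Coprime (Nat.totient N))
    {u : ℤ} (h : (N : ℤ) ∣ u ^ n - 1) : (N : ℤ) ∣ u - 1 := by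
  rw [← CharP.intCast_eq_zero_iff (ZMod N)] at h ⊢
  push_cast at h ⊢
  rw [sub_eq_zero] at h ⊢
  obtain ⟨v, hv⟩ : IsUnit (u : ZMod N) := .of_pow_eq_one h hn
  rw [← hv, ← Units.val_pow_eq_pow_val, Units.val_eq_one] at h
  rw [← hv, Units.val_eq_one, ← pow_one v, ← hNn.gcd_eq_one]
  exact pow_gcd_eq_one.2 ⟨h, ZMod.pow_totient v⟩

theorem le_abs_add_one_of_dvd_sub_one {d x : ℤ} (hx : x ≠ 1) (h : d ∣ x - 1) : d ≤ |x| + 1 :=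
  calc d ≤ |x - 1| := Int.le_of_dvd (abs_pos.2 (sub_ne_zero.2 hx)) ((dvd_abs _ _).2 h)
    _ ≤ |x| + 1 := by simpa using abs_sub x 1

section LowerBound

variable {p q : ℕ} {x y : ℤ}

theorem pow_dvd_sub_one_of_geom_sum_eq (hp : p.Prime) (hq : q.Prime) (hpodd : Odd p)
    (hpq : p < q) {u : ℤ} {k : ℕ} (hx : (p : ℤ) ^ k ∣ x - 1)
    (hsum : ∑ i ∈ range p, x ^ i = p * u ^ q) : (p : ℤ) ^ k ∣ u - 1 := by
  rcases k.eq_zero_or_pos with rfl | hk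
  · simp
  have hp₀ : (p : ℤ) ≠ 0 := by exact_mod_cast hp.ne_zero
  have hxu : x - 1 ∣ u ^ q - 1 := by
    refine (mul_dvd_mul_iff_left hp₀).1 ?_
    have hpu : p * (u ^ q - 1) = ∑ i ∈ range p, x ^ i - p := by rw [hsum]; ring
    rw [hpu]
    exact natCast_mul_sub_one_dvd_geom_sum_sub hpodd ((dvd_pow_self _ hk.ne').trans hx)
  have hcop : q.Coprime (Nat.totient (p ^ k)) := by
    rw [Nat.totient_prime_pow hp hk]
    refine .mul_right (.pow_right _ ((Nat.coprime_primes hq hp).2 hpq.ne')) ?_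
    exact Nat.coprime_of_lt_prime (Nat.sub_ne_zero_of_lt hp.one_lt) (by omega) hq
  exact_mod_cast dvd_sub_one_of_dvd_pow_sub_one hq.ne_zero hcop (by exact_mod_cast hx.trans hxu)

theorem pow_sub_one_le_abs_of_geom_sum_eq (hp : p.Prime) (hq : q.Prime) (hpodd : Odd p)
    (hpq : p < q) {u : ℤ} (hx₁ : x ≠ 1) (hx : (p : ℤ) ^ (q - 1) ∣ x - 1)
    (hsum : ∑ i ∈ range p, x ^ i = p * u ^ q) : (p : ℤ) ^ (q - 1) - 1 ≤ |u| := by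
  have hu₁ : u ≠ 1 := by
    rintro rfl
    have hupper : |x| < p := abs_lt_of_geom_sum_eq hp.one_lt (by rw [hsum, one_pow, mul_one])
    have hlower : (p : ℤ) ^ (q - 1) ≤ |x| + 1 := le_abs_add_one_of_dvd_sub_one hx₁ hx
    have hp₁ : (2 : ℤ) ≤ p := by exact_mod_cast hp.two_le
    have hsq : (p : ℤ) ^ 2 ≤ p ^ (q - 1) :=
      pow_le_pow_right₀ (by omega) (by have := hp.two_le; omega)
    nlinarith
  have hu := pow_dvd_sub_one_of_geom_sum_eq hp hq hpodd hpq hx hsum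
  linarith [le_abs_add_one_of_dvd_sub_one hu₁ hu]

theorem pow_sub_self_le_abs (hp : p.Prime) (hq : q.Prime) (hpodd : Odd p) (hqodd : Odd q)
    (hpq : p < q) (hy : y ≠ 0) (h : x ^ p - y ^ q = 1) (hpy : (p : ℤ) ∣ y) :
    (p : ℤ) ^ q - p ≤ |y| := by
  obtain ⟨b, u, hx, hsum, rfl⟩ := exists_cassels_relations hp hpodd hqodd h hpy
  have hb : b ≠ 0 := by rintro rfl; simp at hy
  have hx₁ : x ≠ 1 := by
    rw [← sub_ne_zero, hx]
    exact mul_ne_zero (pow_ne_zero _ (by exact_mod_cast hp.ne_zero)) (pow_ne_zero _ hb)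
  calc (p : ℤ) ^ q - p = p * 1 * (p ^ (q - 1) - 1) := by
        rw [mul_one, mul_sub, mul_one, mul_pow_sub_one hq.ne_zero]
    _ ≤ p * |b| * |u| := by
        gcongr
        · exact sub_nonneg.2 (one_le_pow₀ (by exact_mod_cast hp.one_le))
        · exact Int.one_le_abs hb
        · exact pow_sub_one_le_abs_of_geom_sum_eq hp hq hpodd hpq hx₁ ⟨_, hx⟩ hsum
    _ = |p * b * u| := by rw [abs_mul, abs_mul, Nat.abs_cast]

end LowerBound

section BinomialCoefficient

variable {R : Type*} [CommRing R] [BinomialRing R]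

theorem succ_mul_ringChoose_succ (r : R) (j : ℕ) :
    (j + 1 : R) * Ring.choose r (j + 1) = Ring.choose r j * (r - j) := by
  simpa using Ring.choose_smul_choose r j.le_succ

theorem succ_mul_ringChoose_succ' (r : R) (j : ℕ) :
    (j + 1 : R) * Ring.choose r (j + 1) = r * Ring.choose (r - 1) j := by
  simpa using Ring.choose_smul_choose r (Nat.succ_pos j)

theorem factorial_mul_ringChoose (r : R) (j : ℕ) :
    (j.factorial : R) * Ring.choose r j = ∏ i ∈ range j, (r - i) := by
  induction j with
  | zero => simp
  | succ j ih =>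
    rw [prod_range_succ, ← ih, mul_assoc, ← succ_mul_ringChoose_succ, Nat.factorial_succ]
    push_cast
    ring

theorem abs_ringChoose_le_one {K : Type*} [Field K] [LinearOrder K] [IsStrictOrderedRing K]
    [BinomialRing K] {α : K} {j : ℕ} (h₁ : -1 ≤ α) (h₂ : α ≤ j) :
    |Ring.choose α j| ≤ 1 := by
  induction j generalizing α with
  | zero => simp
  | succ j ih =>
    push_cast at h₂
    have hj : (0 : K) < j + 1 := by positivity
    refine le_of_mul_le_mul_left ?_ hj
    nth_rw 1 [← abs_of_pos hj]
    rw [← abs_mul]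
    rcases le_total 0 α with hα | hα
    · rw [succ_mul_ringChoose_succ', abs_mul, abs_of_nonneg hα]
      exact mul_le_mul h₂ (ih (by linarith) (by linarith)) (abs_nonneg _) hj.le
    · rw [succ_mul_ringChoose_succ, abs_mul, mul_comm]
      have hαj : |α - j| ≤ j + 1 := abs_le.2 ⟨by linarith, by linarith⟩
      exact mul_le_mul hαj (ih h₁ (by linarith [j.cast_nonneg (α := K)])) (abs_nonneg _) hj.le

theorem abs_one_add_rpow_sub_sum_le {α t : ℝ} {n : ℕ} (h₁ : -1 ≤ α) (h₂ : α ≤ n) (ht : |t| < 1) :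
    |(1 + t) ^ α - ∑ j ∈ range n, Ring.choose α j * t ^ j| ≤ |t| ^ n / (1 - |t|) := by
  have hseries : HasSum (fun j ↦ Ring.choose α j * t ^ j) ((1 + t) ^ α) := by
    have htball : t ∈ Metric.eball (0 : ℝ) 1 := by
      rwa [Metric.mem_eball, edist_zero_right, ← ofReal_norm, ENNReal.ofReal_lt_one,
        Real.norm_eq_abs]
    simpa [binomialSeries, mul_comm] using
      (Real.one_add_rpow_hasFPowerSeriesOnBall_zero (a := α)).hasSum htball
  have htail := (hasSum_nat_add_iff' n).2 hseries
  have hgeom := (hasSum_geometric_of_lt_one (abs_nonneg t) ht).mul_left (|t| ^ n)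
  refine htail.norm_le_of_bounded hgeom fun j ↦ ?_
  have hαj : α ≤ (j + n : ℕ) := h₂.trans (by exact_mod_cast Nat.le_add_left n j)
  calc ‖Ring.choose α (j + n) * t ^ (j + n)‖ = |Ring.choose α (j + n)| * |t| ^ (j + n) := by
        rw [Real.norm_eq_abs, abs_mul, abs_pow]
    _ ≤ 1 * |t| ^ (j + n) := by gcongr; exact abs_ringChoose_le_one h₁ hαj
    _ = |t| ^ n * |t| ^ j := by rw [one_mul, pow_add, mul_comm]

end BinomialCoefficient

section PowSubPow

variable {R : Type*} [CommRing R] [LinearOrder R] [IsStrictOrderedRing R] {u v : R}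

theorem abs_sub_mul_pow_le_abs_pow_sub_pow (hu : 0 ≤ u) (hv : 0 ≤ v) (n : ℕ) :
    |u - v| * v ^ n ≤ |u ^ (n + 1) - v ^ (n + 1)| := by
  have hterm (i : ℕ) : 0 ≤ u ^ i * v ^ (n + 1 - 1 - i) := by positivity
  have hle : v ^ n ≤ ∑ i ∈ range (n + 1), u ^ i * v ^ (n + 1 - 1 - i) := by
    simpa using single_le_sum (fun i _ ↦ hterm i) (mem_range.2 n.succ_pos)
  rw [← geom_sum₂_mul, abs_mul, mul_comm, abs_of_nonneg (sum_nonneg fun i _ ↦ hterm i)]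
  gcongr

theorem mul_abs_sub_le_abs_pow_sub_pow (hu : 0 ≤ u) (hv : 0 ≤ v) {c : R} (hc : c ≤ 1) {n : ℕ}
    (hn : n ≠ 0) (hcv : c ≤ v ^ n) : c * |u - v| ≤ |u ^ n - v ^ n| := by
  obtain ⟨k, rfl⟩ := Nat.exists_eq_succ_of_ne_zero hn
  have hck : c ≤ v ^ k := by
    rcases le_total 1 v with h | h
    · exact hc.trans (one_le_pow₀ h)
    · exact hcv.trans (pow_le_pow_of_le_one hv h k.le_succ)
  calc c * |u - v| ≤ v ^ k * |u - v| := by gcongr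
    _ ≤ |u ^ (k + 1) - v ^ (k + 1)| := by
      rw [mul_comm]
      exact abs_sub_mul_pow_le_abs_pow_sub_pow hu hv k

end PowSubPow

theorem abs_sub_sum_ringChoose_le {p q n : ℕ} {t u : ℝ} (hq : Odd q) (hn : n ≠ 0) (hnp : n ≤ p)
    (hpn : (p / q : ℝ) ≤ n) (ht : p * |t| ≤ 1 / 2) (hu : u ^ q = (1 + t) ^ p - t ^ p) :
    |u - ∑ j ∈ range n, Ring.choose (p / q : ℝ) j * t ^ j| ≤ 4 * |t| ^ n := by
  have hp : (1 : ℝ) ≤ p := by exact_mod_cast (Nat.one_le_iff_ne_zero.2 hn).trans hnp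
  have ht₂ : |t| ≤ 1 / 2 := by nlinarith [abs_nonneg t]
  have htneg : -|t| ≤ t := neg_abs_le t
  have ht₁ : 0 ≤ 1 + t := by linarith
  have htp : |t| ^ p ≤ |t| ^ n := pow_le_pow_of_le_one (abs_nonneg t) (by linarith) hnp
  set v : ℝ := (1 + t) ^ (p / q : ℝ) with hv
  have hv₀ : 0 ≤ v := Real.rpow_nonneg ht₁ _
  have hvq : v ^ q = (1 + t) ^ p := by
    rw [hv, ← Real.rpow_mul_natCast ht₁, div_mul_cancel₀ _ (by exact_mod_cast hq.pos.ne'),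
      Real.rpow_natCast]
  have hu₀ : 0 ≤ u := by
    rw [← hq.pow_nonneg_iff, hu, sub_nonneg]
    calc t ^ p ≤ |t| ^ p := by rw [← abs_pow]; exact le_abs_self _
      _ ≤ (1 + t) ^ p := by gcongr; linarith
  have hbernoulli : 1 / 2 ≤ v ^ q := by
    rw [hvq]
    nlinarith [one_add_mul_le_pow (show -2 ≤ t by linarith) p]
  have hroot : |u - v| ≤ 2 * |t| ^ n := by
    have h := mul_abs_sub_le_abs_pow_sub_pow hu₀ hv₀ (by norm_num) hq.pos.ne' hbernoulli
    rw [hu, hvq, sub_sub_cancel_left, abs_neg, abs_pow] at h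
    linarith
  have htail : |t| ^ n / (1 - |t|) ≤ 2 * |t| ^ n := by
    rw [div_le_iff₀ (by linarith)]
    nlinarith [pow_nonneg (abs_nonneg t) n]
  have hpq : (-1 : ℝ) ≤ p / q := neg_one_lt_zero.le.trans (by positivity)
  have htaylor := abs_one_add_rpow_sub_sum_le hpq hpn (t := t) (by linarith)
  linarith [abs_sub_le u v (∑ j ∈ range n, Ring.choose (p / q : ℝ) j * t ^ j)]

section Integrality

theorem dvd_prod_sub_mul {q N : ℤ} {j : ℕ} (hqN : IsCoprime q N) (hN : N ∣ j.factorial) (a : ℤ) :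
    N ∣ ∏ i ∈ range j, (a - i * q) := by
  obtain ⟨s, t, hst⟩ := hqN
  have hmod : ∏ i ∈ range j, (q * (s * a - i)) ≡ ∏ i ∈ range j, (a - i * q) [ZMOD N] :=
    Int.ModEq.prod fun i _ ↦ Int.modEq_iff_dvd.2 ⟨t * a, by linear_combination (-a) * hst⟩
  rw [← hmod.dvd_iff, prod_mul_distrib, ← factorial_mul_ringChoose]
  exact (hN.mul_right _).mul_left _

variable {K : Type*} [Field K] {q : ℕ} {a : ℤ}

theorem exists_pow_mul_ringChoose_div_eq_intCast [CharZero K] (hq : q.Prime) (hqa : ¬ (q : ℤ) ∣ a)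
    (j : ℕ) : ∃ c : ℤ, ¬ (q : ℤ) ∣ c ∧
      (q : K) ^ (j + padicValNat q j.factorial) * Ring.choose (a / q : K) j = c := by
  have : Fact q.Prime := ⟨hq⟩
  have hqZ : Prime (q : ℤ) := Nat.prime_iff_prime_int.1 hq
  obtain ⟨N, hN⟩ := pow_padicValNat_dvd (p := q) (n := j.factorial)
  have hN₀ : (N : K) ≠ 0 := by
    intro h
    simp [Nat.cast_eq_zero.1 h, j.factorial_ne_zero] at hN
  have hqN : IsCoprime (q : ℤ) N := by
    refine Nat.isCoprime_iff_coprime.2 ((hq.coprime_iff_not_dvd).2 fun ⟨M, hM⟩ ↦ ?_)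
    refine pow_succ_padicValNat_not_dvd (p := q) j.factorial_ne_zero ⟨M, ?_⟩
    rw [pow_succ, mul_assoc, ← hM, ← hN]
  obtain ⟨c, hc⟩ := dvd_prod_sub_mul hqN (Int.natCast_dvd_natCast.2 ⟨_, hN.trans (mul_comm _ _)⟩) a
  refine ⟨c, fun hqc ↦ ?_, mul_left_cancel₀ hN₀ ?_⟩
  · obtain ⟨i, -, hi⟩ := (hqZ.dvd_finsetProd_iff _).1 (hc ▸ hqc.mul_left _)
    exact hqa ((dvd_sub_left (dvd_mul_left _ _)).1 hi)
  · have hq₀ : (q : K) ≠ 0 := by exact_mod_cast hq.ne_zero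
    calc (N : K) * (q ^ (j + padicValNat q j.factorial) * Ring.choose (a / q : K) j)
        = q ^ j * ((q ^ padicValNat q j.factorial * N : ℕ) * Ring.choose (a / q : K) j) := by
          push_cast
          ring
      _ = ∏ i ∈ range j, (q * (a / q - i) : K) := by
          rw [← hN, factorial_mul_ringChoose, prod_mul_distrib, prod_const, card_range]
      _ = ∏ i ∈ range j, (a - i * q : K) := by
          simp only [mul_sub, mul_div_cancel₀ _ hq₀, mul_comm]
      _ = N * c := by exact_mod_cast hc

theorem exists_pow_mul_sum_ringChoose_div_eq_intCast [CharZero K] (hq : q.Prime)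
    (hqa : ¬ (q : ℤ) ∣ a) (A : ℤ) (m : ℕ) : ∃ Z : ℤ, ¬ (q : ℤ) ∣ Z ∧
      (q : K) ^ (m + padicValNat q m.factorial) *
        ∑ j ∈ range (m + 1), Ring.choose (a / q : K) j * A ^ (m - j) = Z := by
  have : Fact q.Prime := ⟨hq⟩
  choose c hqc hc using exists_pow_mul_ringChoose_div_eq_intCast (K := K) hq hqa
  set v : ℕ → ℕ := fun j ↦ padicValNat q j.factorial
  have hv {j : ℕ} (hj : j ≤ m) : v j ≤ v m :=
    (padicValNat_dvd_iff_le m.factorial_ne_zero).1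
      (pow_padicValNat_dvd.trans (Nat.factorial_dvd_factorial hj))
  refine ⟨∑ j ∈ range (m + 1), q ^ (m - j + (v m - v j)) * c j * A ^ (m - j), ?_, ?_⟩
  · -- Every term but the last keeps a factor `q`, as `j + v j` is strictly increasing.
    have hdvd : (q : ℤ) ∣ ∑ j ∈ range m, q ^ (m - j + (v m - v j)) * c j * A ^ (m - j) := by
      refine dvd_sum fun j hj ↦ ((dvd_pow_self _ ?_).mul_right _).mul_right _
      have := mem_range.1 hj
      omega
    simpa [sum_range_succ, dvd_add_right hdvd] using hqc m
  · push_cast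
    rw [mul_sum]
    refine sum_congr rfl fun j hj ↦ ?_
    have hjm : j ≤ m := mem_range_succ_iff.1 hj
    have hexp : m + v m = m - j + (v m - v j) + (j + v j) := by have := hv hjm; omega
    change (q : K) ^ (m + v m) * _ = _
    rw [← hc j, hexp, pow_add _ _ (j + v j)]
    ring

theorem one_le_abs_pow_mul_sub_sum_ringChoose_div [LinearOrder K] [IsStrictOrderedRing K]
    (hq : q.Prime) (hqa : ¬ (q : ℤ) ∣ a) (A w : ℤ) {m : ℕ} (hm : m ≠ 0) :
    1 ≤ |(q : K) ^ (m + padicValNat q m.factorial) *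
      (w - ∑ j ∈ range (m + 1), Ring.choose (a / q : K) j * A ^ (m - j))| := by
  obtain ⟨Z, hqZ, hZ⟩ := exists_pow_mul_sum_ringChoose_div_eq_intCast (K := K) hq hqa A m
  rw [mul_sub, hZ]
  have hne : (q : ℤ) ^ (m + padicValNat q m.factorial) * w - Z ≠ 0 := fun h ↦
    hqZ (sub_eq_zero.1 h ▸ (dvd_pow_self _ (by omega)).mul_right _)
  exact_mod_cast Int.one_le_abs hne

end Integrality

theorem div_add_one_add_padicValNat_factorial_le {p q : ℕ} (hq : q.Prime) (hq₃ : 3 ≤ q)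
    (hp : 5 ≤ p) : p / q + 1 + padicValNat q (p / q + 1).factorial ≤ p - 2 := by
  have : Fact q.Prime := ⟨hq⟩
  have hdiv : p / q ≤ p / 3 := Nat.div_le_div_left hq₃ three_pos
  have hlegendre := sub_one_mul_padicValNat_factorial_lt_of_ne_zero q (p / q).succ_ne_zero
  have hval := Nat.mul_le_mul_right (padicValNat q (p / q + 1).factorial) (Nat.le_sub_one_of_lt hq₃)
  rw [Nat.succ_eq_add_one] at hlegendre
  omega

section Approximation

theorem sum_mul_pow_sub_eq_pow_mul_sum_mul_inv_pow {K : Type*} [Field K] {A : K} (hA : A ≠ 0)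
    (c : ℕ → K) (m : ℕ) :
    ∑ j ∈ range (m + 1), c j * A ^ (m - j) = A ^ m * ∑ j ∈ range (m + 1), c j * A⁻¹ ^ j := by
  rw [mul_sum]
  refine sum_congr rfl fun j hj ↦ ?_
  rw [pow_sub₀ _ hA (mem_range_succ_iff.1 hj), inv_pow, mul_left_comm]

variable {p q : ℕ}

theorem abs_pow_mul_sub_sum_ringChoose_div_le {a y : ℝ} {m : ℕ} (hq : Odd q) (hmp : m < p)
    (hpm : p ≤ q * m) (ha : 2 * p ≤ |a ^ q|) (h : (a ^ q + 1) ^ p - y ^ q = 1) :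
    |a ^ (q * m - p) * y - ∑ j ∈ range (m + 1), Ring.choose (p / q : ℝ) j * (a ^ q) ^ (m - j)| ≤
      4 / |a ^ q| := by
  have hp₀ : (0 : ℝ) < p := by exact_mod_cast m.zero_le.trans_lt hmp
  have hA₀ : 0 < |a ^ q| := by linarith
  have hA : a ^ q ≠ 0 := abs_pos.1 hA₀
  have ha₀ : a ≠ 0 := ne_zero_pow hq.pos.ne' hA
  have hq₀ : (0 : ℝ) < q := by exact_mod_cast hq.pos
  have hu : (y / a ^ p) ^ q = (1 + (a ^ q)⁻¹) ^ p - (a ^ q)⁻¹ ^ p := by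
    have hyq : y ^ q = (a ^ q + 1) ^ p - 1 := by linarith
    rw [div_pow, pow_right_comm, hyq, inv_eq_one_div, one_add_div hA, div_pow, div_pow, one_pow,
      sub_div]
  have hpq : (p / q : ℝ) ≤ (m + 1 : ℕ) := by
    rw [div_le_iff₀ hq₀]
    exact_mod_cast hpm.trans (by rw [mul_comm]; gcongr; omega)
  have ht : p * |(a ^ q)⁻¹| ≤ 1 / 2 := by
    rw [abs_inv, ← div_eq_mul_inv, div_le_iff₀ hA₀]
    linarith
  have hest := abs_sub_sum_ringChoose_le hq m.succ_ne_zero hmp hpq ht hu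
  have hscale : a ^ (q * m - p) * y = (a ^ q) ^ m * (y / a ^ p) := by
    rw [← pow_mul, pow_sub₀ a ha₀ hpm, mul_assoc, inv_mul_eq_div]
  calc _ = |a ^ q| ^ m *
        |y / a ^ p - ∑ j ∈ range (m + 1), Ring.choose (p / q : ℝ) j * (a ^ q)⁻¹ ^ j| := by
        rw [hscale, sum_mul_pow_sub_eq_pow_mul_sum_mul_inv_pow hA, ← mul_sub, abs_mul, abs_pow]
    _ ≤ |a ^ q| ^ m * (4 * |(a ^ q)⁻¹| ^ (m + 1)) := by gcongr
    _ = 4 / |a ^ q| := by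
        rw [abs_inv, inv_pow, pow_succ]
        field_simp

theorem pow_add_one_pow_sub_pow_ne_one_of_le_abs (hp : 5 ≤ p) (hq : q.Prime) (hqodd : Odd q)
    (hqp : ¬ q ∣ p) {a : ℤ} (ha : 8 * (q : ℤ) ^ (p - 2) ≤ |a ^ q|) (y : ℤ) :
    (a ^ q + 1) ^ p - y ^ q ≠ 1 := by
  intro h
  have hq₃ : 3 ≤ q := hq.two_le.lt_of_ne' (hqodd.ne_two_of_dvd_nat dvd_rfl)
  set m := p / q + 1 with hm
  set D : ℝ := (q : ℝ) ^ (m + padicValNat q m.factorial) with hD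
  have haR : 8 * (q : ℝ) ^ (p - 2) ≤ |(a : ℝ) ^ q| := by exact_mod_cast ha
  have hDle : D ≤ (q : ℝ) ^ (p - 2) := pow_le_pow_right₀ (by exact_mod_cast hq.one_le)
    (div_add_one_add_padicValNat_factorial_le hq hq₃ hp)
  have hD₀ : 0 < D := pow_pos (by exact_mod_cast hq.pos) _
  have hple : (p : ℝ) ≤ 2 * q ^ (p - 2) := by
    have := Nat.lt_pow_self hq.one_lt (n := p - 2)
    exact_mod_cast show p ≤ 2 * q ^ (p - 2) by omega
  have hmp : m < p := by have : p / q ≤ p / 3 := Nat.div_le_div_left hq₃ three_pos; omega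
  have hlower := one_le_abs_pow_mul_sub_sum_ringChoose_div (K := ℝ) hq
    (mt Int.natCast_dvd_natCast.1 hqp) (a ^ q) (a ^ (q * m - p) * y) (p / q).succ_ne_zero
  have hupper := abs_pow_mul_sub_sum_ringChoose_div_le (a := a) (y := y) hqodd hmp
    (Nat.lt_mul_div_succ p hq.pos).le (by linarith) (by exact_mod_cast h)
  push_cast at hlower
  rw [Nat.succ_eq_add_one, ← hm, ← hD, abs_mul, abs_of_pos hD₀] at hlower
  have hlt : D * (4 / |(a : ℝ) ^ q|) < 1 := by
    rw [mul_div_assoc', div_lt_one (by linarith)]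
    linarith
  linarith [mul_le_mul_of_nonneg_left hupper hD₀.le]

end Approximation

section Conclusion

theorem neg_pow_sub_neg_pow {R : Type*} [CommRing R] {p q : ℕ} (hp : Odd p) (hq : Odd q)
    (x y : R) : (-y) ^ q - (-x) ^ p = x ^ p - y ^ q := by
  rw [hp.neg_pow, hq.neg_pow, neg_sub_neg]

variable {p q : ℕ} {x y : ℤ}

theorem dvd_right_of_pow_sub_pow_eq_one_of_lt (hp : p.Prime) (hq : q.Prime) (hpodd : Odd p)
    (hqodd : Odd q) (hqp : q < p) (hx : x ≠ 0) (hy : y ≠ 0) (h : x ^ p - y ^ q = 1) :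
    (p : ℤ) ∣ y := by
  by_contra hpy
  have hq₃ : 3 ≤ q := hq.two_le.lt_of_ne' (hqodd.ne_two_of_dvd_nat dvd_rfl)
  have hp₅ : 5 ≤ p := by obtain ⟨k, rfl⟩ := hpodd; obtain ⟨l, rfl⟩ := hqodd; omega
  obtain ⟨a, ha⟩ := exists_sub_one_eq_pow hp hqodd h hpy
  have hneg : (-y) ^ q - (-x) ^ p = 1 := (neg_pow_sub_neg_pow hpodd hqodd x y).trans h
  have hqx : (q : ℤ) ∣ -x := dvd_right_of_pow_sub_pow_eq_one_of_le hq hqodd hpodd hqp.le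
    (neg_ne_zero.2 hy) (neg_ne_zero.2 hx) hneg
  have hxlow : (q : ℤ) ^ p - q ≤ |x| := by
    simpa using pow_sub_self_le_abs hq hp hqodd hpodd hqp (neg_ne_zero.2 hx) hneg hqx
  have halow : 8 * (q : ℤ) ^ (p - 2) ≤ |a ^ q| := by
    have hqZ : (3 : ℤ) ≤ q := by exact_mod_cast hq₃
    have hpow : (q : ℤ) ^ (p - 2) * q ^ 2 = q ^ p := by rw [← pow_add]; congr 1; omega
    have hsq : (q : ℤ) ^ 2 ≤ q ^ (p - 2) := pow_le_pow_right₀ (by omega) (by omega)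
    have hnine : (q : ℤ) ^ (p - 2) * 9 ≤ q ^ (p - 2) * q ^ 2 := by gcongr; nlinarith [hqZ]
    have habs : |x| ≤ |a ^ q| + 1 := by simpa [← ha] using abs_add_le (x - 1) 1
    nlinarith
  rw [eq_add_of_sub_eq ha] at h
  exact pow_add_one_pow_sub_pow_ne_one_of_le_abs hp₅ hq hqodd
    (fun hd ↦ hqp.ne ((Nat.prime_dvd_prime_iff_eq hq hp).1 hd)) halow y h

theorem dvd_right_of_pow_sub_pow_eq_one (hp : p.Prime) (hq : q.Prime) (hpodd : Odd p)
    (hqodd : Odd q) (hx : x ≠ 0) (hy : y ≠ 0) (h : x ^ p - y ^ q = 1) : (p : ℤ) ∣ y :=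
  (le_or_gt p q).elim
    (fun hpq ↦ dvd_right_of_pow_sub_pow_eq_one_of_le hp hpodd hqodd hpq hx hy h)
    (fun hqp ↦ dvd_right_of_pow_sub_pow_eq_one_of_lt hp hq hpodd hqodd hqp hx hy h)

theorem dvd_and_dvd_of_pow_sub_pow_eq_one (hp : p.Prime) (hq : q.Prime) (hpodd : Odd p)
    (hqodd : Odd q) (hx : x ≠ 0) (hy : y ≠ 0) (h : x ^ p - y ^ q = 1) :
    (q : ℤ) ∣ x ∧ (p : ℤ) ∣ y := by
  refine ⟨?_, dvd_right_of_pow_sub_pow_eq_one hp hq hpodd hqodd hx hy h⟩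
  have hneg : (-y) ^ q - (-x) ^ p = 1 := (neg_pow_sub_neg_pow hpodd hqodd x y).trans h
  exact (dvd_neg (α := ℤ)).1 <| dvd_right_of_pow_sub_pow_eq_one hq hp hqodd hpodd
    (neg_ne_zero.2 hy) (neg_ne_zero.2 hx) hneg

end Conclusion

theorem cassels_general (p q : ℕ) (hp : p.Prime) (hq : q.Prime) (hpodd : Odd p) (hqodd : Odd q)
    (ε : ℤ) (hε : ε = 1 ∨ ε = -1) (x y : ℤ) (hx : x ≠ 0) (hy : y ≠ 0)
    (h : x ^ p - y ^ q = ε) :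
    (q : ℤ) ∣ x ∧ (p : ℤ) ∣ y := by
  rcases hε with rfl | rfl
  · exact dvd_and_dvd_of_pow_sub_pow_eq_one hp hq hpodd hqodd hx hy h
  · exact (dvd_and_dvd_of_pow_sub_pow_eq_one hq hp hqodd hpodd hy hx (by linarith)).symm

/-- Cassels' theorem (1953, 1961): if `p, q` are odd primes, `ε = ±1`, and `x, y` are
positive integers with `x ^ p - y ^ q = ε`, then `q ∣ x` and `p ∣ y`. -/
theorem cassels (p q : ℕ) (hp : p.Prime) (hq : q.Prime) (hpodd : Odd p) (hqodd : Odd q)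
    (ε : ℤ) (hε : ε = 1 ∨ ε = -1) (x y : ℤ) (hx : 0 < x) (hy : 0 < y)
    (h : x ^ p - y ^ q = ε) :
    (q : ℤ) ∣ x ∧ (p : ℤ) ∣ y :=
  cassels_general p q hp hq hpodd hqodd ε hε x y hx.ne' hy.ne' h
end

section
/- Let p and q be distinct odd primes with p ≤ 43 or q ≤ 43. Then there are no nonzero integers x, y with x^p − y^q = 1. -/
/-!
By the symmetry `(x, y, p, q) ↦ (-y, -x, q, p)` we may assume `p < q`, so `p ≤ 43`. Cassels'
relations give `x - 1 = p ^ (q - 1) * a ^ q` and `(x ^ p - 1) / (x - 1) = p * b ^ q`, as well as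
`q ∣ x`. In `ℚ(ζ)`, with `ζ` a primitive `p`-th root of unity, the integer `u = (x - ζ) / (1 - ζ)`
has norm `b ^ q` and generates the `q`-th power of an ideal, so by Stickelberger's theorem (the
factorization of Jacobi sums) `u ^ θ` is the `q`-th power of an element for a certain `θ` in the
group ring of the Galois group. For each `p ≤ 43` an explicit multiple of `θ` equals
`m * (1 - conj)`, where no prime factor of `m` exceeds `p`, except for the factor `211` (the
relative class number of `ℚ(ζ)`) when `p = 43`.

If `q ≠ 211`, then `u / conj u` is a `q`-th power, and hence `(x - ζ) / (x - conj ζ)` is equal to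
`(1 + 1 / g) ^ q` for an algebraic integer `g` with `|N(g)| = |b| ≤ |x| + 1`. All conjugates of `g`
have absolute value at least `1 / 2`, so their squares are at most `2 ^ (p - 3) * (|x| + 1)`. As `x`
is `p`-adically very close to `1`, some conjugate exceeds `q` in absolute value and is therefore of
the order of `q * |x|`, which is too large. If `q = 211`, the same `θ` gives the Wieferich condition
`q ^ 2 ∣ p ^ (q - 1) - 1`, which fails for every `p ≤ 43`.
-/

open NumberField
open scoped Pointwise

namespace Mihailescu

/-! ### Cassels' theorem -/

lemma two_lt_of_prime_of_odd {p : ℕ} (hp : p.Prime) (hpo : Odd p) : 2 < p :=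
  hp.two_le.lt_of_ne fun h ↦ absurd (h ▸ hpo) (by decide)

lemma sub_one_dvd_geom_sum_sub_natCast {R : Type*} [CommRing R] (n : ℕ) (x : R) :
    x - 1 ∣ ∑ i ∈ Finset.range n, x ^ i - n := by
  have : ∑ i ∈ Finset.range n, x ^ i - n = ∑ i ∈ Finset.range n, (x ^ i - 1) := by simp
  rw [this]
  exact Finset.dvd_sum fun i _ ↦ sub_one_dvd_pow_sub_one x i

lemma exists_sub_one_eq_pow_of_not_dvd {p q : ℕ} (hp : p.Prime) (hq : Odd q) {x y : ℤ}
    (h : x ^ p - y ^ q = 1) (hy : ¬ (p : ℤ) ∣ y) : ∃ a : ℤ, x - 1 = a ^ q := by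
  have hpZ : Prime (p : ℤ) := Nat.prime_iff_prime_int.1 hp
  have hmul : (x - 1) * ∑ i ∈ Finset.range p, x ^ i = y ^ q := by
    rw [mul_geom_sum]
    linarith
  refine Int.eq_pow_of_mul_eq_pow_odd_left ?_ hq hmul
  obtain ⟨c, hc⟩ := sub_one_dvd_geom_sum_sub_natCast p x
  have hpx : ¬ (p : ℤ) ∣ x - 1 := fun hd ↦ hy (hpZ.dvd_of_dvd_pow (hmul ▸ hd.mul_right _))
  rw [eq_add_of_sub_eq' hc, IsCoprime.add_mul_left_right_iff]
  exact ((Prime.coprime_iff_not_dvd hpZ).2 hpx).symm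

section PowerGaps

variable {p q : ℕ} {a : ℤ}

lemma pow_add_one_lt_add_one_pow (ha : 1 ≤ a) (hp : 2 ≤ p) : a ^ p + 1 < (a + 1) ^ p := by
  obtain ⟨k, rfl⟩ := Nat.exists_eq_add_of_le' hp
  have hle : a ^ (k + 1) ≤ (a + 1) ^ (k + 1) := pow_le_pow_left₀ (by omega) (by omega) _
  have hone : 1 < (a + 1) ^ (k + 1) := one_lt_pow₀ (by omega) k.succ_ne_zero
  rw [pow_succ, pow_succ (a + 1)]
  nlinarith

lemma pow_add_one_pow_le (ha : 1 ≤ a) (hpq : p ≤ q) : (a ^ q + 1) ^ p ≤ (a ^ p + 1) ^ q := by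
  obtain ⟨d, rfl⟩ := Nat.exists_eq_add_of_le hpq
  have had : 1 ≤ a ^ d := one_le_pow₀ ha
  calc (a ^ (p + d) + 1) ^ p
      ≤ ((a ^ p + 1) * a ^ d) ^ p := pow_le_pow_left₀ (by positivity) (by rw [pow_add]; linarith) p
    _ = (a ^ p + 1) ^ p * (a ^ p) ^ d := by rw [mul_pow, pow_right_comm]
    _ ≤ (a ^ p + 1) ^ p * (a ^ p + 1) ^ d := by gcongr; omega
    _ = (a ^ p + 1) ^ (p + d) := (pow_add _ _ _).symm

lemma pow_sub_one_pow_le (ha : 1 ≤ a) (hpq : p ≤ q) : (a ^ p - 1) ^ q ≤ (a ^ q - 1) ^ p := by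
  obtain ⟨d, rfl⟩ := Nat.exists_eq_add_of_le hpq
  have hap : 1 ≤ a ^ p := one_le_pow₀ ha
  have had : 1 ≤ a ^ d := one_le_pow₀ ha
  have hap' : 0 ≤ a ^ p - 1 := by omega
  calc (a ^ p - 1) ^ (p + d)
      = (a ^ p - 1) ^ p * (a ^ p - 1) ^ d := pow_add _ _ _
    _ ≤ (a ^ p - 1) ^ p * (a ^ p) ^ d := by gcongr; omega
    _ = ((a ^ p - 1) * a ^ d) ^ p := by rw [mul_pow, pow_right_comm]
    _ ≤ (a ^ (p + d) - 1) ^ p :=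
      pow_le_pow_left₀ (mul_nonneg hap' (by omega)) (by rw [pow_add]; linarith) p

/-- Cassels' squeeze: `y ^ q` would lie strictly between `(a ^ p) ^ q` and `(a ^ p + 1) ^ q`. -/
lemma pow_ne_pow_add_one_pow_sub_one (hp : 2 ≤ p) (hpq : p ≤ q) (hq : Odd q) (ha : 1 ≤ a) (y : ℤ) :
    y ^ q ≠ (a ^ q + 1) ^ p - 1 := by
  intro h
  have hlow : (a ^ p) ^ q < y ^ q := by
    have := pow_add_one_lt_add_one_pow (one_le_pow₀ (n := q) ha) hp
    rw [← pow_mul, mul_comm, pow_mul]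
    omega
  have hup : y ^ q < (a ^ p + 1) ^ q := by
    have := pow_add_one_pow_le ha hpq
    omega
  have := hq.strictMono_pow.lt_iff_lt.1 hlow
  have := hq.strictMono_pow.lt_iff_lt.1 hup
  omega

lemma pow_ne_pow_sub_one_pow_add_one (hp : 2 ≤ p) (hpq : p ≤ q) (hq : Odd q) (ha : 2 ≤ a) (y : ℤ) :
    y ^ q ≠ (a ^ q - 1) ^ p + 1 := by
  intro h
  have hup : y ^ q < (a ^ p) ^ q := by
    have haq : 1 < a ^ q := one_lt_pow₀ (by omega) (by omega)
    have := pow_add_one_lt_add_one_pow (a := a ^ q - 1) (by omega) hp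
    rw [sub_add_cancel] at this
    rw [h, ← pow_mul, mul_comm, pow_mul]
    exact this
  have hlow : (a ^ p - 1) ^ q < y ^ q := by
    have := pow_sub_one_pow_le (a := a) (by omega) hpq
    omega
  have := hq.strictMono_pow.lt_iff_lt.1 hlow
  have := hq.strictMono_pow.lt_iff_lt.1 hup
  omega

end PowerGaps

section Cassels

variable {p q : ℕ} {x y : ℤ}

lemma dvd_right_of_pow_sub_pow_eq_one (hp : p.Prime) (hpo : Odd p) (hq : Odd q) (hpq : p < q)
    (hx : x ≠ 0) (hy : y ≠ 0) (h : x ^ p - y ^ q = 1) : (p : ℤ) ∣ y := by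
  by_contra hpy
  obtain ⟨a, ha⟩ := exists_sub_one_eq_pow_of_not_dvd hp hq h hpy
  obtain rfl : x = a ^ q + 1 := by linarith
  obtain ha0 | rfl | ha0 := lt_trichotomy a 0
  · have ha1 : a ≠ -1 := by
      rintro rfl
      simp [hq.neg_one_pow] at hx
    refine pow_ne_pow_sub_one_pow_add_one hp.two_le hpq.le hq (a := -a) (by omega) (-y) ?_
    rw [hq.neg_pow, hq.neg_pow, show -a ^ q - 1 = -(a ^ q + 1) by ring, hpo.neg_pow]
    linarith
  · refine hy (eq_zero_of_pow_eq_zero (n := q) ?_)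
    simpa [show q ≠ 0 by omega] using h
  · exact pow_ne_pow_add_one_pow_sub_one hp.two_le hpq.le hq ha0 y (by linarith)

lemma dvd_sub_one_of_pow_sub_pow_eq_one (hp : p.Prime) (hq : q ≠ 0) (hpy : (p : ℤ) ∣ y)
    (h : x ^ p - y ^ q = 1) : (p : ℤ) ∣ x - 1 := by
  have : Fact p.Prime := ⟨hp⟩
  rw [← ZMod.intCast_zmod_eq_zero_iff_dvd] at hpy ⊢
  have hmod := congrArg (Int.cast : ℤ → ZMod p) h
  push_cast at hmod ⊢
  rw [ZMod.pow_card, hpy, zero_pow hq] at hmod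
  linear_combination hmod

lemma exists_geom_sum_eq_mul_isCoprime (hp : p.Prime) (hpo : Odd p) (hpx : (p : ℤ) ∣ x - 1) :
    ∃ s : ℤ, ∑ i ∈ Finset.range p, x ^ i = p * s ∧ IsCoprime (p * (x - 1)) s := by
  have hpZ : Prime (p : ℤ) := Nat.prime_iff_prime_int.1 hp
  obtain ⟨b, hb⟩ := hpx
  have hsq : (p : ℤ) ^ 2 ∣ ∑ i ∈ Finset.range p, x ^ i - p := by
    have := odd_sq_dvd_geom_sum₂_sub (a := (1 : ℤ)) (b := b) hpo
    rw [← hb] at this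
    simpa using this
  obtain ⟨e, he⟩ := hsq
  obtain ⟨c, hc⟩ := sub_one_dvd_geom_sum_sub_natCast p x
  have hs : (1 + p * e : ℤ) = 1 + b * c := mul_left_cancel₀ hpZ.ne_zero (by
    linear_combination -he + hc + c * hb)
  refine ⟨1 + p * e, by linear_combination he, ?_⟩
  have hcop : IsCoprime (p : ℤ) (1 + p * e) := ⟨-e, 1, by ring⟩
  rw [hb]
  exact hcop.mul_left (hcop.mul_left (hs ▸ ⟨-c, 1, by ring⟩))

lemma exists_sub_one_eq_and_geom_sum_eq (hp : p.Prime) (hpo : Odd p) (hq : Odd q) (hpq : p < q)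
    (hx : x ≠ 0) (hy : y ≠ 0) (h : x ^ p - y ^ q = 1) :
    ∃ a b : ℤ, x - 1 = p ^ (q - 1) * a ^ q ∧ ∑ i ∈ Finset.range p, x ^ i = p * b ^ q := by
  have hpZ : Prime (p : ℤ) := Nat.prime_iff_prime_int.1 hp
  have hpy := dvd_right_of_pow_sub_pow_eq_one hp hpo hq hpq hx hy h
  obtain ⟨s, hs, hcop⟩ := exists_geom_sum_eq_mul_isCoprime hp hpo
    (dvd_sub_one_of_pow_sub_pow_eq_one hp (by omega) hpy h)
  have hmul : p * (x - 1) * s = y ^ q := by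
    have := mul_geom_sum x p
    rw [hs] at this
    linarith
  obtain ⟨c, hc⟩ := Int.eq_pow_of_mul_eq_pow_odd_left hcop hq hmul
  obtain ⟨b, rfl⟩ := Int.eq_pow_of_mul_eq_pow_odd_right hcop hq hmul
  obtain ⟨a, rfl⟩ : (p : ℤ) ∣ c := hpZ.dvd_of_dvd_pow (n := q) (hc ▸ dvd_mul_right _ _)
  refine ⟨a, b, mul_left_cancel₀ hpZ.ne_zero ?_, hs⟩
  rw [hc, mul_pow, ← mul_assoc, mul_pow_sub_one (by omega)]

lemma left_ne_one_of_pow_sub_pow_eq_one (hy : y ≠ 0) (h : x ^ p - y ^ q = 1) : x ≠ 1 := by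
  rintro rfl
  rw [one_pow, sub_eq_self] at h
  exact hy (eq_zero_of_pow_eq_zero h)

end Cassels

section Binomial

lemma succ_mul_choose_succ (r : ℝ) (n : ℕ) :
    ((n + 1 : ℕ) : ℝ) * Ring.choose r (n + 1) = Ring.choose r n * (r - n) := by
  simpa using Ring.choose_smul_choose r n.le_succ

lemma factorial_mul_choose_eq_prod (r : ℝ) (n : ℕ) :
    n.factorial * Ring.choose r n = ∏ i ∈ Finset.range n, (r - i) := by
  induction n with
  | zero => simp
  | succ n ih =>
    rw [Finset.prod_range_succ, ← ih, mul_assoc, ← succ_mul_choose_succ, Nat.factorial_succ]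
    push_cast
    ring

lemma abs_choose_le_one {r : ℝ} {n : ℕ} (hr : 0 ≤ r) (hrn : r ≤ n) : |Ring.choose r n| ≤ 1 := by
  induction n generalizing r with
  | zero => simp
  | succ n ih =>
    have hn : (0 : ℝ) < (n + 1 : ℕ) := by positivity
    have hfirst : ((n + 1 : ℕ) : ℝ) * Ring.choose r (n + 1) = r * Ring.choose (r - 1) n := by
      simpa using Ring.choose_smul_choose r (Nat.le_add_left 1 n)
    rw [← mul_le_mul_iff_right₀ hn, mul_one, ← abs_of_pos hn, ← abs_mul, abs_of_pos hn]
    obtain hle | hlt := le_or_gt r n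
    · rw [succ_mul_choose_succ, abs_mul]
      refine (mul_le_of_le_one_left (abs_nonneg _) (ih hr hle)).trans ?_
      push_cast
      exact abs_le.2 ⟨by linarith, by linarith⟩
    · rw [hfirst, abs_mul, abs_of_nonneg hr]
      have hr1 : 0 ≤ r - 1 ∨ n = 0 := by
        obtain rfl | hn := n.eq_zero_or_pos
        · exact .inr rfl
        · have : (1 : ℝ) ≤ n := by exact_mod_cast hn
          exact .inl (by linarith)
      obtain hr1 | rfl := hr1
      · exact (mul_le_of_le_one_right hr (ih hr1 (by push_cast at hrn; linarith))).trans hrn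
      · simpa using hrn

lemma abs_one_add_rpow_sub_sum_le {r t : ℝ} {n : ℕ} (ht : |t| ≤ 1 / 2) (hr : 0 ≤ r) (hrn : r ≤ n) :
    |(1 + t) ^ r - ∑ k ∈ Finset.range n, Ring.choose r k * t ^ k| ≤ 2 * |t| ^ n := by
  have hball : t ∈ Metric.eball (0 : ℝ) 1 := by
    rw [Metric.mem_eball, edist_zero_right, ← ofReal_norm]
    exact ENNReal.ofReal_lt_one.2 (ht.trans_lt one_half_lt_one)
  have hsum : HasSum (fun k ↦ Ring.choose r k * t ^ k) ((1 + t) ^ r) := by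
    simpa [-FormalMultilinearSeries.apply_eq_prod_smul_coeff] using
      (Real.one_add_rpow_hasFPowerSeriesOnBall_zero (a := r)).hasSum hball
  have hgeom : HasSum (fun k ↦ |t| ^ n * |t| ^ k) (|t| ^ n * (1 - |t|)⁻¹) :=
    (hasSum_geometric_of_lt_one (abs_nonneg t) (by linarith)).mul_left _
  refine (HasSum.norm_le_of_bounded ((hasSum_nat_add_iff' n).2 hsum) hgeom fun k ↦ ?_).trans ?_
  · rw [norm_mul, norm_pow, Real.norm_eq_abs, Real.norm_eq_abs, pow_add, mul_comm (|t| ^ k)]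
    exact mul_le_of_le_one_left (by positivity)
      (abs_choose_le_one hr (hrn.trans (by push_cast; linarith [k.cast_nonneg (α := ℝ)])))
  · rw [mul_comm 2]
    gcongr
    exact inv_le_of_inv_le₀ two_pos (by linarith)

/- Modulo the prime-to-`p` part of `k!` the number `p` is invertible, so that up to a power of `p`
the product is `k!` times a binomial coefficient. -/
lemma ordCompl_factorial_dvd_prod {p : ℕ} (hp : p.Prime) (q k : ℕ) :
    ((ordCompl[p] k.factorial : ℕ) : ℤ) ∣ ∏ i ∈ Finset.range k, ((q : ℤ) - i * p) := by
  set n := ordCompl[p] k.factorial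
  obtain ⟨s, t, hst⟩ : IsCoprime (p : ℤ) n :=
    Nat.isCoprime_iff_coprime.2 (Nat.coprime_ordCompl hp k.factorial_ne_zero)
  have hdvd : (n : ℤ) ∣ ∏ i ∈ Finset.range k, (-(q * s) + i) :=
    (Int.natCast_dvd_natCast.2 (Nat.ordCompl_dvd _ _)).trans (Nat.factorial_coe_dvd_prod k _)
  rw [← ZMod.intCast_zmod_eq_zero_iff_dvd] at hdvd ⊢
  have hinv : (s * p : ZMod n) = 1 := by
    have := congrArg (Int.cast : ℤ → ZMod n) hst
    push_cast at this
    rwa [ZMod.natCast_self, mul_zero, add_zero] at this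
  have hfactor (i : ℕ) : (q - i * p : ZMod n) = -p * (-(q * s) + i) := by
    linear_combination (-q : ZMod n) * hinv
  push_cast at hdvd ⊢
  simp only [hfactor]
  rw [Finset.prod_mul_distrib, hdvd, mul_zero]

lemma exists_pow_mul_choose_div_eq_intCast {p q : ℕ} (hp : p.Prime) (hpq : ¬ p ∣ q) (k : ℕ) :
    ∃ c : ℤ, ¬ (p : ℤ) ∣ c ∧
      (p : ℝ) ^ (k + k.factorial.factorization p) * Ring.choose (q / p : ℝ) k = c := by
  have hpR : (p : ℝ) ≠ 0 := Nat.cast_ne_zero.2 hp.ne_zero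
  obtain ⟨c, hc⟩ := ordCompl_factorial_dvd_prod hp q k
  refine ⟨c, fun hpc ↦ ?_, ?_⟩
  · obtain ⟨i, -, hi⟩ := (Nat.prime_iff_prime_int.1 hp).dvd_finsetProd_iff _ |>.1
      (hc ▸ hpc.mul_left _)
    exact hpq (Int.natCast_dvd_natCast.1 ((dvd_sub_left (dvd_mul_left _ _)).1 hi))
  · have hfactor (i : ℕ) : (q - i * p : ℝ) = p * (q / p - i) := by field_simp
    have hfac := Nat.ordProj_mul_ordCompl_eq_self k.factorial p
    have hpos := Nat.ordCompl_pos p k.factorial_ne_zero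
    generalize ordCompl[p] k.factorial = n at *
    rify at hc hfac hpos
    simp only [hfactor, Finset.prod_mul_distrib, Finset.prod_const, Finset.card_range,
      ← factorial_mul_choose_eq_prod, ← hfac] at hc
    refine mul_left_cancel₀ hpos.ne' ?_
    rw [← hc, pow_add]
    ring

end Binomial

lemma abs_sub_mul_pow_le {z w : ℝ} (hz : 0 ≤ z) (hw : 0 ≤ w) (n : ℕ) :
    |z - w| * w ^ n ≤ |z ^ (n + 1) - w ^ (n + 1)| := by
  have hle : w ^ n ≤ ∑ i ∈ Finset.range (n + 1), z ^ i * w ^ (n - i) := by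
    simpa using Finset.single_le_sum (f := fun i ↦ z ^ i * w ^ (n - i))
      (fun i _ ↦ by positivity) (Finset.mem_range.2 n.succ_pos)
  rw [← (Commute.all z w).geom_sum₂_mul, abs_mul, mul_comm |z - w|]
  simp only [Nat.add_sub_cancel]
  gcongr
  exact hle.trans (le_abs_self _)

section Runge

variable {p q m : ℕ} {x B : ℤ}

lemma abs_div_pow_sub_rpow_le {t : ℝ} (hp : Odd p) (hq : q ≠ 0) (hB : B ≠ 0)
    (h : x ^ p = (B ^ p - 1) ^ q + 1) (ht : (B : ℝ) ^ p * t = 1) (htq : q * |t| ≤ 1 / 4) :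
    |(x : ℝ) / B ^ q - (1 - t) ^ (q / p : ℝ)| ≤ 2 * |t| ^ q := by
  have : (B : ℝ) ≠ 0 := Int.cast_ne_zero.2 hB
  set z : ℝ := x / B ^ q
  set w : ℝ := (1 - t) ^ (q / p : ℝ)
  have hq1 : (1 : ℝ) ≤ q := by exact_mod_cast Nat.one_le_iff_ne_zero.2 hq
  have ht4 : |t| ≤ 1 / 4 := (le_mul_of_one_le_left (abs_nonneg t) hq1).trans htq
  have ht1 : 0 < 1 - t := by linarith [le_abs_self t]
  have hwp : w ^ p = (1 - t) ^ q := by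
    rw [← Real.rpow_mul_natCast ht1.le, div_mul_cancel₀ _ (Nat.cast_ne_zero.2 hp.pos.ne'),
      Real.rpow_natCast]
  have hzp : z ^ p = (1 - t) ^ q + t ^ q := by
    have hx : (x : ℝ) ^ p = (B ^ p - 1) ^ q + 1 := by exact_mod_cast h
    have hz : z ^ p = x ^ p * t ^ q := by
      rw [div_pow, div_eq_iff (by positivity), mul_assoc, pow_right_comm, mul_comm (t ^ q),
        ← mul_pow, ht, one_pow, mul_one]
    rw [hz, hx, add_mul, ← mul_pow, sub_mul, ht, one_mul, one_mul]
  have hhalf : 1 / 2 ≤ (1 - t) ^ q := by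
    have := one_add_mul_le_pow (a := -t) (by linarith [le_abs_self t]) q
    rw [← sub_eq_add_neg] at this
    nlinarith [le_abs_self t]
  have htq4 : |t ^ q| ≤ 1 / 4 := by
    rw [abs_pow]
    exact (pow_le_of_le_one (abs_nonneg t) (by linarith) hq).trans ht4
  have hz0 : 0 < z := hp.pow_pos_iff.1 (by linarith [neg_le_of_abs_le htq4])
  have hw0 : 0 < w := Real.rpow_pos_of_pos ht1 _
  have hw : 1 / 2 ≤ w ^ (p - 1) := by
    obtain hw1 | hw1 := le_total w 1
    · exact (hhalf.trans hwp.ge).trans (pow_le_pow_of_le_one hw0.le hw1 (Nat.sub_le _ _))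
    · linarith [one_le_pow₀ hw1 (n := p - 1)]
  have hroot := abs_sub_mul_pow_le hz0.le hw0.le (p - 1)
  rw [Nat.sub_add_cancel hp.pos, hzp, hwp, add_sub_cancel_left, abs_pow] at hroot
  nlinarith [abs_nonneg (z - w)]

lemma abs_div_pow_sub_sum_le {t : ℝ} (hp : Odd p) (hqm : q ≤ p * m) (hmq : m < q) (hB : B ≠ 0)
    (h : x ^ p = (B ^ p - 1) ^ q + 1) (ht : (B : ℝ) ^ p * t = 1) (htq : q * |t| ≤ 1 / 4) :
    |(x : ℝ) / B ^ q - ∑ k ∈ Finset.range (m + 1), Ring.choose (q / p : ℝ) k * (-t) ^ k| ≤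
      4 * |t| ^ (m + 1) := by
  have hq1 : (1 : ℝ) ≤ q := by exact_mod_cast (show 1 ≤ q by omega)
  have ht4 : |t| ≤ 1 / 4 := (le_mul_of_one_le_left (abs_nonneg t) hq1).trans htq
  have hqp : (q / p : ℝ) ≤ (m + 1 : ℕ) := by
    rw [div_le_iff₀ (Nat.cast_pos.2 hp.pos)]
    exact_mod_cast hqm.trans (by linarith)
  have hseries := abs_one_add_rpow_sub_sum_le (t := -t) (by rw [abs_neg]; linarith)
    (by positivity) hqp
  rw [← sub_eq_add_neg, abs_neg] at hseries
  have hpow : |t| ^ q ≤ |t| ^ (m + 1) :=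
    pow_le_pow_of_le_one (abs_nonneg t) (by linarith) hmq
  have hroot := abs_div_pow_sub_rpow_le hp (by omega) hB h ht htq
  linarith [abs_sub_le ((x : ℝ) / B ^ q) ((1 - t) ^ (q / p : ℝ))
    (∑ k ∈ Finset.range (m + 1), Ring.choose (q / p : ℝ) k * (-t) ^ k)]

lemma exists_mul_div_pow_sub_sum_eq_intCast {t : ℝ} (hp : p.Prime) (hpq : ¬ p ∣ q) (hm : m ≠ 0)
    (hqm : q ≤ p * m) (hB : B ≠ 0) (ht : (B : ℝ) ^ p * t = 1) :
    ∃ N : ℤ, ¬ (p : ℤ) ∣ N ∧ (p : ℝ) ^ (m + m.factorial.factorization p) * B ^ (p * m) *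
      (x / B ^ q - ∑ k ∈ Finset.range (m + 1), Ring.choose (q / p : ℝ) k * (-t) ^ k) = N := by
  choose c hpc hc using exists_pow_mul_choose_div_eq_intCast hp hpq
  set e : ℕ → ℕ := fun k ↦ k + k.factorial.factorization p
  have hem : e m ≠ 0 := by simp [e, hm]
  have he {k : ℕ} (hk : k < m) : e k < e m := add_lt_add_of_lt_of_le hk
    ((Nat.factorization_le_iff_dvd k.factorial_ne_zero m.factorial_ne_zero).2
      (Nat.factorial_dvd_factorial hk.le) p)
  set N : ℤ := p ^ e m * x * B ^ (p * m - q) - ∑ k ∈ Finset.range (m + 1),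
    p ^ (e m - e k) * ((-1) ^ k * B ^ (p * (m - k)) * c k)
  refine ⟨N, fun hN ↦ hpc m ?_, ?_⟩
  · have hdvd {n : ℕ} (hn : n ≠ 0) (a : ℤ) : (p : ℤ) ∣ p ^ n * a :=
      (dvd_pow_self _ hn).mul_right a
    have hlast := (dvd_sub_right (mul_assoc (_ : ℤ) _ _ ▸ hdvd hem _)).1 hN
    rw [Finset.sum_range_succ, dvd_add_right (Finset.dvd_sum fun k hk ↦
      hdvd (by have := he (Finset.mem_range.1 hk); omega) _)] at hlast
    rw [Nat.sub_self, Nat.sub_self, pow_zero, one_mul, mul_zero, pow_zero, mul_one] at hlast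
    exact (isUnit_neg_one.pow m).dvd_mul_left.1 hlast
  · have hBR : (B : ℝ) ≠ 0 := Int.cast_ne_zero.2 hB
    have hx : (B : ℝ) ^ (p * m) * (x / B ^ q) = x * B ^ (p * m - q) := by
      rw [pow_sub₀ _ hBR hqm]
      ring
    push_cast [N]
    rw [mul_assoc, mul_sub, hx, mul_sub, Finset.mul_sum, Finset.mul_sum, mul_assoc]
    congr 1
    refine Finset.sum_congr rfl fun k hk ↦ ?_
    have hkm : k ≤ m := Nat.lt_succ_iff.1 (Finset.mem_range.1 hk)
    have hek : e k ≤ e m := hkm.eq_or_lt.elim (fun h ↦ h ▸ le_rfl) fun h ↦ (he h).le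
    have hBt : (B : ℝ) ^ (p * m) * (-t) ^ k = (-1) ^ k * B ^ (p * (m - k)) := by
      rw [← Nat.sub_add_cancel hkm, mul_add, pow_add, pow_mul _ p k, mul_assoc, ← mul_pow,
        mul_neg, ht, Nat.sub_add_cancel hkm, mul_comm]
    rw [← hc, ← pow_sub_mul_pow _ hek]
    linear_combination (p : ℝ) ^ (e m - e k) * p ^ e k * Ring.choose (q / p : ℝ) k * hBt

end Runge

/- Runge's method: after clearing denominators, the error in truncating the binomial series for
`x / B ^ q` would be a nonzero integer of absolute value less than `1`. -/
lemma pow_sub_one_pow_add_one_ne_pow {p q m : ℕ} {x B : ℤ} (hp : p.Prime) (hpo : Odd p)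
    (hpq : ¬ p ∣ q) (hm : m ≠ 0) (hqm : q ≤ p * m) (hmq : m < q) (hBq : (4 * q : ℤ) ≤ |B ^ p|)
    (hBm : (4 * p ^ (m + m.factorial.factorization p) : ℤ) < |B ^ p|) :
    x ^ p ≠ (B ^ p - 1) ^ q + 1 := by
  intro h
  have hB : B ≠ 0 := by
    rintro rfl
    simp [hp.ne_zero] at hBq
    omega
  have hBR : (B : ℝ) ^ p ≠ 0 := pow_ne_zero _ (Int.cast_ne_zero.2 hB)
  set e := m + m.factorial.factorization p
  set β : ℝ := |(B : ℝ) ^ p| with hβ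
  have hβ0 : 0 < β := abs_pos.2 hBR
  obtain ⟨t, ht⟩ : ∃ t : ℝ, (B : ℝ) ^ p * t = 1 := ⟨_, mul_inv_cancel₀ hBR⟩
  have hβt : β * |t| = 1 := by rw [hβ, ← abs_mul, ht, abs_one]
  have hβq : (4 * q : ℝ) ≤ β := by rw [hβ]; exact_mod_cast hBq
  have htq : q * |t| ≤ 1 / 4 := by nlinarith [abs_nonneg t]
  obtain ⟨N, hpN, hN⟩ := exists_mul_div_pow_sub_sum_eq_intCast (x := x) hp hpq hm hqm hB ht
  have hN1 : 1 ≤ |(N : ℝ)| := by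
    have : N ≠ 0 := fun h0 ↦ hpN (h0 ▸ dvd_zero _)
    exact_mod_cast Int.one_le_abs this
  have hlt : |(N : ℝ)| < 1 := calc
    _ ≤ p ^ e * β ^ m * (4 * |t| ^ (m + 1)) := by
      rw [← hN, abs_mul, abs_mul, pow_mul, abs_pow (_ ^ p), abs_of_nonneg (by positivity)]
      gcongr
      exact abs_div_pow_sub_sum_le hpo hqm hmq hB h ht htq
    _ = 4 * p ^ e * |t| * (β * |t|) ^ m := by ring
    _ < 1 := by
      rw [hβt, one_pow, mul_one, ← hβt]
      gcongr
      · exact abs_pos.2 (right_ne_zero_of_mul_eq_one ht)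
      · rw [hβ]
        exact_mod_cast hBm
  linarith

lemma four_mul_le_pow_sub_one {p q : ℕ} (hp : 3 ≤ p) (hq : 5 ≤ q) : 4 * q ≤ p ^ (q - 1) := by
  refine le_trans ?_ (Nat.pow_le_pow_left hp _)
  induction q, hq using Nat.le_induction with
  | base => norm_num
  | succ n hn ih =>
    rw [Nat.add_sub_cancel, ← mul_pow_sub_one (by omega : n ≠ 0)]
    omega

lemma four_mul_pow_le_pow_sub_one {p q : ℕ} (hp : p.Prime) (hp3 : 3 ≤ p) (hpq : ¬ p ∣ q)
    (hq : 5 ≤ q) :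
    4 * p ^ (q / p + 1 + (q / p + 1).factorial.factorization p) ≤ p ^ (q - 1) := by
  set n := q / p
  set v := (n + 1).factorial.factorization p
  have hn : 3 * n < q := (Nat.mul_le_mul_right n hp3).trans_lt
    ((Nat.mul_div_le q p).lt_of_ne fun h ↦ hpq ⟨_, h.symm⟩)
  have hexp : 2 + (n + 1 + v) ≤ q - 1 := by
    obtain hlt | hle := lt_or_ge (n + 1) p
    · have hv : v = 0 := Nat.factorization_factorial_eq_zero_of_lt hlt
      omega
    · have hv : v ≤ (n + 1) / 2 := (Nat.factorization_factorial_le_div_pred hp _).trans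
        (Nat.div_le_div_left (by omega) two_pos)
      omega
  calc 4 * p ^ (n + 1 + v)
      ≤ p ^ 2 * p ^ (n + 1 + v) := by gcongr; nlinarith
    _ = p ^ (2 + (n + 1 + v)) := (pow_add _ _ _).symm
    _ ≤ p ^ (q - 1) := Nat.pow_le_pow_right hp.pos hexp

lemma pow_dvd_sub_one_of_pow_dvd_pow_sub_one {p q n : ℕ} {b : ℤ} (hp : p.Prime)
    (hq : q.Coprime p) (hq' : q.Coprime (p - 1)) (h : (p : ℤ) ^ n ∣ b ^ q - 1) :
    (p : ℤ) ^ n ∣ b - 1 := by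
  have hpn : p ^ n ≠ 0 := pow_ne_zero _ hp.ne_zero
  have : NeZero (p ^ n) := ⟨hpn⟩
  rw [← Nat.cast_pow, ← ZMod.intCast_zmod_eq_zero_iff_dvd] at h ⊢
  push_cast at h ⊢
  have hcard : (Nat.card (ZMod (p ^ n))ˣ).Coprime q := by
    rw [Nat.card_eq_fintype_card, ZMod.card_units_eq_totient]
    obtain rfl | hn := n.eq_zero_or_pos
    · simp
    · rw [Nat.totient_prime_pow hp hn]
      exact ((hq.pow_right _).mul_right hq').symm
  have hb : (b : ZMod (p ^ n)) ^ q = 1 := sub_eq_zero.1 h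
  obtain ⟨u, hu⟩ : IsUnit (b : ZMod (p ^ n)) := IsUnit.of_pow_eq_one hb (by
    rintro rfl
    exact hp.ne_one ((Nat.coprime_zero_left p).1 hq))
  have : u = 1 := hcard.pow_left_bijective.1 (Units.ext (by simpa [hu] using hb))
  rw [← hu, this, Units.val_one, sub_self]

section Cassels

variable {p q : ℕ} {x y : ℤ}

lemma pow_dvd_sub_one_of_geom_sum_eq_mul_pow {n : ℕ} {b : ℤ} (hp : p.Prime) (hq : q.Prime)
    (hpq : p < q) (hx : (p : ℤ) ^ (n + 1) ∣ x - 1)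
    (hb : ∑ i ∈ Finset.range p, x ^ i = p * b ^ q) : (p : ℤ) ^ n ∣ b - 1 := by
  refine pow_dvd_sub_one_of_pow_dvd_pow_sub_one hp ((Nat.coprime_primes hq hp).2 hpq.ne')
    (Nat.coprime_of_lt_prime (Nat.sub_ne_zero_of_lt hp.one_lt) (by omega) hq) ?_
  rw [← mul_dvd_mul_iff_left (Int.natCast_ne_zero.2 hp.ne_zero), ← pow_succ', mul_sub, mul_one,
    ← hb]
  exact hx.trans (sub_one_dvd_geom_sum_sub_natCast p x)

lemma geom_sum_ne_natCast (hp : 2 ≤ p) (hpx : (p : ℤ) < |x - 1|) :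
    ∑ i ∈ Finset.range p, x ^ i ≠ p := by
  intro h
  obtain ⟨k, rfl⟩ := Nat.exists_eq_add_of_le' hp
  rw [geom_sum_succ] at h
  have hdvd : x ∣ ((k + 1 : ℕ) : ℤ) :=
    Dvd.intro (∑ i ∈ Finset.range (k + 1), x ^ i) (by push_cast at h ⊢; linear_combination h)
  have := Int.le_of_dvd (by positivity) ((abs_dvd _ _).2 hdvd)
  have := abs_sub x 1
  rw [abs_one] at this
  push_cast at *
  omega

/-- Hyyrö's bound: the factor `b` of `y = p * a * b` is `1` modulo `p ^ (q - 2)` but not `1`. -/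
lemma pow_lt_abs_add_one_of_pow_sub_pow_eq_one (hp : p.Prime) (hpo : Odd p) (hq : q.Prime)
    (hqo : Odd q) (hpq : p < q) (hx : x ≠ 0) (hy : y ≠ 0) (h : x ^ p - y ^ q = 1) :
    (p ^ (q - 1) : ℤ) < |y + 1| := by
  have hp2 : 2 ≤ p := hp.two_le
  obtain ⟨n, rfl⟩ := Nat.exists_eq_add_of_le' (show 3 ≤ q by omega)
  obtain ⟨a, b, ha, hb⟩ := exists_sub_one_eq_and_geom_sum_eq hp hpo hqo hpq hx hy h
  rw [show n + 3 - 1 = n + 2 from rfl] at ha ⊢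
  have ha0 : a ≠ 0 := by
    rintro rfl
    exact left_ne_one_of_pow_sub_pow_eq_one hy h (by simpa [sub_eq_zero] using ha)
  have hyab : y = p * a * b := hqo.strictMono_pow.injective <| by
    have := mul_geom_sum x p
    rw [hb, ha] at this
    linear_combination -this - h
  have hb0 : 0 < b := by
    have := hpo.geom_sum_pos (x := x)
    rwa [hb, mul_pos_iff_of_pos_left (by omega), hqo.pow_pos_iff] at this
  have hb1 : b ≠ 1 := by
    rintro rfl
    refine geom_sum_ne_natCast hp2 ?_ (by simpa using hb)
    calc (p : ℤ) < p ^ (n + 2) := lt_self_pow₀ (mod_cast hp.one_lt) (by omega)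
      _ ≤ |x - 1| := by
        rw [ha, abs_mul, abs_of_nonneg (by positivity)]
        exact le_mul_of_one_le_right (by positivity) (Int.one_le_abs (pow_ne_zero _ ha0))
  have hble := Int.le_of_dvd (by omega) (pow_dvd_sub_one_of_geom_sum_eq_mul_pow (n := n + 1)
    hp hq hpq (ha ▸ dvd_mul_right _ _) hb)
  have hy_le : (p : ℤ) * (p ^ (n + 1) + 1) ≤ |y| := by
    rw [hyab, mul_assoc, abs_mul, abs_mul, Nat.abs_cast, abs_of_pos hb0]
    gcongr
    nlinarith [Int.one_le_abs ha0]
  have := abs_sub (y + 1) 1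
  rw [add_sub_cancel_right, abs_one] at this
  linarith [pow_succ' (p : ℤ) (n + 1)]

/-- **Cassels' theorem** for the larger exponent. -/
theorem dvd_left_of_pow_sub_pow_eq_one (hp : p.Prime) (hpo : Odd p) (hq : q.Prime) (hqo : Odd q)
    (hpq : p < q) (hx : x ≠ 0) (hy : y ≠ 0) (h : x ^ p - y ^ q = 1) : (q : ℤ) ∣ x := by
  by_contra hqx
  obtain ⟨B, hB⟩ := exists_sub_one_eq_pow_of_not_dvd (x := -y) (y := -x) hq hpo
    (by rw [hqo.neg_pow, hpo.neg_pow]; linarith) (by rwa [dvd_neg])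
  have hB' : y = (-B) ^ p - 1 := by
    rw [hpo.neg_pow]
    linarith
  have hp3 : 3 ≤ p := two_lt_of_prime_of_odd hp hpo
  have hq5 : 5 ≤ q := by
    obtain ⟨k, rfl⟩ := hqo
    omega
  have hndvd : ¬ p ∣ q := fun hd ↦ hpq.ne ((Nat.prime_dvd_prime_iff_eq hp hq).1 hd)
  have hlarge := pow_lt_abs_add_one_of_pow_sub_pow_eq_one hp hpo hq hqo hpq hx hy h
  rw [hB', sub_add_cancel] at hlarge
  refine pow_sub_one_pow_add_one_ne_pow (m := q / p + 1) (x := x) (B := -B) hp hpo hndvd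
    (Nat.succ_ne_zero _) (Nat.lt_mul_div_succ q hp.pos).le ?_ ?_ ?_ (by rw [← hB']; linarith)
  · have : q / p ≤ q / 3 := Nat.div_le_div_left hp3 three_pos
    omega
  · exact le_trans (mod_cast four_mul_le_pow_sub_one hp3 hq5) hlarge.le
  · exact lt_of_le_of_lt (mod_cast four_mul_pow_le_pow_sub_one hp hp3 hndvd hq5) hlarge

end Cassels

/-! ### Stickelberger's relation -/

lemma mul_pow_val_neg_one {M : Type*} [Monoid M] {n : ℕ} [NeZero n] {x : M} (hx : x ^ n = 1) :
    x * x ^ ((-1 : (ZMod n)ˣ) : ZMod n).val = 1 := by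
  rw [← pow_succ', ← orderOf_dvd_iff_pow_eq_one]
  refine (orderOf_dvd_of_pow_eq_one hx).trans ((ZMod.natCast_eq_zero_iff _ _).1 ?_)
  simp

section NumberField

variable {K : Type*} [Field K] [NumberField K]

lemma galois_smul_intCast (g : Gal(K/ℚ)) (n : ℤ) : g • (n : 𝓞 K) = n := by
  simpa using smul_algebraMap g n (A := 𝓞 K)

lemma galois_smul_dvd_smul (g : Gal(K/ℚ)) {a b : 𝓞 K} (h : a ∣ b) : g • a ∣ g • b :=
  map_dvd (MulSemiringAction.toRingEquiv _ (𝓞 K) g) h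

lemma norm_galois_smul (g : Gal(K/ℚ)) (z : 𝓞 K) : Algebra.norm ℤ (g • z) = Algebra.norm ℤ z :=
  Algebra.norm_eq_of_algEquiv (MulSemiringAction.toAlgEquiv ℤ (𝓞 K) g) z

lemma absNorm_galois_smul (g : Gal(K/ℚ)) (I : Ideal (𝓞 K)) :
    Ideal.absNorm (g • I) = Ideal.absNorm I := by
  have e : g • I = I.map (MulSemiringAction.toRingEquiv _ (𝓞 K) g) := rfl
  simp only [e, Ideal.absNorm_apply, Submodule.cardQuot_apply]
  exact (Nat.card_congr (Ideal.quotientEquiv I _ _ rfl).toEquiv).symm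

lemma prod_galois_smul [IsGalois ℚ K] (z : 𝓞 K) :
    ∏ g : Gal(K/ℚ), g • z = ((Algebra.norm ℤ z : ℤ) : 𝓞 K) := by
  apply RingOfIntegers.ext
  have h : (((Algebra.norm ℤ z : ℤ) : 𝓞 K) : K) = algebraMap ℚ K (Algebra.norm ℚ (z : K)) := by
    rw [← Algebra.coe_norm_int z]
    simp
  rw [h, Algebra.norm_eq_prod_automorphisms]
  exact map_prod (algebraMap (𝓞 K) K) _ _

lemma abs_norm_eq_prod_norm_embeddings (z : 𝓞 K) :
    |((Algebra.norm ℤ z : ℤ) : ℝ)| = ∏ φ : K →+* ℂ, ‖φ (z : K)‖ := by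
  have h := congrArg norm (Algebra.norm_eq_prod_embeddings ℚ ℂ (z : K))
  rw [← Algebra.coe_norm_int z, norm_prod] at h
  simpa using h.trans
    (Fintype.prod_equiv (RingHom.equivRatAlgHom K ℂ) _ _ fun _ ↦ rfl).symm

end NumberField

section CyclotomicAut

variable (p : ℕ) [Fact p.Prime] (K : Type*) [Field K] [NumberField K]
  [IsCyclotomicExtension {p} ℚ K]

/-- The automorphism `ζ ↦ ζ ^ a` of the `p`-th cyclotomic field; `a = -1` is complex
conjugation. -/
noncomputable def cyclotomicAut (a : (ZMod p)ˣ) : Gal(K/ℚ) :=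
  (IsCyclotomicExtension.Rat.galEquivZMod p K).symm a

local notation "σ" => cyclotomicAut p K

lemma cyclotomicAut_one : σ 1 = 1 := map_one _

lemma cyclotomicAut_mul (a b : (ZMod p)ˣ) : σ (a * b) = σ a * σ b := map_mul _ _ _

lemma cyclotomicAut_inv (a : (ZMod p)ˣ) : σ a⁻¹ = (σ a)⁻¹ := map_inv _ _

variable {K}

lemma cyclotomicAut_smul_smul (a b : (ZMod p)ˣ) (z : 𝓞 K) : σ a • σ b • z = σ (a * b) • z := by
  rw [cyclotomicAut_mul, mul_smul]

lemma cyclotomicAut_smul_of_pow_eq_one (a : (ZMod p)ˣ) {z : 𝓞 K} (hz : z ^ p = 1) :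
    σ a • z = z ^ (a : ZMod p).val := by
  rw [IsCyclotomicExtension.Rat.galEquivZMod_smul_of_pow_eq p K (σ a) hz, cyclotomicAut,
    MulEquiv.apply_symm_apply]

lemma cyclotomicAut_neg_one_smul_of_pow_eq_one {z : 𝓞 K} (hz : z ^ p = 1) :
    z * σ (-1) • z = 1 := by
  rw [cyclotomicAut_smul_of_pow_eq_one p _ hz, mul_pow_val_neg_one hz]

lemma isConj_cyclotomicAut_neg_one (φ : K →+* ℂ) : ComplexEmbedding.IsConj φ (σ (-1)) := by
  have hp : p ≠ 0 := NeZero.ne p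
  have hζ := IsCyclotomicExtension.zeta_spec p ℚ K
  set ζ := IsCyclotomicExtension.zeta p ℚ K
  have hφζ : ‖φ ζ‖ = 1 :=
    Complex.norm_eq_one_of_pow_eq_one (by rw [← map_pow, hζ.pow_eq_one, map_one]) hp
  have hmul : ζ * σ (-1) ζ = 1 := congrArg (algebraMap (𝓞 K) K)
    (cyclotomicAut_neg_one_smul_of_pow_eq_one p hζ.toInteger_isPrimitiveRoot.pow_eq_one)
  have h : (ComplexEmbedding.conjugate φ).toRatAlgHom =
      (φ.comp (σ (-1) : K →+* K)).toRatAlgHom := by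
    apply (hζ.powerBasis ℚ).algHom_ext
    rw [hζ.powerBasis_gen ℚ]
    change (starRingEnd ℂ) (φ ζ) = φ (σ (-1) ζ)
    rw [← Complex.inv_eq_conj hφζ, ← map_inv₀, eq_inv_of_mul_eq_one_right hmul]
  exact RingHom.ext fun z ↦ DFunLike.congr_fun h z

lemma embedding_cyclotomicAut_neg_one_smul (φ : K →+* ℂ) (z : 𝓞 K) :
    φ ((σ (-1) • z : 𝓞 K) : K) = (starRingEnd ℂ) (φ z) :=
  (isConj_cyclotomicAut_neg_one p φ).eq z

lemma prod_cyclotomicAut_smul (z : 𝓞 K) :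
    ∏ a : (ZMod p)ˣ, σ a • z = ((Algebra.norm ℤ z : ℤ) : 𝓞 K) := by
  have : IsGalois ℚ K := IsCyclotomicExtension.isGalois {p} ℚ K
  rw [← prod_galois_smul]
  exact Fintype.prod_equiv (IsCyclotomicExtension.Rat.galEquivZMod p K).symm.toEquiv _ _
    fun _ ↦ rfl

variable (K) in
lemma finrank_cyclotomicField_eq : Module.finrank ℚ K = p - 1 := by
  rw [IsCyclotomicExtension.finrank (n := p) K
    (Polynomial.cyclotomic.irreducible_rat (NeZero.pos p)), Nat.totient_prime Fact.out]

variable {p}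
variable {ζ : 𝓞 K} (hζ : IsPrimitiveRoot ζ p)
include hζ

lemma associated_one_sub_cyclotomicAut_smul (a : (ZMod p)ˣ) :
    Associated (1 - ζ) (σ a • (1 - ζ)) := by
  have h := hζ.associated_sub_one_map_sub_one (MulSemiringAction.toAlgEquiv ℤ (𝓞 K) (σ a))
  rw [MulSemiringAction.toAlgEquiv_apply] at h
  simpa [← smul_neg] using h.neg_neg

lemma cyclotomicAut_smul_sub_smul_dvd {a b : (ZMod p)ˣ} (hab : a ≠ b) :
    σ a • ζ - σ b • ζ ∣ 1 - ζ := by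
  set d := Units.mk0 ((b : ZMod p) - a) (sub_ne_zero.2 fun h ↦ hab (Units.ext h.symm))
  have hb : σ b • ζ = σ a • ζ * σ d • ζ := by
    simp only [cyclotomicAut_smul_of_pow_eq_one p _ hζ.pow_eq_one, ← pow_add]
    refine pow_eq_pow_of_modEq ((ZMod.natCast_eq_natCast_iff _ _ _).1 ?_) hζ.pow_eq_one
    simp [d]
  have hunit : IsUnit (σ a • ζ) := by
    rw [cyclotomicAut_smul_of_pow_eq_one p _ hζ.pow_eq_one]
    exact (hζ.isUnit (NeZero.ne p)).pow _
  have hfactor : σ a • ζ - σ b • ζ = σ a • ζ * σ d • (1 - ζ) := by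
    rw [hb, smul_sub, smul_one]
    ring
  rw [hfactor, hunit.mul_left_dvd]
  exact (associated_one_sub_cyclotomicAut_smul hζ d).dvd'

lemma norm_intCast_sub_zeta (x : ℤ) :
    Algebra.norm ℤ ((x : 𝓞 K) - ζ) = ∑ i ∈ Finset.range p, x ^ i := by
  have hp : p.Prime := Fact.out
  have hcyc := congrArg (Polynomial.eval (x : 𝓞 K))
    (Polynomial.cyclotomic_eq_prod_X_sub_primitiveRoots hζ)
  rw [Polynomial.cyclotomic_prime, Polynomial.eval_geom_sum, Polynomial.eval_prod] at hcyc
  rw [← Int.cast_inj (α := 𝓞 K), ← prod_cyclotomicAut_smul p, Int.cast_sum]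
  simp_rw [Int.cast_pow]
  rw [hcyc]
  refine Finset.prod_bij (fun a _ ↦ σ a • ζ) (fun a _ ↦ ?_) (fun a _ b _ hab ↦ ?_)
    (fun μ hμ ↦ ?_) (fun a _ ↦ ?_)
  · rw [mem_primitiveRoots hp.pos, cyclotomicAut_smul_of_pow_eq_one p _ hζ.pow_eq_one]
    exact hζ.pow_of_coprime _ (ZMod.val_coe_unit_coprime a)
  · simp only [cyclotomicAut_smul_of_pow_eq_one p _ hζ.pow_eq_one] at hab
    exact Units.ext (ZMod.val_injective p (hζ.pow_inj (ZMod.val_lt _) (ZMod.val_lt _) hab))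
  · rw [mem_primitiveRoots hp.pos, hζ.isPrimitiveRoot_iff] at hμ
    obtain ⟨i, hi, hc, rfl⟩ := hμ
    refine ⟨ZMod.unitOfCoprime i hc, Finset.mem_univ _, ?_⟩
    rw [cyclotomicAut_smul_of_pow_eq_one p _ hζ.pow_eq_one, ZMod.coe_unitOfCoprime,
      ZMod.val_cast_of_lt hi]
  · simp [smul_sub, galois_smul_intCast]

lemma norm_one_sub : Algebra.norm ℤ (1 - ζ) = p := by
  simpa using norm_intCast_sub_zeta hζ 1

end CyclotomicAut

section Character

variable {F : Type*} [Field F] [Fintype F]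

lemma sum_eval_eq_zero_of_natDegree_lt (f : Polynomial F)
    (hf : f.natDegree < Fintype.card F - 1) : ∑ z, f.eval z = 0 := by
  simp_rw [Polynomial.eval_eq_sum_range]
  rw [Finset.sum_comm]
  refine Finset.sum_eq_zero fun i hi ↦ ?_
  rw [← Finset.mul_sum, FiniteField.sum_pow_lt_card_sub_one F i (by grind), mul_zero]

lemma sum_pow_mul_one_sub_pow_eq_zero {a b : ℕ} (h : a + b < Fintype.card F - 1) :
    ∑ z : F, z ^ a * (1 - z) ^ b = 0 := by
  have hdeg : (Polynomial.X ^ a * (1 - Polynomial.X) ^ b : Polynomial F).natDegree ≤ a + b := by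
    compute_degree
  simpa using sum_eval_eq_zero_of_natDegree_lt _ (hdeg.trans_lt h)

variable {R : Type*} [CommRing R] (π : R →+* F)

lemma orderOf_mulChar_of_map_eq_pow {χ : MulChar F R} {n m : ℕ} (hm : n * m = Fintype.card F - 1)
    (hχn : χ ^ n = 1) (hχ : ∀ z, π (χ z) = z ^ m) : orderOf χ = n := by
  have hcard : 0 < Fintype.card F - 1 := Nat.sub_pos_of_lt Fintype.one_lt_card
  refine (IsPrimitiveRoot.mk hχn fun j hj ↦ ?_).eq_orderOf.symm
  have hmj : Fintype.card F - 1 ∣ m * j := by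
    refine (FiniteField.forall_pow_eq_one_iff F _).1 fun u ↦ Units.ext ?_
    rw [Units.val_pow_eq_pow_val, pow_mul, ← hχ, ← map_pow, ← MulChar.pow_apply_coe, hj]
    simp
  rw [← hm, mul_comm] at hmj
  exact Nat.dvd_of_mul_dvd_mul_left (Nat.pos_of_ne_zero (by grind)) hmj

lemma exists_mulChar_map_eq_pow {n : ℕ} [NeZero n] {ζ : R} (hζ : ζ ^ n = 1)
    (hπζ : IsPrimitiveRoot (π ζ) n) :
    ∃ (χ : MulChar F R) (m : ℕ), n * m = Fintype.card F - 1 ∧ orderOf χ = n ∧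
      ∀ z, π (χ z) = z ^ m := by
  classical
  obtain ⟨m, hm⟩ := (hπζ.pow_eq_one_iff_dvd _).1
    (FiniteField.pow_card_sub_one_eq_one (π ζ) (hπζ.ne_zero (NeZero.ne n)))
  have hm0 : m ≠ 0 := by
    have := Fintype.one_lt_card (α := F)
    grind
  obtain ⟨g, hg⟩ := IsCyclic.exists_generator (α := Fˣ)
  have hgmn : ((g : F) ^ m) ^ n = 1 := by
    rw [← pow_mul', ← hm, FiniteField.pow_card_sub_one_eq_one _ g.ne_zero]
  obtain ⟨i, -, hi⟩ := hπζ.eq_pow_of_pow_eq_one hgmn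
  set u : Rˣ := Units.ofPowEqOne ζ n hζ (NeZero.ne n)
  have hu : (u ^ i) ^ n = 1 := by rw [pow_right_comm, Units.pow_ofPowEqOne, one_pow]
  have hroot : u ^ i ∈ rootsOfUnity (Fintype.card Fˣ) R := by
    rw [mem_rootsOfUnity, Fintype.card_units, hm, pow_mul, hu, one_pow]
  set χ := MulChar.ofRootOfUnity hroot hg
  have hχg : χ g = ζ ^ i := by rw [MulChar.ofRootOfUnity_spec hroot hg]; simp [u]
  have hχn : χ ^ n = 1 := by
    rw [MulChar.eq_iff hg, MulChar.pow_apply_coe, hχg, pow_right_comm, hζ]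
    simp
  have hχ : ∀ z, π (χ z) = z ^ m := by
    intro z
    rcases eq_or_ne z 0 with rfl | hz
    · rw [MulChar.map_zero, map_zero, zero_pow hm0]
    · obtain ⟨j, hj⟩ := (mem_powers_iff_mem_zpowers (x := g)).2 (hg (Units.mk0 z hz))
      obtain rfl : (g : F) ^ j = z := by simpa using congrArg Units.val hj
      rw [map_pow, map_pow, hχg, map_pow, hi, pow_right_comm]
  exact ⟨χ, m, hm.symm, orderOf_mulChar_of_map_eq_pow π hm.symm hχn hχ, hχ⟩

lemma map_jacobiSum_pow_eq_zero {χ : MulChar F R} {m a b : ℕ} (hχ : ∀ z, π (χ z) = z ^ m)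
    (ha : a ≠ 0) (hb : b ≠ 0) (h : (a + b) * m < Fintype.card F - 1) :
    π (jacobiSum (χ ^ a) (χ ^ b)) = 0 := by
  simp only [jacobiSum, MulChar.pow_apply' _ ha, MulChar.pow_apply' _ hb, map_sum, map_mul, map_pow,
    hχ, ← pow_mul']
  exact sum_pow_mul_one_sub_pow_eq_zero (by rwa [← add_mul])

end Character

section JacobiSum

variable {p : ℕ} [Fact p.Prime] {K : Type*} [Field K] [NumberField K]
  [IsCyclotomicExtension {p} ℚ K]

local notation "σ" => cyclotomicAut p K

lemma cyclotomicAut_smul_mulChar {M : Type*} [CommMonoid M] {χ : MulChar M (𝓞 K)}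
    (hχ : χ ^ p = 1) (a : (ZMod p)ˣ) (z : M) : σ a • χ z = (χ ^ (a : ZMod p).val) z := by
  have ha : (a : ZMod p).val ≠ 0 := (ZMod.val_ne_zero _).2 a.ne_zero
  rw [MulChar.pow_apply' _ ha]
  by_cases hz : IsUnit z
  · refine cyclotomicAut_smul_of_pow_eq_one p a ?_
    rw [← MulChar.pow_apply' _ (NeZero.ne p), hχ, MulChar.one_apply hz]
  · rw [MulChar.map_nonunit _ hz, smul_zero, zero_pow ha]

lemma cyclotomicAut_smul_jacobiSum {F : Type*} [CommRing F] [Fintype F] {χ ψ : MulChar F (𝓞 K)}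
    (hχ : χ ^ p = 1) (hψ : ψ ^ p = 1) (a : (ZMod p)ˣ) :
    σ a • jacobiSum χ ψ = jacobiSum (χ ^ (a : ZMod p).val) (ψ ^ (a : ZMod p).val) := by
  simp only [jacobiSum, Finset.smul_sum, smul_mul', cyclotomicAut_smul_mulChar hχ,
    cyclotomicAut_smul_mulChar hψ]

lemma jacobiSum_mul_cyclotomicAut_neg_one_smul {F : Type*} [Field F] [Fintype F]
    {χ ψ : MulChar F (𝓞 K)} (hχ : χ ^ p = 1) (hψ : ψ ^ p = 1) (hχ1 : χ ≠ 1) (hψ1 : ψ ≠ 1)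
    (hχψ : χ * ψ ≠ 1) :
    jacobiSum χ ψ * σ (-1) • jacobiSum χ ψ = Fintype.card F := by
  have hinj : Function.Injective (algebraMap (𝓞 K) K) := RingOfIntegers.coe_injective
  have hchar : ringChar K ≠ ringChar F := by
    rw [ringChar.eq_zero]
    exact (CharP.ringChar_ne_zero_of_finite F).symm
  rw [cyclotomicAut_smul_jacobiSum hχ hψ, eq_inv_of_mul_eq_one_right (mul_pow_val_neg_one hχ),
    eq_inv_of_mul_eq_one_right (mul_pow_val_neg_one hψ)]
  apply hinj
  rw [map_mul, ← jacobiSum_ringHomComp, ← jacobiSum_ringHomComp, ← MulChar.ringHomComp_inv,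
    ← MulChar.ringHomComp_inv, jacobiSum_mul_jacobiSum_inv hchar, map_natCast]
  · rwa [MulChar.ringHomComp_ne_one_iff hinj]
  · rwa [MulChar.ringHomComp_ne_one_iff hinj]
  · rwa [← MulChar.ringHomComp_mul, MulChar.ringHomComp_ne_one_iff hinj]

end JacobiSum

section HalfSystem

/-- The set of `t` with `⟨t⟩ + ⟨k t⟩ < p`, where `⟨·⟩` is the residue in `[0, p)`. For `k ≠ 0, -1`
it contains exactly one of `t` and `-t`; the sum of the `σ_t⁻¹` over it is the Stickelberger element
attached to the Jacobi sum `J(χ, χ ^ k)`. -/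
def halfSystem (p k : ℕ) [NeZero p] : Finset (ZMod p)ˣ :=
  {t | (t : ZMod p).val + (k * t : ZMod p).val < p}

variable {p : ℕ} [Fact p.Prime] {k : ℕ} (hk : (k : ZMod p) ≠ 0) (hk' : (k : ZMod p) + 1 ≠ 0)
include hk hk'

lemma neg_mem_halfSystem_iff (t : (ZMod p)ˣ) : -t ∈ halfSystem p k ↔ t ∉ halfSystem p k := by
  have : NeZero (t : ZMod p) := ⟨t.ne_zero⟩
  have : NeZero (k * t : ZMod p) := ⟨mul_ne_zero hk t.ne_zero⟩
  have hne : (t : ZMod p).val + (k * t : ZMod p).val ≠ p := fun h ↦ by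
    have hsum := congrArg (Nat.cast : ℕ → ZMod p) h
    simp only [Nat.cast_add, ZMod.natCast_val, ZMod.cast_id', id, CharP.cast_eq_zero] at hsum
    exact mul_ne_zero hk' t.ne_zero (by linear_combination hsum)
  have := ZMod.val_lt (t : ZMod p)
  have := ZMod.val_lt (k * t : ZMod p)
  simp only [halfSystem, Finset.mem_filter_univ, Units.val_neg, mul_neg,
    ZMod.val_neg_of_ne_zero]
  lia

lemma prod_halfSystem_mul_prod_neg {M : Type*} [CommMonoid M] (f : (ZMod p)ˣ → M) :
    (∏ t ∈ halfSystem p k, f t) * ∏ t ∈ halfSystem p k, f (-t) = ∏ t, f t := by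
  classical
  have h : ∏ t ∈ halfSystem p k, f (-t) = ∏ t ∈ (halfSystem p k)ᶜ, f t :=
    Finset.prod_equiv (Equiv.neg _) (fun t ↦ by simp [neg_mem_halfSystem_iff hk hk'])
      fun _ _ ↦ rfl
  rw [h, Finset.prod_mul_prod_compl]

lemma two_mul_card_halfSystem : 2 * (halfSystem p k).card = p - 1 := by
  have h := prod_halfSystem_mul_prod_neg hk hk' fun _ ↦ Multiplicative.ofAdd 1
  simp only [Finset.prod_const, Finset.card_univ, ZMod.card_units_eq_totient,
    Nat.totient_prime Fact.out, ← ofAdd_nsmul, ← ofAdd_add, smul_eq_mul, mul_one] at h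
  have := Multiplicative.ofAdd.injective h
  lia

end HalfSystem

lemma eq_of_dvd_of_absNorm_eq {S : Type*} [CommRing S] [IsDedekindDomain S] [Module.Free ℤ S]
    {I J : Ideal S} (h : I ∣ J) (hJ : Ideal.absNorm J ≠ 0)
    (hIJ : Ideal.absNorm I = Ideal.absNorm J) : I = J := by
  obtain ⟨M, rfl⟩ := h
  rw [map_mul] at hJ hIJ
  have hM : Ideal.absNorm M = 1 :=
    Nat.eq_of_mul_eq_mul_left (Nat.pos_of_ne_zero (left_ne_zero_of_mul hJ)) (by lia)
  rw [Ideal.absNorm_eq_one_iff.1 hM, Ideal.mul_top]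

section Stickelberger

variable {p : ℕ} [Fact p.Prime] {K : Type*} [Field K] [NumberField K]
  [IsCyclotomicExtension {p} ℚ K] {ζ : 𝓞 K} (hζ : IsPrimitiveRoot ζ p)

local notation "σ" => cyclotomicAut p K

include hζ

lemma isCoprime_cyclotomicAut_smul {I : Ideal (𝓞 K)} {c : ℤ} (hc : c - ζ ∈ I)
    (hI : IsCoprime I (Ideal.span {1 - ζ})) {a b : (ZMod p)ˣ} (hab : a ≠ b) :
    IsCoprime (σ a • I) (σ b • I) := by
  have hmem (a : (ZMod p)ˣ) : c - σ a • ζ ∈ σ a • I := by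
    simpa only [smul_sub, galois_smul_intCast] using Ideal.smul_mem_pointwise_smul (σ a) _ _ hc
  rw [Ideal.isCoprime_iff_sup_eq]
  have hsub : 1 - ζ ∈ σ a • I ⊔ σ b • I := by
    refine Ideal.mem_of_dvd _ (cyclotomicAut_smul_sub_smul_dvd hζ hab) ?_
    rw [← sub_sub_sub_cancel_left (c := (c : 𝓞 K))]
    exact Ideal.sub_mem _ (Ideal.mem_sup_right (hmem b)) (Ideal.mem_sup_left (hmem a))
  obtain ⟨i, hi, j, hj, hij⟩ := Ideal.isCoprime_iff_exists.1 hI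
  rw [Ideal.eq_top_iff_one, ← smul_one (σ a), ← hij, smul_add]
  refine Ideal.add_mem _ (Ideal.mem_sup_left (Ideal.smul_mem_pointwise_smul _ _ _ hi)) ?_
  exact Ideal.mem_of_dvd _ ((associated_one_sub_cyclotomicAut_smul hζ a).dvd.trans
    (galois_smul_dvd_smul _ (Ideal.mem_span_singleton.1 hj))) hsub

variable {k : ℕ} (hk : (k : ZMod p) ≠ 0) (hk' : (k : ZMod p) + 1 ≠ 0)
include hk hk'

omit hζ in
lemma absNorm_span_eq_pow_card_halfSystem {J : 𝓞 K} {n : ℕ} (h : J * σ (-1) • J = n) :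
    Ideal.absNorm (Ideal.span {J}) = n ^ (halfSystem p k).card := by
  have hnorm := congrArg (Algebra.norm ℤ) h
  rw [map_mul, norm_galois_smul, Algebra.norm_natCast, RingOfIntegers.rank,
    finrank_cyclotomicField_eq p, ← two_mul_card_halfSystem hk hk', pow_mul', ← pow_two] at hnorm
  rw [Ideal.absNorm_span_singleton]
  have h := Int.natAbs_eq_iff_sq_eq.2 (by simpa only [← pow_two] using hnorm)
  simpa [Int.natAbs_pow] using h

lemma exists_mul_smul_eq_card_and_map_smul_eq_zero {F : Type*} [Field F] [Fintype F]
    (π : 𝓞 K →+* F) (hπζ : π ζ ≠ 1) :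
    ∃ J : 𝓞 K, J * σ (-1) • J = Fintype.card F ∧ ∀ t ∈ halfSystem p k, π (σ t • J) = 0 := by
  have hprim : IsPrimitiveRoot (π ζ) p := by
    rw [IsPrimitiveRoot.iff_orderOf]
    exact orderOf_eq_prime (by rw [← map_pow, hζ.pow_eq_one, map_one]) hπζ
  obtain ⟨χ, m, hm, hord, hχ⟩ := exists_mulChar_map_eq_pow π hζ.pow_eq_one hprim
  have hχp : χ ^ p = 1 := by rw [← hord, pow_orderOf_eq_one]
  have hχkp : (χ ^ k) ^ p = 1 := by rw [pow_right_comm, hχp, one_pow]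
  have hχne (j : ℕ) (hj : (j : ZMod p) ≠ 0) : χ ^ j ≠ 1 := by
    rwa [Ne, ← orderOf_dvd_iff_pow_eq_one, hord, ← ZMod.natCast_eq_zero_iff]
  refine ⟨jacobiSum χ (χ ^ k), ?_, fun t ht ↦ ?_⟩
  · refine jacobiSum_mul_cyclotomicAut_neg_one_smul hχp hχkp ?_ (hχne k hk) ?_
    · simpa using hχne 1 (by simp)
    · rw [← pow_succ']
      exact hχne _ (by exact_mod_cast hk')
  · have hχkt : (χ ^ k) ^ (t : ZMod p).val = χ ^ (k * t : ZMod p).val := by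
      rw [← pow_mul]
      exact pow_eq_pow_of_modEq ((ZMod.natCast_eq_natCast_iff _ _ _).1 (by simp)) hχp
    rw [cyclotomicAut_smul_jacobiSum hχp hχkp, hχkt]
    refine map_jacobiSum_pow_eq_zero π hχ ((ZMod.val_ne_zero _).2 t.ne_zero)
      ((ZMod.val_ne_zero _).2 (mul_ne_zero hk t.ne_zero)) ?_
    have hm0 : 0 < m := Nat.pos_of_mul_pos_left (hm ▸ Nat.sub_pos_of_lt Fintype.one_lt_card)
    rw [← hm]
    exact Nat.mul_lt_mul_of_pos_right (by simpa [halfSystem] using ht) hm0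

/-- Stickelberger's relation for a prime of degree one: the Jacobi sum `J(χ, χ ^ k)` of the `p`-th
power residue character modulo `L` generates `∏ σ_t⁻¹ L`. -/
lemma exists_span_eq_prod_smul_of_isMaximal {L : Ideal (𝓞 K)} [hL : L.IsMaximal] (hL0 : L ≠ ⊥)
    {c : ℤ} (hc : c - ζ ∈ L) (hcop : IsCoprime L (Ideal.span {1 - ζ})) :
    ∃ J : 𝓞 K, Ideal.span {J} = ∏ t ∈ halfSystem p k, σ t⁻¹ • L ∧
      J * σ (-1) • J = (Ideal.absNorm L : ℕ) := by
  let _ : Field (𝓞 K ⧸ L) := Ideal.Quotient.field L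
  have : Finite (𝓞 K ⧸ L) := Ring.HasFiniteQuotients.finiteQuotient hL0
  let _ : Fintype (𝓞 K ⧸ L) := Fintype.ofFinite _
  have hζ1 : Ideal.Quotient.mk L ζ ≠ 1 := fun h ↦ hL.ne_top <| by
    have hle : Ideal.span {1 - ζ} ≤ L := by
      rw [Ideal.span_singleton_le_iff_mem, ← Ideal.Quotient.eq, h, map_one]
    rw [← Ideal.isCoprime_iff_sup_eq.1 hcop, sup_eq_left.2 hle]
  obtain ⟨J, hJ, hmem⟩ :=
    exists_mul_smul_eq_card_and_map_smul_eq_zero hζ hk hk' (Ideal.Quotient.mk L) hζ1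
  rw [← Nat.card_eq_fintype_card, ← Submodule.cardQuot_apply, ← Ideal.absNorm_apply] at hJ
  have hnorm := absNorm_span_eq_pow_card_halfSystem hk hk' hJ
  refine ⟨J, (eq_of_dvd_of_absNorm_eq ?_ ?_ ?_).symm, hJ⟩
  · refine Finset.prod_dvd_of_coprime
      (fun a _ b _ hab ↦ isCoprime_cyclotomicAut_smul hζ hc hcop (by simpa using hab))
      fun t ht ↦ ?_
    rw [Ideal.dvd_span_singleton, cyclotomicAut_inv, Ideal.mem_inv_pointwise_smul_iff,
      ← Ideal.Quotient.eq_zero_iff_mem]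
    exact hmem t ht
  · rw [hnorm]
    exact pow_ne_zero _ (Ideal.absNorm_eq_zero_iff.not.2 hL0)
  · rw [hnorm, map_prod]
    simp only [absNorm_galois_smul, Finset.prod_const]

lemma exists_span_eq_prod_smul {A : Ideal (𝓞 K)} (hA0 : A ≠ ⊥) {c : ℤ} (hc : c - ζ ∈ A)
    (hcop : IsCoprime A (Ideal.span {1 - ζ})) :
    ∃ J : 𝓞 K, Ideal.span {J} = ∏ t ∈ halfSystem p k, σ t⁻¹ • A ∧
      J * σ (-1) • J = (Ideal.absNorm A : ℕ) := by
  induction A using UniqueFactorizationMonoid.induction_on_prime with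
  | h₁ => exact absurd rfl hA0
  | h₂ A hA =>
    rw [isUnit_iff_eq_one] at hA
    exact ⟨1, by simp only [hA, smul_one, Finset.prod_const_one, Ideal.span_singleton_one,
      ← Ideal.one_eq_top], by simp [hA]⟩
  | h₃ A L hA hL ih =>
    have : L.IsPrime := Ideal.isPrime_of_prime hL
    have : L.IsMaximal := this.isMaximal hL.ne_zero
    obtain ⟨J₁, hJ₁, hJ₁'⟩ := exists_span_eq_prod_smul_of_isMaximal hζ hk hk' hL.ne_zero
      (Ideal.mul_le_left hc) hcop.of_mul_left_left
    obtain ⟨J₂, hJ₂, hJ₂'⟩ := ih hA (Ideal.mul_le_right hc) hcop.of_mul_left_right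
    refine ⟨J₁ * J₂, ?_, ?_⟩
    · simp only [← Ideal.span_singleton_mul_span_singleton, hJ₁, hJ₂, smul_mul',
        Finset.prod_mul_distrib]
    · rw [smul_mul', mul_mul_mul_comm, hJ₁', hJ₂', map_mul, Nat.cast_mul]

end Stickelberger

section Torsion

variable {K : Type*} [Field K] [NumberField K]

lemma exists_mem_torsion_mul_eq {a c : 𝓞 K} (h : Associated a c) (ha : a ≠ 0)
    (hac : ∀ φ : K →+* ℂ, ‖φ a‖ = ‖φ c‖) : ∃ ε ∈ Units.torsion K, a * (ε : 𝓞 K) = c := by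
  obtain ⟨ε, rfl⟩ := h
  refine ⟨ε, (Units.mem_torsion K).2 fun w ↦ ?_, rfl⟩
  have hφa : ‖w.embedding a‖ ≠ 0 := by simpa using ha
  rw [← InfinitePlace.norm_embedding_eq]
  simpa [hφa] using (hac w.embedding).symm

lemma ne_zero_of_coprime_torsionOrder {q : ℕ} (hq : q.Coprime (Units.torsionOrder K)) : q ≠ 0 := by
  rintro rfl
  have := Units.even_torsionOrder K
  simp_all

lemma exists_pow_eq_of_mem_torsion {q : ℕ} (hq : q.Coprime (Units.torsionOrder K)) {ε : (𝓞 K)ˣ}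
    (hε : ε ∈ Units.torsion K) : ∃ η : (𝓞 K)ˣ, η ^ q = ε := by
  rw [← Units.rootsOfUnity_eq_torsion, mem_rootsOfUnity] at hε
  obtain ⟨m, hm⟩ := exists_pow_eq_self_of_coprime
    (hq.coprime_dvd_right (orderOf_dvd_of_pow_eq_one hε))
  exact ⟨ε ^ m, by rw [pow_right_comm, hm]⟩

end Torsion

section Cyclotomic

variable {p : ℕ} [Fact p.Prime] {K : Type*} [Field K] [NumberField K]
  [IsCyclotomicExtension {p} ℚ K]

local notation "σ" => cyclotomicAut p K

lemma coprime_torsionOrder (hp : Odd p) {q : ℕ} (hq : q.Prime) (hq2 : Odd q) (hpq : p ≠ q) :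
    q.Coprime (Units.torsionOrder K) := by
  rw [IsCyclotomicExtension.Rat.torsionOrder_eq (n := p), if_neg (Nat.not_even_iff_odd.2 hp)]
  exact hq2.coprime_two_right.mul_right ((Nat.coprime_primes hq Fact.out).2 hpq.symm)

lemma cyclotomicAut_smul_span (a : (ZMod p)ˣ) (z : 𝓞 K) :
    σ a • Ideal.span {z} = Ideal.span {σ a • z} := by
  simp [Ideal.pointwise_smul_def, Ideal.map_span]

lemma norm_sq_of_mul_smul_eq {z : 𝓞 K} {n : ℤ} (h : z * σ (-1) • z = n) (φ : K →+* ℂ) :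
    ‖φ z‖ ^ 2 = |(n : ℝ)| := by
  have := congrArg (fun w : 𝓞 K ↦ ‖φ w‖) h
  simpa [embedding_cyclotomicAut_neg_one_smul, pow_two] using this

lemma prod_halfSystem_smul_mul_smul {k : ℕ} (hk : (k : ZMod p) ≠ 0) (hk' : (k : ZMod p) + 1 ≠ 0)
    (z : 𝓞 K) : (∏ t ∈ halfSystem p k, σ t⁻¹ • z) * σ (-1) • ∏ t ∈ halfSystem p k, σ t⁻¹ • z =
      ((Algebra.norm ℤ z : ℤ) : 𝓞 K) := by
  rw [← prod_cyclotomicAut_smul p, ← Equiv.prod_comp (Equiv.inv _),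
    ← prod_halfSystem_mul_prod_neg hk hk', Finset.smul_prod']
  congr 1
  refine Finset.prod_congr rfl fun t _ ↦ ?_
  rw [cyclotomicAut_smul_smul, Equiv.inv_apply, inv_neg, neg_one_mul]

lemma prime_one_sub {ζ : 𝓞 K} (hζ : IsPrimitiveRoot ζ p) : Prime (1 - ζ) := by
  have hζK : IsPrimitiveRoot (ζ : K) p := hζ.map_of_injective RingOfIntegers.coe_injective
  rw [← neg_sub]
  exact hζK.zeta_sub_one_prime'.neg

end Cyclotomic

/-! ### Annihilation by the Stickelberger element -/

/-- The properties of `u = (x - ζ) / (1 - ζ)` that come from a solution of Catalan's equation: by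
Cassels' theorem `(x ^ p - 1) / (x - 1) = p * b ^ q` with `p ∣ x - 1`, so that `u` is integral,
congruent to `1` modulo `1 - ζ`, and of norm `b ^ q`. -/
structure IsCasselsElement {K : Type*} [Field K] (ζ u : 𝓞 K) (x b : ℤ) (q : ℕ) : Prop where
  mul_one_sub_zeta : u * (1 - ζ) = x - ζ
  one_sub_zeta_dvd : 1 - ζ ∣ u - 1
  norm_eq : Algebra.norm ℤ u = b ^ q

namespace IsCasselsElement

variable {K : Type*} [Field K] {ζ u : 𝓞 K} {x b : ℤ} {q : ℕ} (h : IsCasselsElement ζ u x b q)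
include h

lemma sub_mem_span : x - ζ ∈ Ideal.span {u} :=
  Ideal.mem_span_singleton.2 ⟨1 - ζ, h.mul_one_sub_zeta.symm⟩

lemma isCoprime_span : IsCoprime (Ideal.span {u}) (Ideal.span {1 - ζ}) := by
  obtain ⟨w, hw⟩ := h.one_sub_zeta_dvd
  rw [Ideal.isCoprime_span_singleton_iff]
  exact ⟨1, -w, by linear_combination hw⟩

variable {p : ℕ} [Fact p.Prime] [NumberField K] [IsCyclotomicExtension {p} ℚ K]
  (hζ : IsPrimitiveRoot ζ p)
include hζ

local notation "σ" => cyclotomicAut p K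

lemma ne_zero : u ≠ 0 := by
  rintro rfl
  have h1 : 1 - ζ ∣ 0 - 1 := h.one_sub_zeta_dvd
  rw [zero_sub, dvd_neg] at h1
  exact (prime_one_sub hζ).not_isUnit (isUnit_of_dvd_one h1)

lemma exists_span_eq_pow : ∃ A : Ideal (𝓞 K), Ideal.span {u} = A ^ q := by
  have hprod : ∏ a : (ZMod p)ˣ, Ideal.span {σ a • u} = Ideal.span {(b : 𝓞 K)} ^ q := by
    rw [Ideal.prod_span_singleton, prod_cyclotomicAut_smul, h.norm_eq, Ideal.span_singleton_pow,
      Int.cast_pow]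
  obtain ⟨A, hA⟩ := Finset.exists_eq_pow_of_mul_eq_pow_of_coprime (fun a _ b _ hab ↦ by
    rw [← cyclotomicAut_smul_span, ← cyclotomicAut_smul_span]
    exact isCoprime_cyclotomicAut_smul hζ h.sub_mem_span h.isCoprime_span hab)
    hprod 1 (Finset.mem_univ _)
  exact ⟨A, by rwa [cyclotomicAut_one, one_smul] at hA⟩

lemma exists_prod_smul_eq_pow (hq : q.Coprime (Units.torsionOrder K)) {k : ℕ}
    (hk : (k : ZMod p) ≠ 0) (hk' : (k : ZMod p) + 1 ≠ 0) :
    ∃ J : 𝓞 K, ∏ t ∈ halfSystem p k, σ t⁻¹ • u = J ^ q := by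
  have hu := h.ne_zero hζ
  obtain ⟨A, hA⟩ := h.exists_span_eq_pow hζ
  have hq0 := ne_zero_of_coprime_torsionOrder hq
  have huA : Ideal.span {u} ≤ A := hA ▸ Ideal.pow_le_self hq0
  obtain ⟨J, hJA, hJ⟩ := exists_span_eq_prod_smul (A := A) hζ hk hk'
    (fun hA0 ↦ hu (by simpa [hA0] using huA)) (huA h.sub_mem_span)
    (h.isCoprime_span.of_isCoprime_of_dvd_left (hA ▸ dvd_pow_self A hq0))
  set W := ∏ t ∈ halfSystem p k, σ t⁻¹ • u
  have hJW : Associated (J ^ q) W := by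
    simp_rw [← Ideal.span_singleton_eq_span_singleton, W, ← Ideal.prod_span_singleton,
      ← cyclotomicAut_smul_span, hA, smul_pow', Finset.prod_pow, ← hJA, Ideal.span_singleton_pow]
  have hnorm (φ : K →+* ℂ) : ‖φ ((J ^ q : 𝓞 K) : K)‖ = ‖φ W‖ := by
    have hAu : (Ideal.absNorm A : ℤ) ^ q = |Algebra.norm ℤ u| := by
      rw [← Nat.cast_pow, ← map_pow, ← hA, Ideal.absNorm_span_singleton, Int.natCast_natAbs]
    have hJq : J ^ q * σ (-1) • J ^ q = ((|Algebra.norm ℤ u| : ℤ) : 𝓞 K) := by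
      rw [smul_pow', ← mul_pow, hJ, ← hAu]
      push_cast
      rfl
    rw [← sq_eq_sq₀ (norm_nonneg _) (norm_nonneg _), norm_sq_of_mul_smul_eq hJq,
      norm_sq_of_mul_smul_eq (prod_halfSystem_smul_mul_smul hk hk' u), Int.cast_abs, abs_abs]
  have hJ0 : J ^ q ≠ 0 := by
    rw [Ne, hJW.eq_zero_iff, Finset.prod_eq_zero_iff]
    simpa only [smul_eq_zero_iff_eq, not_exists, not_and] using fun _ _ ↦ hu
  obtain ⟨ε, hε, hJε⟩ := exists_mem_torsion_mul_eq hJW hJ0 hnorm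
  obtain ⟨η, rfl⟩ := exists_pow_eq_of_mem_torsion hq hε
  exact ⟨J * η, by rw [mul_pow, ← hJε, Units.val_pow_eq_pow_val]⟩

end IsCasselsElement

lemma exists_isCasselsElement {p : ℕ} [Fact p.Prime] {K : Type*} [Field K] [NumberField K]
    [IsCyclotomicExtension {p} ℚ K] {ζ : 𝓞 K} (hζ : IsPrimitiveRoot ζ p) (hp : 2 < p) {q : ℕ}
    {x b : ℤ} (hx : (p : ℤ) ∣ x - 1) (hb : ∑ i ∈ Finset.range p, x ^ i = p * b ^ q) :
    ∃ u, IsCasselsElement ζ u x b q := by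
  obtain ⟨c, hc⟩ := hx
  obtain ⟨d, -, hd⟩ := hζ.self_sub_one_pow_dvd_order hp
  have hxc : (x : 𝓞 K) - 1 = p * c := mod_cast congrArg (Int.cast : ℤ → 𝓞 K) hc
  have hu : (1 + (1 - ζ) * d * c) * (1 - ζ) = x - ζ := by
    linear_combination -hxc - c * hd
  refine ⟨1 + (1 - ζ) * d * c, hu, ⟨d * c, by ring⟩, ?_⟩
  have h := congrArg (Algebra.norm ℤ) hu
  rw [map_mul, norm_intCast_sub_zeta hζ, norm_one_sub hζ, hb, mul_comm] at h
  exact mul_left_cancel₀ (NeZero.ne _) h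

section Certificate

lemma prod_zpow_eq_zpow_sum {ι G : Type*} [CommGroup G] (s : Finset ι) (x : G) (f : ι → ℤ) :
    ∏ i ∈ s, x ^ f i = x ^ ∑ i ∈ s, f i := by
  induction s using Finset.cons_induction with
  | empty => simp
  | cons i s hi ih => rw [Finset.prod_cons, Finset.sum_cons, ih, zpow_add]

lemma prod_prod_zpow_eq_prod_zpow_sum {G M : Type*} [Group G] [Fintype G] [CommGroup M]
    (T : Finset G) (U : G → M) (f : G → ℤ) :
    ∏ s, (∏ t ∈ T, U (s * t⁻¹)) ^ f s = ∏ r, U r ^ ∑ t ∈ T, f (r * t) := by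
  simp_rw [← prod_zpow_eq_zpow_sum, ← Finset.prod_zpow]
  rw [Finset.prod_comm, Finset.prod_comm (s := Finset.univ)]
  exact Finset.prod_congr rfl fun t _ ↦ Fintype.prod_equiv (Equiv.mulRight t⁻¹) _ _ (by simp)

/-- The identity `F * θ = m * (1 - [-1])` in the group ring of `(ZMod p)ˣ`, where `θ` is the sum of
the `[t⁻¹]` over `halfSystem p k`. As `θ` turns `u` into a `q`-th power, so does `1 - [-1]`
whenever `q` is prime to `m`. -/
def IsCertificate (p k : ℕ) [NeZero p] (m : ℕ) (F : ZMod p → ℤ) : Prop :=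
  ∀ r : (ZMod p)ˣ, ∑ t ∈ halfSystem p k, F (r * t) =
    if r = 1 then (m : ℤ) else if r = -1 then -m else 0

instance (p k : ℕ) [NeZero p] (m : ℕ) (F : ZMod p → ℤ) : Decidable (IsCertificate p k m F) :=
  inferInstanceAs (Decidable (∀ _, _))

namespace IsCertificate

variable {p k m : ℕ} [NeZero p] {F : ZMod p → ℤ} (hF : IsCertificate p k m F)
  (hp : (-1 : (ZMod p)ˣ) ≠ 1)
include hF hp

lemma prod_prod_zpow {M : Type*} [CommGroup M] (U : (ZMod p)ˣ → M) :
    ∏ s : (ZMod p)ˣ, (∏ t ∈ halfSystem p k, U (s * t⁻¹)) ^ F s = (U 1 / U (-1)) ^ m := by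
  rw [prod_prod_zpow_eq_prod_zpow_sum _ _ fun s : (ZMod p)ˣ ↦ F s]
  simp only [Units.val_mul, hF _]
  rw [Fintype.prod_eq_mul 1 (-1) hp.symm fun r hr ↦ by simp [hr], div_pow]
  simp [hp, div_eq_mul_inv]

lemma exists_pow_eq_div {K : Type*} [Field K] {U J : (ZMod p)ˣ → Kˣ} {q : ℕ}
    (hU : ∀ s, ∏ t ∈ halfSystem p k, U (s * t⁻¹) = J s ^ q) (hm : m.Coprime q) :
    ∃ α : K, α ^ q = (U 1 / U (-1) : Kˣ) := by
  have h : (∏ s, J s ^ F s) ^ q = (U 1 / U (-1)) ^ m := by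
    simp_rw [← hF.prod_prod_zpow hp, ← Finset.prod_pow, hU, ← zpow_natCast, zpow_comm]
  refine (pow_mem_range_pow_of_coprime hm _).1 ⟨((∏ s, J s ^ F s : Kˣ) : K), ?_⟩
  beta_reduce
  rw [← Units.val_pow_eq_pow_val, h, Units.val_pow_eq_pow_val]

end IsCertificate

end Certificate

lemma IsCasselsElement.exists_pow_mul_eq {p : ℕ} [Fact p.Prime] {K : Type*} [Field K]
    [NumberField K] [IsCyclotomicExtension {p} ℚ K] {ζ u : 𝓞 K} (hζ : IsPrimitiveRoot ζ p)
    {x b : ℤ} {q : ℕ} (h : IsCasselsElement ζ u x b q) (hq : q.Coprime (Units.torsionOrder K))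
    {k m : ℕ} {F : ZMod p → ℤ} (hk : (k : ZMod p) ≠ 0) (hk' : (k : ZMod p) + 1 ≠ 0)
    (hp : (-1 : (ZMod p)ˣ) ≠ 1) (hF : IsCertificate p k m F) (hm : m.Coprime q) :
    ∃ α : K, α ^ q * (cyclotomicAut p K (-1) • u : 𝓞 K) = u := by
  obtain ⟨J, hJ⟩ := h.exists_prod_smul_eq_pow hζ hq hk hk'
  have hne {z : 𝓞 K} (hz : z ≠ 0) (a : (ZMod p)ˣ) :
      ((cyclotomicAut p K a • z : 𝓞 K) : K) ≠ 0 := by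
    rwa [RingOfIntegers.coe_ne_zero_iff, smul_ne_zero_iff_ne]
  have hu := h.ne_zero hζ
  have hJ0 : J ≠ 0 := by
    rintro rfl
    rw [zero_pow (ne_zero_of_coprime_torsionOrder hq), Finset.prod_eq_zero_iff] at hJ
    simp [smul_eq_zero_iff_eq, hu] at hJ
  have hU (s : (ZMod p)ˣ) : ∏ t ∈ halfSystem p k, Units.mk0 _ (hne hu (s * t⁻¹)) =
      Units.mk0 _ (hne hJ0 s) ^ q := by
    ext
    simp [Units.coe_prod, ← cyclotomicAut_smul_smul, ← map_prod, ← Finset.smul_prod', hJ,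
      smul_pow']
  obtain ⟨α, hα⟩ := hF.exists_pow_eq_div hp (U := fun a ↦ Units.mk0 _ (hne hu a)) hU hm
  refine ⟨α, ?_⟩
  rw [hα]
  simp [cyclotomicAut_one, div_mul_cancel₀ _ (hne hu _)]

/-! ### Bounds on the conjugates of the root quotient -/

section Integrality

open Polynomial in
lemma isIntegral_of_mul_sub_pow_eq_pow {A B : Type*} [CommRing A] [CommRing B] [Algebra A B]
    {u : A} {γ : B} {q : ℕ} (h : algebraMap A B u * ((γ + 1) ^ q - γ ^ q) = γ ^ q) :
    IsIntegral A γ := by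
  refine ⟨X ^ q - ∑ i : Fin q, C (u * q.choose i) * X ^ (i : ℕ),
    monic_X_pow_sub (degree_sum_fin_lt fun i : Fin q ↦ u * q.choose i), ?_⟩
  rw [Fin.sum_univ_eq_sum_range fun i ↦ C (u * q.choose i) * X ^ i]
  simp only [eval₂_sub, eval₂_X_pow, eval₂_finsetSum, eval₂_mul, eval₂_C, map_mul, map_natCast]
  rw [← h, add_pow, Finset.sum_range_succ]
  simp [Finset.mul_sum, mul_assoc, mul_comm]

lemma isUnit_add_one_pow_sub_pow_of_dvd {R : Type*} [CommRing R] {g : R} {q : ℕ}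
    (h : (g + 1) ^ q - g ^ q ∣ g ^ q) : IsUnit ((g + 1) ^ q - g ^ q) := by
  have hg : IsCoprime (g + 1) g := ⟨1, -1, by ring⟩
  have hpow : IsCoprime ((g + 1) ^ q - g ^ q) (g ^ q) := by
    simpa [sub_eq_add_neg] using (hg.pow (m := q) (n := q)).add_mul_right_left (-1)
  exact hpow.isUnit_of_dvd' dvd_rfl h

/- Since `α ^ q = 1 + 1 / u` is close to `1` when `u` is large, so is some conjugate of `α`;
passing to `g = 1 / (α - 1)` turns this into an algebraic integer with a large conjugate. -/
lemma exists_mul_add_one_pow_eq {K : Type*} [Field K] [NumberField K] {u : 𝓞 K} {α : K} {q : ℕ}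
    (h : α ^ q * u = u + 1) :
    ∃ g : 𝓞 K, u * (g + 1) ^ q = (u + 1) * g ^ q ∧ Associated (g ^ q) u := by
  have hα : α - 1 ≠ 0 := by
    intro h0
    simp [sub_eq_zero.1 h0] at h
  set γ := (α - 1)⁻¹ with hγ
  have hγα : γ + 1 = γ * α := by
    rw [hγ]
    field_simp
    ring
  have hγq : (u : K) * ((γ + 1) ^ q - γ ^ q) = γ ^ q := by
    rw [hγα, mul_pow]
    linear_combination γ ^ q * h
  obtain ⟨g, hg⟩ : ∃ g : 𝓞 K, (g : K) = γ :=
    ⟨⟨γ, isIntegral_trans (R := ℤ) (A := 𝓞 K) γ (isIntegral_of_mul_sub_pow_eq_pow hγq)⟩, rfl⟩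
  have hgq : u * ((g + 1) ^ q - g ^ q) = g ^ q := by
    apply RingOfIntegers.ext
    simpa [hg] using hγq
  refine ⟨g, by linear_combination hgq, ?_⟩
  rw [← hgq]
  exact associated_mul_unit_left _ _
    (isUnit_add_one_pow_sub_pow_of_dvd (Dvd.intro_left u hgq))

end Integrality

lemma eq_of_pow_eq_pow_of_coprime_card_sub_one {F : Type*} [Field F] {a b : F} {q : ℕ}
    (hq : q.Coprime (Nat.card F - 1)) (hb : b ≠ 0) (hq0 : q ≠ 0) (h : a ^ q = b ^ q) : a = b := by
  have ha : a ≠ 0 := by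
    rintro rfl
    exact pow_ne_zero q hb (by rw [← h, zero_pow hq0])
  rw [← Nat.card_units] at hq
  have hunits : Units.mk0 a ha = Units.mk0 b hb :=
    hq.symm.pow_left_bijective.injective (Units.ext h)
  exact congrArg Units.val hunits

section Cyclotomic

variable {p : ℕ} [Fact p.Prime] {K : Type*} [Field K] [NumberField K]
  [IsCyclotomicExtension {p} ℚ K]

local notation "σ" => cyclotomicAut p K

variable {ζ : 𝓞 K} (hζ : IsPrimitiveRoot ζ p)
include hζ

lemma one_sub_dvd_prime : 1 - ζ ∣ (p : 𝓞 K) := by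
  have hζK : IsPrimitiveRoot (ζ : K) p := hζ.map_of_injective RingOfIntegers.coe_injective
  rw [← neg_sub, neg_dvd]
  exact hζK.toInteger_sub_one_dvd_prime'

lemma isCoprime_prime_of_not_one_sub_dvd {z : 𝓞 K} (hz : ¬ 1 - ζ ∣ z) : IsCoprime (p : 𝓞 K) z := by
  have hζK : IsPrimitiveRoot (ζ : K) p := hζ.map_of_injective RingOfIntegers.coe_injective
  rw [← neg_sub, neg_dvd] at hz
  exact IsCyclotomicExtension.Rat.isCoprime_of_not_zeta_sub_one_dvd p hζK hz

lemma card_quotient_span_one_sub : Nat.card (𝓞 K ⧸ Ideal.span {1 - ζ}) = p := by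
  rw [← Submodule.cardQuot_apply, ← Ideal.absNorm_apply, Ideal.absNorm_span_singleton,
    norm_one_sub hζ, Int.natAbs_natCast]

lemma pow_dvd_sub_of_pow_dvd_pow_sub_pow {q n : ℕ} (hq : q.Coprime p) (hq' : q.Coprime (p - 1))
    (hn : n ≠ 0) {β g : 𝓞 K} (hg : ¬ 1 - ζ ∣ g) (h : (p : 𝓞 K) ^ n ∣ β ^ q - g ^ q) :
    (p : 𝓞 K) ^ n ∣ β - g := by
  have hpF := card_quotient_span_one_sub hζ
  set P : Ideal (𝓞 K) := Ideal.span {1 - ζ}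
  have hP : P.IsMaximal := ((Ideal.span_singleton_prime (prime_one_sub hζ).ne_zero).2
    (prime_one_sub hζ)).isMaximal (by simpa using (prime_one_sub hζ).ne_zero)
  let : Field (𝓞 K ⧸ P) := Ideal.Quotient.field P
  have hmk (z : 𝓞 K) : Ideal.Quotient.mk P z = 0 ↔ 1 - ζ ∣ z := by
    rw [Ideal.Quotient.eq_zero_iff_mem, Ideal.mem_span_singleton]
  have hpq : (1 - ζ) ∣ (p : 𝓞 K) ^ n := (one_sub_dvd_prime hζ).trans (dvd_pow_self _ hn)
  have hq0 : q ≠ 0 := by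
    rintro rfl
    exact (Fact.out : p.Prime).ne_one (Nat.coprime_zero_left p |>.1 hq)
  have hβg : Ideal.Quotient.mk P β = Ideal.Quotient.mk P g := by
    refine eq_of_pow_eq_pow_of_coprime_card_sub_one (by rwa [hpF]) (mt (hmk g).1 hg) hq0 ?_
    rw [← sub_eq_zero, ← map_pow, ← map_pow, ← map_sub, hmk]
    exact hpq.trans h
  have hsum : ¬ 1 - ζ ∣ ∑ i ∈ Finset.range q, β ^ i * g ^ (q - 1 - i) := by
    rw [← hmk, map_sum]
    simp only [map_mul, map_pow, hβg, geom_sum₂_self]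
    refine mul_ne_zero ?_ (pow_ne_zero _ (mt (hmk g).1 hg))
    rw [← map_natCast (Ideal.Quotient.mk P), Ne, hmk]
    intro hdvd
    have hcop : IsCoprime (q : 𝓞 K) (p : 𝓞 K) := by
      simpa using (Nat.isCoprime_iff_coprime.2 hq).map (Int.castRingHom (𝓞 K))
    exact (prime_one_sub hζ).not_isUnit (hcop.isUnit_of_dvd' hdvd (one_sub_dvd_prime hζ))
  rw [← geom_sum₂_mul] at h
  exact (isCoprime_prime_of_not_one_sub_dvd hζ hsum).pow_left.dvd_of_dvd_mul_left h

omit [IsCyclotomicExtension {p} ℚ K] in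
lemma exists_pow_eq_neg {q : ℕ} (hq : q.Coprime (Units.torsionOrder K)) :
    ∃ η : 𝓞 K, η ^ q = -ζ := by
  obtain ⟨ε, rfl⟩ := hζ.isUnit (NeZero.ne p)
  have hε : -ε ∈ Units.torsion K := by
    refine isOfFinOrder_iff_pow_eq_one.2 ⟨2 * p, Nat.mul_pos two_pos (NeZero.pos p), ?_⟩
    ext
    simp [pow_mul, pow_right_comm _ 2, hζ.pow_eq_one]
  obtain ⟨η, hη⟩ := exists_pow_eq_of_mem_torsion hq hε
  exact ⟨η, by simpa using congrArg Units.val hη⟩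

end Cyclotomic

section Embeddings

variable {K : Type*} [Field K] [NumberField K]

lemma one_le_prod_norm_embeddings {z : 𝓞 K} (hz : z ≠ 0) : 1 ≤ ∏ φ : K →+* ℂ, ‖φ (z : K)‖ := by
  rw [← abs_norm_eq_prod_norm_embeddings]
  exact_mod_cast Int.one_le_abs (Algebra.norm_ne_zero_iff.2 hz)

lemma exists_le_norm_embedding_of_dvd {n : ℕ} {w : 𝓞 K} (hw : w ≠ 0) (h : (n : 𝓞 K) ∣ w) :
    ∃ φ : K →+* ℂ, n ≤ ‖φ w‖ := by
  obtain ⟨v, rfl⟩ := h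
  have hv := right_ne_zero_of_mul hw
  obtain ⟨φ, hφ⟩ : ∃ φ : K →+* ℂ, 1 ≤ ‖φ v‖ := by
    by_contra! hlt
    refine (one_le_prod_norm_embeddings hv).not_gt ?_
    have hpos (φ : K →+* ℂ) : 0 < ‖φ v‖ := by simpa using hv
    exact (Finset.prod_lt_prod_of_nonempty (fun φ _ ↦ hpos φ) (fun φ _ ↦ hlt φ)
      Finset.univ_nonempty).trans_eq (by simp)
  exact ⟨φ, by simpa using le_mul_of_one_le_right n.cast_nonneg hφ⟩

lemma sq_le_pow_finrank_mul_abs_norm {c : ℝ} {z : 𝓞 K} (h : ∀ ψ : K →+* ℂ, 1 ≤ c * ‖ψ z‖)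
    {φ : K →+* ℂ} (hφ : ¬ ComplexEmbedding.IsReal φ) :
    (c * ‖φ z‖) ^ 2 ≤ c ^ Module.finrank ℚ K * |((Algebra.norm ℤ z : ℤ) : ℝ)| := by
  classical
  have hconj : φ ≠ ComplexEmbedding.conjugate φ := fun heq ↦ hφ heq.symm
  have hpair : ∏ ψ ∈ {φ, ComplexEmbedding.conjugate φ}, (c * ‖ψ z‖) = (c * ‖φ z‖) ^ 2 := by
    rw [Finset.prod_pair hconj, ComplexEmbedding.conjugate_coe_eq, RCLike.norm_conj, pow_two]
  rw [abs_norm_eq_prod_norm_embeddings, ← Embeddings.card K ℂ, ← Finset.card_univ,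
    ← Finset.prod_const, ← Finset.prod_mul_distrib, ← hpair]
  exact Finset.prod_le_prod_of_subset_of_one_le (Finset.subset_univ _)
    (fun ψ _ ↦ zero_le_one.trans (h ψ)) fun ψ _ _ ↦ h ψ

omit [NumberField K] in
lemma norm_embedding_eq_one_of_pow_eq_one {n : ℕ} (hn : n ≠ 0) {z : 𝓞 K} (hz : z ^ n = 1)
    (φ : K →+* ℂ) : ‖φ z‖ = 1 :=
  Complex.norm_eq_one_of_pow_eq_one
    (by simpa using congrArg (fun w : 𝓞 K ↦ φ (w : K)) hz) hn

end Embeddings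

lemma half_le_norm_geom_sum {q : ℕ} {a : ℂ} (ha : ‖a‖ = 1) (h : q * ‖a - 1‖ ≤ 1) :
    (q : ℝ) / 2 ≤ ‖∑ j ∈ Finset.range q, a ^ j‖ := by
  have hterm (j : ℕ) : ‖a ^ j - 1‖ ≤ j * ‖a - 1‖ := by
    rw [← geom_sum_mul, norm_mul]
    gcongr
    exact (norm_sum_le _ _).trans_eq (by simp [ha])
  have hsum : ‖∑ j ∈ Finset.range q, (1 - a ^ j)‖ ≤ q / 2 := by
    calc ‖∑ j ∈ Finset.range q, (1 - a ^ j)‖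
        ≤ ∑ j ∈ Finset.range q, (j : ℝ) * ‖a - 1‖ :=
          norm_sum_le_of_le _ fun j _ ↦ by rw [norm_sub_rev]; exact hterm j
      _ = ((∑ j ∈ Finset.range q, j) * 2 : ℕ) * ‖a - 1‖ / 2 := by
          rw [← Finset.sum_mul]
          push_cast
          ring
      _ = (q - 1 : ℕ) * (q * ‖a - 1‖) / 2 := by
          rw [Finset.sum_range_id_mul_two]
          push_cast
          ring
      _ ≤ q * 1 / 2 := by gcongr; omega
      _ = q / 2 := by rw [mul_one]
  have htri := norm_sub_norm_le (q : ℂ) (∑ j ∈ Finset.range q, (1 - a ^ j))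
  rw [Complex.norm_natCast] at htri
  have heq : (q : ℂ) - ∑ j ∈ Finset.range q, (1 - a ^ j) = ∑ j ∈ Finset.range q, a ^ j := by simp
  rw [heq] at htri
  linarith

lemma sub_mul_eq_sub_mul_geom_sum {F : Type*} [Field F] {q : ℕ} {x y z G : F} (hG : G ≠ 0)
    (h : (x - y) * (G + 1) ^ q = (x - z) * G ^ q) :
    (y - z) * G = (x - y) * ∑ j ∈ Finset.range q, ((G + 1) / G) ^ j := by
  have hsub : ((G + 1) / G - 1) * G = 1 := by
    field_simp
    ring
  have hpow : (x - y) * (((G + 1) / G) ^ q - 1) = y - z := by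
    rw [div_pow]
    field_simp
    linear_combination h
  rw [← hpow, ← geom_sum_mul]
  linear_combination (x - y) * (∑ j ∈ Finset.range q, ((G + 1) / G) ^ j) * hsub

lemma mul_sub_one_div_four_le_norm {q : ℕ} {x z G : ℂ} (hz : ‖z‖ = 1) (hG : ‖G + 1‖ = ‖G‖)
    (hqG : q ≤ ‖G‖)
    (h : (x - (starRingEnd ℂ) z) * (G + 1) ^ q = (x - z) * G ^ q) :
    q * (‖x‖ - 1) / 4 ≤ ‖G‖ := by
  have hG0 : G ≠ 0 := by
    rintro rfl
    simp at hG
  set a := (G + 1) / G with ha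
  have ha1 : ‖a‖ = 1 := by rw [ha, norm_div, hG, div_self (norm_ne_zero_iff.2 hG0)]
  have haG : (a - 1) * G = 1 := by
    rw [ha]
    field_simp
    ring
  have hsum : (q : ℝ) / 2 ≤ ‖∑ j ∈ Finset.range q, a ^ j‖ := by
    refine half_le_norm_geom_sum ha1 ?_
    rw [eq_one_div_of_mul_eq_one_left haG, norm_div, norm_one, mul_one_div]
    exact div_le_one_of_le₀ hqG (norm_nonneg G)
  have hconj : ‖(starRingEnd ℂ) z‖ = 1 := by rw [RCLike.norm_conj, hz]
  have hle : ‖x‖ - 1 ≤ ‖x - (starRingEnd ℂ) z‖ := by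
    simpa [hconj, hz] using norm_sub_norm_le x ((starRingEnd ℂ) z)
  have htwo : ‖(starRingEnd ℂ) z - z‖ ≤ 2 :=
    (norm_sub_le _ _).trans_eq (by rw [hconj, hz, one_add_one_eq_two])
  have hnorm := congrArg norm (sub_mul_eq_sub_mul_geom_sum hG0 h)
  rw [norm_mul, norm_mul] at hnorm
  have hlower : (‖x‖ - 1) * (q / 2) ≤ 2 * ‖G‖ :=
    calc (‖x‖ - 1) * (q / 2) ≤ ‖x - (starRingEnd ℂ) z‖ * ‖∑ j ∈ Finset.range q, a ^ j‖ := by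
          gcongr
      _ = ‖(starRingEnd ℂ) z - z‖ * ‖G‖ := hnorm.symm
      _ ≤ 2 * ‖G‖ := by gcongr
  linarith

lemma two_mul_lt_three_pow {q : ℕ} (hq : 5 ≤ q) : 2 * q < 3 ^ (q - 2) := by
  induction q, hq using Nat.le_induction with
  | base => norm_num
  | succ n hn ih =>
    rw [Nat.sub_add_comm (by omega), pow_succ]
    omega

lemma isUnit_one_add_of_odd {R : Type*} [CommRing R] [IsDomain R] {ζ : R} {n : ℕ}
    (hζ : IsPrimitiveRoot ζ n) (hn : Odd n) (hn1 : 1 < n) : IsUnit (1 + ζ) := by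
  simpa [Finset.sum_range_succ] using hζ.geom_sum_isUnit hn1 (Nat.coprime_two_left.2 hn)

namespace IsCasselsElement

variable {p : ℕ} [Fact p.Prime] {K : Type*} [Field K] [NumberField K]
  [IsCyclotomicExtension {p} ℚ K] {ζ u g : 𝓞 K} {x b : ℤ} {q : ℕ}

local notation "σ" => cyclotomicAut p K

section Conjugate

variable (h : IsCasselsElement ζ u x b q)
include h

lemma smul_mul_one_sub_smul : σ (-1) • u * (1 - σ (-1) • ζ) = x - σ (-1) • ζ := by
  simpa only [smul_mul', smul_sub, smul_one, galois_smul_intCast] using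
    congrArg (σ (-1) • ·) h.mul_one_sub_zeta

variable (hζ : IsPrimitiveRoot ζ p)
include hζ

lemma exists_root_quotient (hp : Odd p) (hq : q.Coprime (Units.torsionOrder K)) {α : K}
    (hα : α ^ q * (σ (-1) • u : 𝓞 K) = u) :
    ∃ g : 𝓞 K, (x - σ (-1) • ζ) * (g + 1) ^ q = (x - ζ) * g ^ q ∧
      Associated (g ^ q) (σ (-1) • u) := by
  obtain ⟨v, hv⟩ := (isUnit_one_add_of_odd hζ hp (Fact.out : p.Prime).one_lt).exists_right_inv
  obtain ⟨η, hη⟩ := exists_pow_eq_neg hζ hq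
  have hζζ := cyclotomicAut_neg_one_smul_of_pow_eq_one (K := K) p hζ.pow_eq_one
  have hconj := h.smul_mul_one_sub_smul (p := p)
  have hu := h.mul_one_sub_zeta
  set ζ' := σ (-1) • ζ
  set u' := σ (-1) • u
  have hw : -u' * v * (ζ' - ζ) = x - ζ' := by
    linear_combination hconj + u' * (1 - ζ') * hv + u' * v * hζζ
  have hw1 : -u' * v + 1 = ζ * u * v := by
    have hζ1 : 1 - ζ ≠ 0 := (prime_one_sub hζ).ne_zero
    refine mul_right_cancel₀ (mul_ne_zero hζ1 (left_ne_zero_of_mul_eq_one hv)) ?_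
    linear_combination (-u' * (1 - ζ) - ζ * u * (1 - ζ)) * hv + hconj * ζ - ζ * hu + (u' - 1) * hζζ
  have hpow : ((η : K) * α) ^ q * (-u' * v : 𝓞 K) = (-u' * v : 𝓞 K) + 1 := by
    have hηK : (η : K) ^ q = -ζ := by simpa using congrArg (algebraMap (𝓞 K) K) hη
    have hwK : ((-u' * v : 𝓞 K) : K) + 1 = ζ * u * v := by
      simpa using congrArg (algebraMap (𝓞 K) K) hw1
    rw [hwK, mul_pow, hηK]
    push_cast
    linear_combination (ζ : K) * v * hα
  obtain ⟨g, hg, hgu⟩ := exists_mul_add_one_pow_eq hpow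
  refine ⟨g, by linear_combination (ζ' - ζ) * hg - ((g + 1) ^ q - g ^ q) * hw, hgu.trans ?_⟩
  exact (associated_mul_unit_left _ _ (.of_mul_eq_one_right _ hv)).trans (.neg_left (.refl _))

lemma not_one_sub_dvd_smul : ¬ 1 - ζ ∣ σ (-1) • u := by
  intro hdvd
  have hsub : 1 - ζ ∣ σ (-1) • u - 1 := by
    refine (associated_one_sub_cyclotomicAut_smul hζ (-1)).dvd.trans ?_
    simpa [smul_sub] using galois_smul_dvd_smul (σ (-1)) h.one_sub_zeta_dvd
  exact (prime_one_sub hζ).not_dvd_one ((dvd_sub_right hdvd).1 hsub |>.trans (by simp))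

/- Multiplying `(g + 1) ^ q` by `-ζ⁻¹` makes it congruent to `g ^ q` modulo `x - 1`, which is highly
divisible by `p`. -/
lemma associated_mul_pow_sub_pow (hp : Odd p)
    (hg : (x - σ (-1) • ζ) * (g + 1) ^ q = (x - ζ) * g ^ q)
    (hgu : Associated (g ^ q) (σ (-1) • u)) {ρ : 𝓞 K} (hρ : ρ ^ q = -(σ (-1) • ζ)) :
    Associated ((1 - ζ) * ((ρ * (g + 1)) ^ q - g ^ q)) (x - 1) := by
  have hunit : IsUnit (σ (-1) • (1 + ζ)) :=
    (isUnit_one_add_of_odd hζ hp (Fact.out : p.Prime).one_lt).map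
      (MulSemiringAction.toRingEquiv _ (𝓞 K) (σ (-1)))
  rw [smul_add, smul_one] at hunit
  have hζζ := cyclotomicAut_neg_one_smul_of_pow_eq_one (K := K) p hζ.pow_eq_one
  have hconj := h.smul_mul_one_sub_smul (p := p)
  have hassoc := associated_one_sub_cyclotomicAut_smul hζ (-1)
  rw [smul_sub, smul_one] at hassoc
  have hu0 : σ (-1) • u ≠ 0 := (smul_ne_zero_iff_ne _).2 (h.ne_zero hζ)
  have hg0 : g ^ q ≠ 0 := fun h0 ↦ hu0 (hgu.eq_zero_iff.1 h0)
  obtain ⟨ε, hε⟩ := hgu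
  set ζ' := σ (-1) • ζ
  have heq : (1 - ζ') * ((ρ * (g + 1)) ^ q - g ^ q) * ε = -((1 + ζ') * (x - 1)) := by
    refine mul_left_cancel₀ hg0 ?_
    rw [mul_pow, hρ]
    linear_combination (1 - ζ') * (-ζ' * (g + 1) ^ q - g ^ q) * hε +
      (-ζ' * (g + 1) ^ q - g ^ q) * hconj - ζ' * hg + g ^ q * hζζ
  have hε' := associated_mul_unit_left ((1 - ζ') * ((ρ * (g + 1)) ^ q - g ^ q)) _ ε.isUnit
  rw [heq] at hε'
  exact (hassoc.mul_right _).trans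
    (hε'.symm.trans (associated_unit_mul_left (x - 1 : 𝓞 K) _ hunit).neg_left)

lemma pow_dvd_mul_add_one_sub (hp : Odd p) (hq : q.Coprime p) (hq' : q.Coprime (p - 1))
    (hg : (x - σ (-1) • ζ) * (g + 1) ^ q = (x - ζ) * g ^ q)
    (hgu : Associated (g ^ q) (σ (-1) • u)) {ρ : 𝓞 K} (hρ : ρ ^ q = -(σ (-1) • ζ)) {n : ℕ}
    (hn : n ≠ 0) (hx : (p : ℤ) ^ (n + 1) ∣ x - 1) : (p : 𝓞 K) ^ n ∣ ρ * (g + 1) - g := by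
  have hq0 : q ≠ 0 := by
    rintro rfl
    exact (Fact.out : p.Prime).ne_one ((Nat.coprime_zero_left p).1 hq)
  have hgζ : ¬ 1 - ζ ∣ g := fun hdvd ↦
    h.not_one_sub_dvd_smul hζ ((hdvd.trans (dvd_pow_self g hq0)).trans hgu.dvd)
  refine pow_dvd_sub_of_pow_dvd_pow_sub_pow hζ hq hq' hn hgζ ?_
  have hdvd : (p : 𝓞 K) ^ (n + 1) ∣ (1 - ζ) * ((ρ * (g + 1)) ^ q - g ^ q) :=
    (by exact_mod_cast Int.cast_dvd_cast (α := 𝓞 K) _ _ hx : (p : 𝓞 K) ^ (n + 1) ∣ x - 1).trans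
      (h.associated_mul_pow_sub_pow hζ hp hg hgu hρ).dvd'
  obtain ⟨w, hw⟩ := one_sub_dvd_prime hζ
  rw [pow_succ', hw, mul_assoc, ← hw] at hdvd
  exact (dvd_mul_left _ _).trans ((mul_dvd_mul_iff_left (prime_one_sub hζ).ne_zero).1 hdvd)

lemma mul_add_one_sub_ne_zero (hp : Odd p) (hx : x ≠ 1)
    (hg : (x - σ (-1) • ζ) * (g + 1) ^ q = (x - ζ) * g ^ q)
    (hgu : Associated (g ^ q) (σ (-1) • u)) {ρ : 𝓞 K} (hρ : ρ ^ q = -(σ (-1) • ζ)) :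
    ρ * (g + 1) - g ≠ 0 := by
  intro h0
  have hassoc := h.associated_mul_pow_sub_pow hζ hp hg hgu hρ
  rw [sub_eq_zero.1 h0, sub_self, mul_zero] at hassoc
  have hx1 : (x : 𝓞 K) = 1 := sub_eq_zero.1 (hassoc.eq_zero_iff.1 rfl)
  exact hx (by exact_mod_cast hx1)

end Conjugate

end IsCasselsElement

lemma le_of_pow_mul_le_pow {p q : ℕ} (hp : p < q) {X Y N : ℝ} (hX : 1 ≤ X)
    (hN : 1 ≤ N) (h : Y ^ q * N ≤ X ^ p) : Y ≤ X := by
  refine le_of_not_gt fun hlt ↦ ?_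
  have : X ^ p < Y ^ q :=
    (pow_le_pow_right₀ hX hp.le).trans_lt (pow_lt_pow_left₀ hlt (zero_le_one.trans hX) (by omega))
  nlinarith [pow_pos ((zero_lt_one.trans_le hX).trans hlt) q]

/- With `c = 2 ‖φ g‖`, a lower bound for `c` is `q (X - 1) / 2` and an upper one for `c²` is
`2 ^ (p - 1) (X + 1)`. -/
lemma two_pow_mul_lt_sq {p q : ℕ} (hp : 3 ≤ p) (hq : 5 ≤ q) {X c : ℝ} (hX : 3 ^ p - 1 ≤ X)
    (hc : q * (X - 1) / 2 ≤ c) : 2 ^ (p - 1) * (X + 1) < c ^ 2 := by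
  have h2 : (2 : ℝ) ^ (p - 1) * 2 = 2 ^ p := by rw [← pow_succ, Nat.sub_add_cancel (by omega)]
  have h23 : (2 : ℝ) ^ p ≤ 3 ^ p := by gcongr; norm_num
  have h3 : (3 : ℝ) ^ 3 ≤ 3 ^ p := by gcongr; norm_num
  have hqR : (5 : ℝ) ≤ q := by exact_mod_cast hq
  have hlow : 5 * (X - 1) / 2 ≤ c := by nlinarith
  nlinarith

lemma three_pow_sub_one_le_abs {p q : ℕ} (hp : 3 ≤ p) (hpq : p < q) {x : ℤ} (hx : x ≠ 1)
    (hpx : (p : ℤ) ^ (q - 1) ∣ x - 1) : (3 : ℝ) ^ p - 1 ≤ |(x : ℝ)| := by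
  have hle : (p : ℤ) ^ (q - 1) ≤ |x - 1| :=
    Int.le_of_dvd (abs_pos.2 (sub_ne_zero.2 hx)) ((dvd_abs _ _).2 hpx)
  have h3 : (3 : ℝ) ^ p ≤ p ^ (q - 1) :=
    (pow_le_pow_left₀ zero_le_three (by exact_mod_cast hp) p).trans
      (pow_le_pow_right₀ (by exact_mod_cast (by omega : 1 ≤ p)) (by omega))
  have hleR : (p : ℝ) ^ (q - 1) ≤ |(x : ℝ) - 1| := by exact_mod_cast hle
  have := abs_sub (x : ℝ) 1
  rw [abs_one] at this
  linarith

namespace IsCasselsElement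

variable {p : ℕ} [Fact p.Prime] {K : Type*} [Field K] [NumberField K]
  [IsCyclotomicExtension {p} ℚ K] {ζ u g : 𝓞 K} {x b : ℤ} {q : ℕ}

local notation "σ" => cyclotomicAut p K

lemma map_root_quotient (hg : (x - σ (-1) • ζ) * (g + 1) ^ q = (x - ζ) * g ^ q) (φ : K →+* ℂ) :
    ((x : ℂ) - (starRingEnd ℂ) (φ ζ)) * (φ g + 1) ^ q = (x - φ ζ) * φ g ^ q := by
  rw [← embedding_cyclotomicAut_neg_one_smul p φ]
  simpa using congrArg (fun z : 𝓞 K ↦ φ z) hg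

section Embeddings

variable (h : IsCasselsElement ζ u x b q) (hζ : IsPrimitiveRoot ζ p)
include h hζ

lemma abs_le_abs_add_one (hpq : p < q) : |(b : ℝ)| ≤ |(x : ℝ)| + 1 := by
  have hp := (Fact.out : p.Prime)
  have hnorm := congrArg (fun z ↦ |((Algebra.norm ℤ z : ℤ) : ℝ)|) h.mul_one_sub_zeta
  beta_reduce at hnorm
  rw [map_mul, h.norm_eq, norm_one_sub hζ, Int.cast_mul, abs_mul, Int.cast_natCast,
    Nat.abs_cast, Int.cast_pow, abs_pow, abs_norm_eq_prod_norm_embeddings] at hnorm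
  have hle : ∏ φ : K →+* ℂ, ‖φ (x - ζ : 𝓞 K)‖ ≤ (|(x : ℝ)| + 1) ^ (p - 1) := by
    rw [← finrank_cyclotomicField_eq p (K := K), ← Embeddings.card K ℂ]
    refine (Finset.prod_le_prod (fun φ _ ↦ norm_nonneg _) fun φ _ ↦ ?_).trans_eq
      (Finset.prod_const _)
    have := norm_sub_le (x : ℂ) (φ ζ)
    rw [norm_embedding_eq_one_of_pow_eq_one hp.ne_zero hζ.pow_eq_one] at this
    simpa using this
  exact le_of_pow_mul_le_pow (p := p - 1) (by omega) (by linarith [abs_nonneg (x : ℝ)])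
    (by exact_mod_cast hp.one_le) (hnorm.trans_le hle)

lemma norm_map_add_one_eq (hg : (x - σ (-1) • ζ) * (g + 1) ^ q = (x - ζ) * g ^ q)
    (φ : K →+* ℂ) (hq : q ≠ 0) : ‖φ g + 1‖ = ‖φ g‖ := by
  have hne : (x : ℂ) - φ ζ ≠ 0 := by
    have h0 : (x : 𝓞 K) - ζ ≠ 0 := by
      rw [← h.mul_one_sub_zeta]
      exact mul_ne_zero (h.ne_zero hζ) (prime_one_sub hζ).ne_zero
    have := (map_ne_zero φ).2 (RingOfIntegers.coe_ne_zero_iff.2 h0)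
    rwa [map_sub, map_intCast, map_sub, map_intCast] at this
  have hnorm := congrArg norm (map_root_quotient hg φ)
  have hconj : (x : ℂ) - (starRingEnd ℂ) (φ ζ) = (starRingEnd ℂ) (x - φ ζ) := by simp
  rw [norm_mul, norm_mul, hconj, RCLike.norm_conj, norm_pow, norm_pow] at hnorm
  exact (pow_left_inj₀ (norm_nonneg _) (norm_nonneg _) hq).1
    (mul_left_cancel₀ (norm_ne_zero_iff.2 hne) hnorm)

lemma one_le_two_mul_norm_map (hg : (x - σ (-1) • ζ) * (g + 1) ^ q = (x - ζ) * g ^ q)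
    (φ : K →+* ℂ) (hq : q ≠ 0) : 1 ≤ 2 * ‖φ g‖ := by
  have := norm_sub_le (φ g + 1) (φ g)
  rw [h.norm_map_add_one_eq hζ hg φ hq, add_sub_cancel_left, norm_one] at this
  linarith

end Embeddings

variable (h : IsCasselsElement ζ u x b q)
include h

lemma abs_norm_eq_of_associated (hq : q ≠ 0) (hgu : Associated (g ^ q) (σ (-1) • u)) :
    |Algebra.norm ℤ g| = |b| := by
  have hass := hgu.map (Algebra.norm ℤ)
  rw [norm_galois_smul, h.norm_eq, map_pow] at hass
  rw [← pow_left_inj₀ (abs_nonneg _) (abs_nonneg _) hq, ← abs_pow, ← abs_pow]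
  rw [Int.abs_eq_natAbs, Int.abs_eq_natAbs, Int.natAbs_eq_iff_associated.2 hass]

variable (hζ : IsPrimitiveRoot ζ p)
include hζ

lemma exists_lt_norm_map (hp : Odd p) (hpq : p < q) (hq : q.Prime)
    (hqt : q.Coprime (Units.torsionOrder K)) (hx : x ≠ 1) (hpx : (p : ℤ) ^ (q - 1) ∣ x - 1)
    (hg : (x - σ (-1) • ζ) * (g + 1) ^ q = (x - ζ) * g ^ q)
    (hgu : Associated (g ^ q) (σ (-1) • u)) : ∃ φ : K →+* ℂ, q < ‖φ g‖ := by
  have hp3 : 3 ≤ p := two_lt_of_prime_of_odd Fact.out hp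
  obtain ⟨η, hη⟩ := exists_pow_eq_neg hζ hqt
  have hρ : (σ (-1) • η) ^ q = -(σ (-1) • ζ) := by rw [← smul_pow', hη, smul_neg]
  have hcop {n : ℕ} (hn : n ≠ 0) (hnq : n < q) : q.Coprime n :=
    Nat.coprime_of_lt_prime hn hnq hq
  have hdvd := h.pow_dvd_mul_add_one_sub hζ hp (hcop (by omega) hpq) (hcop (by omega) (by omega))
    hg hgu hρ (n := q - 2) (by omega) (by rwa [show q - 2 + 1 = q - 1 by omega])
  obtain ⟨φ, hφ⟩ := exists_le_norm_embedding_of_dvd (h.mul_add_one_sub_ne_zero hζ hp hx hg hgu hρ)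
    (by exact_mod_cast hdvd)
  refine ⟨φ, ?_⟩
  have hρ1 : ‖φ (σ (-1) • η : 𝓞 K)‖ = 1 := by
    refine norm_embedding_eq_one_of_pow_eq_one (n := q * (2 * p)) ?_ ?_ φ
    · exact mul_ne_zero hq.ne_zero (by omega)
    rw [pow_mul, hρ, pow_mul, neg_sq, ← pow_mul, mul_comm 2, pow_mul, ← smul_pow', hζ.pow_eq_one,
      smul_one, one_pow]
  have hle : ‖φ ((σ (-1) • η) * (g + 1) - g : 𝓞 K)‖ ≤ 2 * ‖φ g‖ := by
    have := norm_sub_le (φ (σ (-1) • η : 𝓞 K) * (φ g + 1)) (φ g)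
    rw [norm_mul, hρ1, h.norm_map_add_one_eq hζ hg φ (by omega)] at this
    simpa [two_mul] using this
  have hlt : 2 * q < p ^ (q - 2) :=
    (two_mul_lt_three_pow (hq.five_le_of_ne_two_of_ne_three (by omega) (by omega))).trans_le
      (Nat.pow_le_pow_left hp3 _)
  have hltR : (2 * q : ℝ) < (p ^ (q - 2) : ℕ) := by exact_mod_cast hlt
  linarith

lemma not_exists_pow_mul_eq (hp : Odd p) (hpq : p < q) (hq : q.Prime) (hx : x ≠ 1)
    (hpx : (p : ℤ) ^ (q - 1) ∣ x - 1) : ¬ ∃ α : K, α ^ q * (σ (-1) • u : 𝓞 K) = u := by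
  rintro ⟨α, hα⟩
  have hp3 : 3 ≤ p := two_lt_of_prime_of_odd Fact.out hp
  have hqt : q.Coprime (Units.torsionOrder K) :=
    coprime_torsionOrder hp hq (hq.odd_of_ne_two (by omega)) hpq.ne
  obtain ⟨g, hg, hgu⟩ := h.exists_root_quotient hζ hp hqt hα
  obtain ⟨φ, hφ⟩ := h.exists_lt_norm_map hζ hp hpq hq hqt hx hpx hg hgu
  have hlow := mul_sub_one_div_four_le_norm
    (norm_embedding_eq_one_of_pow_eq_one (Fact.out : p.Prime).ne_zero hζ.pow_eq_one φ)
    (h.norm_map_add_one_eq hζ hg φ (by omega)) hφ.le (map_root_quotient hg φ)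
  rw [Complex.norm_intCast] at hlow
  have hreal : ¬ ComplexEmbedding.IsReal φ := by
    have := IsCyclotomicExtension.Rat.isTotallyComplex K (n := p) (by omega)
    exact IsTotallyComplex.complexEmbedding_not_isReal φ
  have hup := sq_le_pow_finrank_mul_abs_norm
    (fun ψ ↦ h.one_le_two_mul_norm_map hζ hg ψ (by omega)) hreal
  rw [finrank_cyclotomicField_eq p, ← Int.cast_abs, h.abs_norm_eq_of_associated (by omega) hgu,
    Int.cast_abs] at hup
  have hX := three_pow_sub_one_le_abs hp3 hpq hx hpx
  refine (two_pow_mul_lt_sq hp3 (hq.five_le_of_ne_two_of_ne_three (by omega)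
    (by omega)) hX (c := 2 * ‖φ g‖) (by linarith)).not_ge ?_
  exact hup.trans (by gcongr; exact h.abs_le_abs_add_one hζ hpq)

end IsCasselsElement

/-! ### The Wieferich condition -/

section Frobenius

variable {p : ℕ} [Fact p.Prime] {K : Type*} [Field K] [NumberField K]

lemma natCast_dvd_of_natCast_dvd_intCast {q : ℕ} (hq : q.Prime) {n : ℤ}
    (h : (q : 𝓞 K) ∣ (n : 𝓞 K)) : (q : ℤ) ∣ n := by
  have hnorm : Algebra.norm ℤ (algebraMap ℤ (𝓞 K) q) ∣ Algebra.norm ℤ (algebraMap ℤ (𝓞 K) n) :=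
    map_dvd _ (by simpa using h)
  rw [Algebra.norm_algebraMap, Algebra.norm_algebraMap] at hnorm
  exact (Nat.prime_iff_prime_int.1 hq).dvd_of_dvd_pow
    ((dvd_pow_self _ Module.finrank_pos.ne').trans hnorm)

variable [IsCyclotomicExtension {p} ℚ K]

local notation "σ" => cyclotomicAut p K

variable {ζ : 𝓞 K} (hζ : IsPrimitiveRoot ζ p) {q : ℕ} (hq : q.Prime) (hqp : q.Coprime p)
include hζ hq

lemma natCast_dvd_pow_sub_cyclotomicAut_smul (z : 𝓞 K) :
    (q : 𝓞 K) ∣ z ^ q - σ (ZMod.unitOfCoprime q hqp) • z := by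
  have : Fact q.Prime := ⟨hq⟩
  have hunit : ¬ IsUnit (q : 𝓞 K) := fun h ↦ (Nat.prime_iff_prime_int.1 hq).not_isUnit <|
    isUnit_iff_dvd_one.2 <| natCast_dvd_of_natCast_dvd_intCast (K := K) hq (by simpa using h.dvd)
  have : CharP (𝓞 K ⧸ Ideal.span {(q : 𝓞 K)}) q := CharP.quotient (𝓞 K) q hunit
  let m := Ideal.Quotient.mk (Ideal.span {(q : 𝓞 K)})
  let f := ((frobenius _ q).comp m).toIntAlgHom
  let g := (m.comp (MulSemiringAction.toRingHom _ (𝓞 K)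
    (σ (ZMod.unitOfCoprime q hqp)))).toIntAlgHom
  have hζK : IsPrimitiveRoot (ζ : K) p := hζ.map_of_injective RingOfIntegers.coe_injective
  have hfg : f = g := by
    apply hζK.integralPowerBasis.algHom_ext
    rw [hζK.integralPowerBasis_gen]
    change m ζ ^ q = m (σ (ZMod.unitOfCoprime q hqp) • ζ)
    rw [cyclotomicAut_smul_of_pow_eq_one p _ hζ.pow_eq_one, ZMod.coe_unitOfCoprime, ← map_pow,
      ZMod.val_natCast, hζ.eq_orderOf, pow_mod_orderOf]
  rw [← Ideal.mem_span_singleton, ← Ideal.Quotient.eq, map_pow]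
  exact DFunLike.congr_fun hfg z

lemma sq_dvd_pow_sub_pow_of_dvd {a b : 𝓞 K} (hqp : q.Coprime p) (h : (q : 𝓞 K) ∣ a ^ q - b ^ q) :
    (q : 𝓞 K) ^ 2 ∣ a ^ q - b ^ q := by
  have hfrob := natCast_dvd_pow_sub_cyclotomicAut_smul hζ hq hqp
  have hσ : (q : 𝓞 K) ∣ σ (ZMod.unitOfCoprime q hqp) • (a - b) := by
    rw [smul_sub]
    convert dvd_add (dvd_sub h (hfrob a)) (hfrob b) using 1
    ring
  have hab := galois_smul_dvd_smul (σ (ZMod.unitOfCoprime q hqp)⁻¹) hσ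
  rw [cyclotomicAut_inv, inv_smul_smul, ← Int.cast_natCast, galois_smul_intCast,
    Int.cast_natCast] at hab
  simpa using dvd_sub_pow_of_dvd_sub hab 1

end Frobenius

section Trace

variable {p : ℕ} [Fact p.Prime] {K : Type*} [Field K] [NumberField K]
  [IsCyclotomicExtension {p} ℚ K]

local notation "σ" => cyclotomicAut p K

lemma sum_cyclotomicAut_smul_of_pow_eq_one [DecidableEq (𝓞 K)] {z : 𝓞 K} (hz : z ^ p = 1) :
    ∑ b : (ZMod p)ˣ, σ b • z = (if z = 1 then (p : 𝓞 K) else 0) - 1 := by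
  classical
  have hχ : AddChar.zmodChar p hz = 0 ↔ z = 1 := by
    refine ⟨fun h ↦ ?_, fun h ↦ DFunLike.ext _ _ fun a ↦ by simp [AddChar.zmodChar_apply, h]⟩
    simpa using (AddChar.zmodChar_apply' hz 1).symm.trans (DFunLike.congr_fun h _)
  have hsum := AddChar.sum_eq_ite (AddChar.zmodChar p hz)
  rw [Fintype.sum_eq_add_sum_subtype_ne _ 0, ← unitsEquivNeZero.sum_comp, AddChar.map_zero_eq_one,
    ZMod.card] at hsum
  simp only [hχ] at hsum
  rw [← hsum, add_sub_cancel_left]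
  exact Finset.sum_congr rfl fun b _ ↦ cyclotomicAut_smul_of_pow_eq_one p b hz

variable {ζ : 𝓞 K} (hζ : IsPrimitiveRoot ζ p)
include hζ

lemma sum_cyclotomicAut_smul_mul_smul_neg (a b : (ZMod p)ˣ) :
    ∑ c : (ZMod p)ˣ, σ c • (σ a • ζ * σ (-b) • ζ) = (if a = b then (p : 𝓞 K) else 0) - 1 := by
  classical
  have hinv : σ b • ζ * σ (-b) • ζ = 1 := by
    rw [← neg_one_mul, ← cyclotomicAut_smul_smul]
    apply cyclotomicAut_neg_one_smul_of_pow_eq_one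
    rw [← smul_pow', hζ.pow_eq_one, smul_one]
  rw [sum_cyclotomicAut_smul_of_pow_eq_one (by simp [mul_pow, ← smul_pow', hζ.pow_eq_one])]
  congr 2
  rw [eq_iff_iff, ← hinv, mul_left_inj' (right_ne_zero_of_mul_eq_one hinv),
    cyclotomicAut_smul_of_pow_eq_one p _ hζ.pow_eq_one,
    cyclotomicAut_smul_of_pow_eq_one p _ hζ.pow_eq_one]
  exact ⟨fun h ↦ Units.ext (ZMod.val_injective p
    (hζ.pow_inj (ZMod.val_lt _) (ZMod.val_lt _) h)), fun h ↦ h ▸ rfl⟩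

lemma sum_cyclotomicAut_smul_halfSystem {k : ℕ} (hk : (k : ZMod p) ≠ 0)
    (hk' : (k : ZMod p) + 1 ≠ 0) {s : (ZMod p)ˣ} (hs : s ∈ halfSystem p k) :
    ∑ c : (ZMod p)ˣ, σ c • ((∑ t ∈ halfSystem p k, σ t⁻¹ • ζ -
      ∑ t ∈ halfSystem p k, σ (-t⁻¹) • ζ) * σ (-s⁻¹) • ζ) = p := by
  have hneg : ∀ t ∈ halfSystem p k, -t⁻¹ ≠ s⁻¹ := by
    rintro t ht hts
    rw [← inv_neg, inv_inj] at hts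
    exact (neg_mem_halfSystem_iff hk hk' t).1 (hts ▸ hs) ht
  simp_rw [sub_mul, Finset.sum_mul, smul_sub, Finset.smul_sum]
  rw [Finset.sum_sub_distrib, Finset.sum_comm, Finset.sum_comm (t := halfSystem p k)]
  simp_rw [sum_cyclotomicAut_smul_mul_smul_neg hζ]
  rw [← Finset.sum_sub_distrib]
  rw [Finset.sum_congr rfl fun t ht ↦ by rw [if_neg (hneg t ht)]]
  simp [hs]

lemma natCast_dvd_of_dvd_mul_sum_halfSystem {q : ℕ} (hq : q.Prime) (hqp : q ≠ p) {k : ℕ}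
    (hk : (k : ZMod p) ≠ 0) (hk' : (k : ZMod p) + 1 ≠ 0) (hp : 2 < p) {x : ℤ}
    (h : (q : 𝓞 K) ∣ x * (∑ t ∈ halfSystem p k, σ t⁻¹ • ζ -
      ∑ t ∈ halfSystem p k, σ (-t⁻¹) • ζ)) : (q : ℤ) ∣ x := by
  obtain ⟨s, hs⟩ : (halfSystem p k).Nonempty := by
    have := two_mul_card_halfSystem hk hk'
    rw [← Finset.card_pos]
    omega
  have htrace : (q : 𝓞 K) ∣ ((x * p : ℤ) : 𝓞 K) := by
    rw [Int.cast_mul, Int.cast_natCast, ← sum_cyclotomicAut_smul_halfSystem hζ hk hk' hs,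
      Finset.mul_sum]
    refine Finset.dvd_sum fun c _ ↦ ?_
    have := galois_smul_dvd_smul (σ c) (h.mul_right (σ (-s⁻¹) • ζ))
    rwa [← Int.cast_natCast, galois_smul_intCast, Int.cast_natCast, mul_assoc, smul_mul',
      galois_smul_intCast] at this
  refine ((Nat.prime_iff_prime_int.1 hq).dvd_or_dvd
    (natCast_dvd_of_natCast_dvd_intCast hq htrace)).resolve_right fun hd ↦ hqp ?_
  exact (Nat.prime_dvd_prime_iff_eq hq Fact.out).1 (mod_cast hd)

end Trace

section Products

variable {ι R : Type*} [CommRing R] {s : Finset ι} {f g : ι → R} {n x a c : R}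

variable (s f x) in
lemma sq_dvd_prod_one_sub_mul_sub :
    x ^ 2 ∣ ∏ i ∈ s, (1 - x * f i) - (1 - x * ∑ i ∈ s, f i) := by
  induction s using Finset.cons_induction with
  | empty => simp
  | cons i s hi ih =>
    rw [Finset.prod_cons, Finset.sum_cons]
    obtain ⟨d, hd⟩ := ih
    exact ⟨(1 - x * f i) * d + f i * ∑ i ∈ s, f i, by linear_combination (1 - x * f i) * hd⟩

lemma dvd_sub_of_mul_prod_one_sub_eq (hx : n ∣ x)
    (h : a * ∏ i ∈ s, (1 - x * f i) = c * ∏ i ∈ s, (1 - x * g i)) : n ∣ a - c := by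
  obtain ⟨d, hd⟩ := sq_dvd_prod_one_sub_mul_sub s f x
  obtain ⟨e, he⟩ := sq_dvd_prod_one_sub_mul_sub s g x
  refine hx.trans ⟨a * (∑ i ∈ s, f i - x * d) - c * (∑ i ∈ s, g i - x * e), ?_⟩
  linear_combination h - a * hd + c * he

lemma sq_dvd_mul_sum_sub_sum_of_mul_prod_one_sub_eq (hx : n ∣ x) (hac : n ^ 2 ∣ a - c)
    (h : a * ∏ i ∈ s, (1 - x * f i) = c * ∏ i ∈ s, (1 - x * g i)) :
    n ^ 2 ∣ c * (x * (∑ i ∈ s, f i - ∑ i ∈ s, g i)) := by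
  obtain ⟨d, hd⟩ := sq_dvd_prod_one_sub_mul_sub s f x
  obtain ⟨e, he⟩ := sq_dvd_prod_one_sub_mul_sub s g x
  obtain ⟨r, hr⟩ := hac
  obtain ⟨y, rfl⟩ := hx
  refine ⟨r * ∏ i ∈ s, (1 - n * y * f i) + c * y ^ 2 * (d - e), ?_⟩
  linear_combination -h + (∏ i ∈ s, (1 - n * y * f i)) * hr + c * hd - c * he

end Products

section Wieferich

variable {p : ℕ} [Fact p.Prime] {K : Type*} [Field K] [NumberField K]
  [IsCyclotomicExtension {p} ℚ K] {ζ u : 𝓞 K} {x b : ℤ} {q k : ℕ}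

local notation "σ" => cyclotomicAut p K

namespace IsCasselsElement

variable (h : IsCasselsElement ζ u x b q) (hζ : IsPrimitiveRoot ζ p)
include h hζ

lemma mul_one_sub_mul_eq :
    u * (1 - x * ζ) = -ζ * σ (-1) • (u * (1 - x * ζ)) := by
  have hinv := cyclotomicAut_neg_one_smul_of_pow_eq_one p hζ.pow_eq_one
  have hu := h.mul_one_sub_zeta
  have hu' := h.smul_mul_one_sub_smul (p := p)
  refine mul_right_cancel₀ (prime_one_sub hζ).ne_zero ?_
  rw [smul_mul', smul_sub, smul_one, smul_mul', galois_smul_intCast]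
  linear_combination (1 - x * ζ) * hu + (x - ζ) * ζ * hu' -
    ((x - ζ) * (1 - σ (-1) • u) + σ (-1) • u * (1 - ζ) * x) * hinv

lemma exists_pow_mul_prod_one_sub_eq (hq : q.Coprime (Units.torsionOrder K))
    (hk : (k : ZMod p) ≠ 0) (hk' : (k : ZMod p) + 1 ≠ 0) :
    ∃ J W : 𝓞 K, W ^ q ∣ (b : 𝓞 K) ^ q ∧ J ^ q * ∏ t ∈ halfSystem p k, (1 - x * σ t⁻¹ • ζ) =
      W ^ q * ∏ t ∈ halfSystem p k, (1 - x * σ (-t⁻¹) • ζ) := by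
  obtain ⟨J, hJ⟩ := h.exists_prod_smul_eq_pow hζ hq hk hk'
  obtain ⟨η, hη⟩ := exists_pow_eq_neg hζ hq
  refine ⟨J, (∏ t ∈ halfSystem p k, σ t⁻¹ • η) * σ (-1) • J, ?_, ?_⟩
  · have hunit : IsUnit ((∏ t ∈ halfSystem p k, σ t⁻¹ • η) ^ q) := by
      rw [← Finset.prod_pow]
      refine IsUnit.prod_iff.2 fun t _ ↦ ?_
      rw [← smul_pow', hη, smul_neg, IsUnit.neg_iff]
      exact (hζ.isUnit (NeZero.ne p)).map (MulSemiringAction.toRingHom _ _ (σ t⁻¹))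
    rw [mul_pow, hunit.mul_left_dvd, ← smul_pow', ← hJ, ← Int.cast_pow, ← h.norm_eq,
      ← prod_halfSystem_smul_mul_smul hk hk']
    exact dvd_mul_left _ _
  · rw [mul_pow, ← smul_pow', ← hJ, Finset.smul_prod', ← Finset.prod_pow, mul_assoc,
      ← Finset.prod_mul_distrib, ← Finset.prod_mul_distrib, ← Finset.prod_mul_distrib]
    refine Finset.prod_congr rfl fun t _ ↦ ?_
    have := congrArg (σ t⁻¹ • ·) (h.mul_one_sub_mul_eq hζ)
    rw [← smul_pow', hη]
    simpa [smul_mul', smul_sub, cyclotomicAut_smul_smul, galois_smul_intCast] using this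

theorem sq_dvd_of_dvd (hp : 2 < p) (hq : q.Prime) (hqp : q ≠ p)
    (hqK : q.Coprime (Units.torsionOrder K)) (hk : (k : ZMod p) ≠ 0) (hk' : (k : ZMod p) + 1 ≠ 0)
    (hqb : IsCoprime (q : ℤ) b) (hqx : (q : ℤ) ∣ x) : (q : ℤ) ^ 2 ∣ x := by
  obtain ⟨J, W, hW, hJW⟩ := h.exists_pow_mul_prod_one_sub_eq hζ hqK hk hk'
  have hqx' : (q : 𝓞 K) ∣ x := by simpa using map_dvd (Int.castRingHom (𝓞 K)) hqx
  have hcop : IsCoprime (q : 𝓞 K) (W ^ q) := by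
    have := (hqb.map (Int.castRingHom (𝓞 K))).pow_right (n := q)
    exact .of_isCoprime_of_dvd_right (by simpa using this) hW
  have hdvd := sq_dvd_mul_sum_sub_sum_of_mul_prod_one_sub_eq hqx'
    (sq_dvd_pow_sub_pow_of_dvd hζ hq ((Nat.coprime_primes hq Fact.out).2 hqp)
      (dvd_sub_of_mul_prod_one_sub_eq hqx' hJW)) hJW
  have hdvd' := hcop.pow_left.dvd_of_dvd_mul_left hdvd
  obtain ⟨y, rfl⟩ := hqx
  rw [pow_two]
  refine mul_dvd_mul_left _ (natCast_dvd_of_dvd_mul_sum_halfSystem hζ hq hqp hk hk' hp ?_)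
  refine (mul_dvd_mul_iff_left (Nat.cast_ne_zero.2 hq.ne_zero : (q : 𝓞 K) ≠ 0)).1 ?_
  simpa [pow_two, mul_assoc] using hdvd'

end IsCasselsElement

end Wieferich

/-! ### Small exponents -/

lemma natCast_zmod_ne_zero_of_lt {n p : ℕ} (hn : n ≠ 0) (hnp : n < p) : (n : ZMod p) ≠ 0 := by
  rw [Ne, ZMod.natCast_eq_zero_iff]
  exact Nat.not_dvd_of_pos_of_lt (Nat.pos_of_ne_zero hn) hnp

section Criteria

instance isCyclotomicExtension_cyclotomicField {p : ℕ} [Fact p.Prime] :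
    IsCyclotomicExtension {p} ℚ (CyclotomicField p ℚ) :=
  have : NeZero (p : ℚ) := NeZero.charZero
  CyclotomicField.isCyclotomicExtension p ℚ

variable {p q : ℕ} (hp : p.Prime) (hq : q.Prime) (hpo : Odd p) (hqo : Odd q) (hpq : p < q)
  {x y : ℤ} (hx : x ≠ 0) (hy : y ≠ 0) (h : x ^ p - y ^ q = 1)
include hp hq hpo hqo hpq hx hy h

lemma exists_isCasselsElement_cyclotomicField :
    ∃ (ζ u : 𝓞 (CyclotomicField p ℚ)) (a b : ℤ), IsPrimitiveRoot ζ p ∧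
      IsCasselsElement ζ u x b q ∧ x - 1 = p ^ (q - 1) * a ^ q ∧
      ∑ i ∈ Finset.range p, x ^ i = p * b ^ q := by
  have : Fact p.Prime := ⟨hp⟩
  have hζ := (IsCyclotomicExtension.zeta_spec p ℚ (CyclotomicField p ℚ)).toInteger_isPrimitiveRoot
  obtain ⟨a, b, ha, hb⟩ := exists_sub_one_eq_and_geom_sum_eq hp hpo hqo hpq hx hy h
  obtain ⟨u, hu⟩ := exists_isCasselsElement hζ (two_lt_of_prime_of_odd hp hpo)
    ((dvd_pow_self _ (Nat.sub_ne_zero_of_lt hq.one_lt)).trans ⟨_, ha⟩) hb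
  exact ⟨_, u, a, b, hζ, hu, ha, hb⟩

theorem false_of_isCertificate [NeZero p] {k m : ℕ} {F : ZMod p → ℤ} (hF : IsCertificate p k m F)
    (hk : k ≠ 0) (hkp : k + 1 < p) (hm : m.Coprime q) : False := by
  have : Fact p.Prime := ⟨hp⟩
  have : Fact (2 < p) := ⟨two_lt_of_prime_of_odd hp hpo⟩
  obtain ⟨ζ, u, a, b, hζ, hu, ha, -⟩ :=
    exists_isCasselsElement_cyclotomicField hp hq hpo hqo hpq hx hy h
  refine hu.not_exists_pow_mul_eq hζ hpo hpq hq (left_ne_one_of_pow_sub_pow_eq_one hy h)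
    ⟨_, ha⟩ (hu.exists_pow_mul_eq hζ (coprime_torsionOrder hpo hq hqo hpq.ne)
      (natCast_zmod_ne_zero_of_lt hk (by lia)) ?_ (fun h1 ↦ ?_) hF hm)
  · exact_mod_cast natCast_zmod_ne_zero_of_lt k.succ_ne_zero hkp
  · exact ZMod.neg_one_ne_one (congrArg Units.val h1)

theorem sq_dvd_pow_sub_one : (q : ℤ) ^ 2 ∣ (p : ℤ) ^ (q - 1) - 1 := by
  have : Fact p.Prime := ⟨hp⟩
  have : Fact q.Prime := ⟨hq⟩
  have hp2 := two_lt_of_prime_of_odd hp hpo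
  have hqx : (q : ℤ) ∣ x := dvd_left_of_pow_sub_pow_eq_one hp hpo hq hqo hpq hx hy h
  obtain ⟨ζ, u, a, b, hζ, hu, ha, hb⟩ :=
    exists_isCasselsElement_cyclotomicField hp hq hpo hqo hpq hx hy h
  have hqb : IsCoprime (q : ℤ) b := by
    have hx1 : IsCoprime x (∑ i ∈ Finset.range p, x ^ i) :=
      ⟨-∑ i ∈ Finset.range (p - 1), x ^ i, 1, by
        have h1 := geom_sum_succ (x := x) (n := p - 1)
        rw [Nat.sub_add_cancel hp.one_le] at h1
        linear_combination h1⟩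
    rw [hb] at hx1
    exact (IsCoprime.pow_right_iff hq.pos).1
      (hx1.of_mul_right_right.of_isCoprime_of_dvd_left hqx)
  have hqx2 : (q : ℤ) ^ 2 ∣ x :=
    hu.sq_dvd_of_dvd hζ hp2 hq hpq.ne' (coprime_torsionOrder hpo hq hqo hpq.ne) (k := 1)
      (natCast_zmod_ne_zero_of_lt one_ne_zero (by lia))
      (by exact_mod_cast natCast_zmod_ne_zero_of_lt two_ne_zero hp2) hqb hqx
  have hqa : (q : ℤ) ∣ a - (-1) := by
    rw [← ZMod.intCast_zmod_eq_zero_iff_dvd] at hqx ⊢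
    have hq1 := congrArg (Int.cast : ℤ → ZMod q) ha
    push_cast [ZMod.pow_card, hqx] at hq1 ⊢
    rw [ZMod.pow_card_sub_one_eq_one (natCast_zmod_ne_zero_of_lt hp.ne_zero hpq)] at hq1
    linear_combination -hq1
  obtain ⟨c, hc⟩ : (q : ℤ) ^ 2 ∣ a ^ q + 1 := by
    simpa [hqo.neg_one_pow] using dvd_sub_pow_of_dvd_sub hqa 1
  obtain ⟨d, hd⟩ := hqx2
  exact ⟨p ^ (q - 1) * c - d, by linear_combination (p : ℤ) ^ (q - 1) * hc - hd + ha⟩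

end Criteria

section Certificates

/-- The odd function on `ZMod p` whose value at the residue `n ≤ p / 2` is the `n`-th entry of `l`:
the form in which the coefficients of the certificates are recorded. -/
def oddExtension (p : ℕ) (l : List ℤ) (a : ZMod p) : ℤ :=
  a.valMinAbs.sign * l.getD a.valMinAbs.natAbs 0

/- The coefficients solve the linear system for `F * θ = m * (1 - [-1])` in the minus part of the
group ring, which is nonsingular for a suitable `k`. -/
lemma isCertificate_three : IsCertificate 3 1 1 (oddExtension 3 [0, 1]) := by
  decide +kernel

lemma isCertificate_five : IsCertificate 5 1 2 (oddExtension 5 [0, 1, 1]) := by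
  decide +kernel

lemma isCertificate_seven : IsCertificate 7 1 2 (oddExtension 7 [0, 1, 1, 0]) := by
  decide +kernel

lemma isCertificate_eleven : IsCertificate 11 2 2 (oddExtension 11 [0, 0, 1, 0, -1, 0]) := by
  decide +kernel

lemma isCertificate_thirteen : IsCertificate 13 2 2 (oddExtension 13 [0, 0, 0, 1, 0, 0, -1]) := by
  decide +kernel

lemma isCertificate_seventeen :
    IsCertificate 17 2 2 (oddExtension 17 [0, -1, 1, 1, 0, 1, 0, 1, -1]) := by
  decide +kernel

lemma isCertificate_nineteen :
    IsCertificate 19 2 2 (oddExtension 19 [0, 0, 0, 0, 1, 0, 0, 0, -1, 0]) := by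
  decide +kernel

lemma isCertificate_twenty_three :
    IsCertificate 23 2 6 (oddExtension 23 [0, 1, 1, 1, 1, 2, 1, -1, -2, 1, -1, 2]) := by
  decide +kernel

lemma isCertificate_twenty_nine :
    IsCertificate 29 2 4 (oddExtension 29 [0, -1, 1, 0, 0, 0, 1, 1, 0, 1, 0, 1, -1, 0,
      -1]) := by
  decide +kernel

lemma isCertificate_thirty_one :
    IsCertificate 31 2 54 (oddExtension 31 [0, 1, 1, -10, 1, 1, 17, 10, 1, 1, 1, -1, -10, -1,
      -17, -1]) := by
  decide +kernel

lemma isCertificate_thirty_seven :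
    IsCertificate 37 3 74 (oddExtension 37 [0, -3, 1, 3, 7, 17, 2, 10, -5, 10, -2, -5, 2, 9, -3,
      3, 25, 4, -11]) := by
  decide +kernel

lemma isCertificate_forty_one :
    IsCertificate 41 2 66 (oddExtension 41 [0, 11, -2, 21, -11, -16, -14, -15, 29, 8, 11, -6, 9,
      -3, 10, -13, -22, -5, -22, 7, 1]) := by
  decide +kernel

lemma isCertificate_forty_three :
    IsCertificate 43 3 844 (oddExtension 43 [0, -29, 106, 90, 20, 27, 13, 195, 167, 19, 25, 137,
      98, -17, -218, -142, 139, 47, -84, 300, -55, 6]) := by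
  decide +kernel

lemma exists_isCertificate {p : ℕ} [NeZero p] (hp : p.Prime) (hpo : Odd p) (hp43 : p ≤ 43) :
    ∃ (k m : ℕ) (F : ZMod p → ℤ),
      (k ≠ 0 ∧ k + 1 < p ∧ m ∣ 211 * Nat.factorial p) ∧ IsCertificate p k m F := by
  have hmem : p ∈ [3, 5, 7, 11, 13, 17, 19, 23, 29, 31, 37, 41, 43] := by
    have h : ∀ r ≤ 43, r.Prime → Odd r → r ∈ [3, 5, 7, 11, 13, 17, 19, 23, 29, 31, 37, 41, 43] := by
      decide
    exact h p hp43 hp hpo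
  simp only [List.mem_cons, List.not_mem_nil, or_false] at hmem
  rcases hmem with rfl | rfl | rfl | rfl | rfl | rfl | rfl | rfl | rfl | rfl | rfl | rfl | rfl
  · exact ⟨1, 1, _, by decide +kernel, isCertificate_three⟩
  · exact ⟨1, 2, _, by decide +kernel, isCertificate_five⟩
  · exact ⟨1, 2, _, by decide +kernel, isCertificate_seven⟩
  · exact ⟨2, 2, _, by decide +kernel, isCertificate_eleven⟩
  · exact ⟨2, 2, _, by decide +kernel, isCertificate_thirteen⟩
  · exact ⟨2, 2, _, by decide +kernel, isCertificate_seventeen⟩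
  · exact ⟨2, 2, _, by decide +kernel, isCertificate_nineteen⟩
  · exact ⟨2, 6, _, by decide +kernel, isCertificate_twenty_three⟩
  · exact ⟨2, 4, _, by decide +kernel, isCertificate_twenty_nine⟩
  · exact ⟨2, 54, _, by decide +kernel, isCertificate_thirty_one⟩
  · exact ⟨3, 74, _, by decide +kernel, isCertificate_thirty_seven⟩
  · exact ⟨2, 66, _, by decide +kernel, isCertificate_forty_one⟩
  · exact ⟨3, 844, _, by decide +kernel, isCertificate_forty_three⟩

lemma not_sq_dvd_pow_sub_one {p : ℕ} (hp : 1 < p) (hp43 : p ≤ 43) :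
    ¬ (211 : ℤ) ^ 2 ∣ (p : ℤ) ^ 210 - 1 := by
  interval_cases p <;> decide +kernel

theorem false_of_le_of_lt {p q : ℕ} (hp : p.Prime) (hq : q.Prime) (hpo : Odd p) (hqo : Odd q)
    (hp43 : p ≤ 43) (hpq : p < q) {x y : ℤ} (hx : x ≠ 0) (hy : y ≠ 0) (h : x ^ p - y ^ q = 1) :
    False := by
  have : NeZero p := ⟨hp.ne_zero⟩
  obtain ⟨k, m, F, ⟨hk, hkp, hm⟩, hF⟩ := exists_isCertificate hp hpo hp43
  rcases eq_or_ne q 211 with rfl | hq211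
  · exact not_sq_dvd_pow_sub_one hp.one_lt hp43
      (sq_dvd_pow_sub_one hp hq hpo hqo hpq hx hy h)
  · have hq' : (211 * p.factorial).Coprime q :=
      ((Nat.coprime_primes (by norm_num) hq).2 hq211.symm).mul_left
        (hq.coprime_factorial_of_lt hpq).symm
    exact false_of_isCertificate hp hq hpo hqo hpq hx hy h hF hk hkp (hq'.of_dvd_left hm)

end Certificates

end Mihailescu

/-- Mihăilescu's second theorem: if `p, q` are distinct odd primes with `p ≤ 43` or
`q ≤ 43`, then there are no nonzero integers `x, y` with `x ^ p - y ^ q = 1`. -/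
theorem mihailescu_second (p q : ℕ) (hp : p.Prime) (hq : q.Prime)
    (hpodd : Odd p) (hqodd : Odd q) (hpq : p ≠ q) (hsmall : p ≤ 43 ∨ q ≤ 43) :
    ¬ ∃ x y : ℤ, x ≠ 0 ∧ y ≠ 0 ∧ x ^ p - y ^ q = 1 := by
  rintro ⟨x, y, hx, hy, h⟩
  rcases hpq.lt_or_gt with hlt | hlt
  · exact Mihailescu.false_of_le_of_lt hp hq hpodd hqodd (by lia) hlt hx hy h
  · have h' : (-y) ^ q - (-x) ^ p = 1 := by
      rw [hpodd.neg_pow, hqodd.neg_pow]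
      linear_combination h
    exact Mihailescu.false_of_le_of_lt hq hp hqodd hpodd (by lia) hlt (neg_ne_zero.2 hy)
      (neg_ne_zero.2 hx) h'
end
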